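/- arXiv:2103.03298 — 3 statements merged into one kernel-verified Lean document; each statement's English description precedes it below -/
import Mathlib

section
/- There are no rational numbers x, y satisfying y^2 = 84x^5 + 21, and there are no rational numbers x, y satisfying y^2 = 28x^5 + 15309 (note 15309 = 3^7 · 7). -/
/-!
After scaling, a point on either curve gives `21 * t ^ 2 = 4 * x ^ 5 + c ^ 2` with `c = 1` or
`c = 3`. Factoring over `ℚ(√21)`, whose ring of integers `ℤ[ε]`, `ε = (5 + √21) / 2`, is a unique
factorization domain with units `± ε ^ n`, turns this into `tr (ε⁻ⁱ * β ^ 5) = c * w ^ 5` with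
`i ≤ 2` and `β = p + q * ε` for coprime integers `p`, `q`.

If `i` is `1` or `2`, let `θ ^ 5 = ε`. The trace is the norm of `θ⁻ⁱ * β + θⁱ * star β`, an element
of the quintic field generated by `τ = θ + θ⁻¹`, which has class number one and in which `τ` is a
totally ramified prime above `5`. Up to rational factors and fifth powers, this element is a unit
times a power of `τ - 2`. Fifth powers are congruent to integers modulo `5`, hence are invisible to
the logarithmic derivative with respect to `τ` modulo `5` and `τ ^ 4`; comparing logarithmic
derivatives forces `5` to divide both `p` and `q`.

If `i = 0`, the trace is `tr β` times a norm from `ℤ[φ]`, where `φ` is the golden ratio. When `5`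
divides `tr β`, the second factor starts an infinite descent through fifth powers in `ℤ[φ]`.
Otherwise congruences modulo `25` give `5 ∣ N β` and `c = 1`; the second factor is then the norm of
an integer multiple of a fifth power in `ℤ[φ]`, and congruences modulo `11` force `11` to divide
both `tr β` and `N β`.
-/

open NumberField QuadraticAlgebra

section Multiplicity

variable {R : Type*} [CommMonoidWithZero R] [UniqueFactorizationMonoid R]

theorem dvd_of_pow_dvd_mul_pow {c g r : R} {n : ℕ} (hc : Squarefree c) (hn : 2 ≤ n)
    (h : g ^ n ∣ c * r ^ n) (hr : r ≠ 0) : g ∣ r := by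
  obtain ⟨g', r', d, hrel, rfl, rfl⟩ := UniqueFactorizationMonoid.exists_reduced_factors' g r hr
  have hd : d ^ n ≠ 0 := pow_ne_zero _ (left_ne_zero_of_mul hr)
  have hdvd : g' ^ n ∣ c * r' ^ n := by
    rw [mul_pow, mul_pow, mul_left_comm] at h
    exact (mul_dvd_mul_iff_left hd).1 h
  have hsq : g' * g' ∣ c :=
    (pow_two g' ▸ pow_dvd_pow g' hn).trans (hrel.pow.dvd_of_dvd_mul_right hdvd)
  exact mul_dvd_mul_left d (hc g' hsq).dvd

theorem dvd_multiplicity_of_mul_eq_mul_pow {P x y c w : R} {n : ℕ} (hP : Prime P)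
    (hxy : x * y ≠ 0) (hw : w ≠ 0) (h : x * y = c * w ^ n) (hc : ¬ P ∣ c)
    (hPxy : P ∣ x → ¬ P ∣ y) : n ∣ multiplicity P x := by
  by_cases hx : P ∣ x
  · have key : multiplicity P (x * y) = multiplicity P (c * w ^ n) := by rw [h]
    rw [multiplicity_mul hP (.of_prime_left hP hxy),
      multiplicity_mul hP (.of_prime_left hP (h ▸ hxy)),
      (FiniteMultiplicity.of_prime_left hP hw).multiplicity_pow hP,
      multiplicity_eq_zero.2 (hPxy hx), multiplicity_eq_zero.2 hc, add_zero, zero_add] at key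
    exact ⟨_, key⟩
  · rw [multiplicity_eq_zero.2 hx]
    exact dvd_zero n

theorem exists_unit_mul_prod_pow_mul_pow {ι : Type*} [Fintype ι] (g : ι → R) {n : ℕ} {x : R}
    (hx : x ≠ 0)
    (h : ∀ P, Prime P → (∀ i, ¬ Associated P (g i)) → n ∣ multiplicity P x) :
    ∃ (u : Rˣ) (e : ι → ℕ) (y : R), x = u * (∏ i, g i ^ e i) * y ^ n := by
  classical
  induction x using UniqueFactorizationMonoid.induction_on_coprime with
  | h0 => exact absurd rfl hx
  | h1 hu => exact ⟨hu.unit, 0, 1, by simp⟩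
  | @hpr P k hP =>
    by_cases hPg : ∃ i, Associated P (g i)
    · obtain ⟨i, hi⟩ := hPg
      obtain ⟨u, hu⟩ := hi.symm.pow_pow (n := k)
      refine ⟨u, Pi.single i k, 1, ?_⟩
      rw [Finset.prod_eq_single i (fun j _ hj ↦ by simp [hj]) (by simp), Pi.single_eq_same,
        one_pow, mul_one, mul_comm, hu]
    · obtain ⟨m, hm⟩ := h P hP (not_exists.1 hPg)
      rw [multiplicity_pow_self_of_prime hP] at hm
      exact ⟨1, 0, P ^ m, by simp [hm, ← pow_mul, mul_comm]⟩
  | @hcp a b hab iha ihb =>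
    have hmul (P) (hP : Prime P) :
        multiplicity P (a * b) = multiplicity P a + multiplicity P b :=
      multiplicity_mul hP (.of_prime_left hP hx)
    have hzero (P) (hP : Prime P) : multiplicity P a = 0 ∨ multiplicity P b = 0 := by
      simp only [multiplicity_eq_zero]
      by_contra! hdvd
      exact hP.not_isUnit (hab hdvd.1 hdvd.2)
    obtain ⟨u, e, y, rfl⟩ := iha (left_ne_zero_of_mul hx) fun P hP hPg ↦ by
      have hn := hmul P hP ▸ h P hP hPg
      rcases hzero P hP with h0 | h0 <;> simp_all
    obtain ⟨v, f, z, rfl⟩ := ihb (right_ne_zero_of_mul hx) fun P hP hPg ↦ by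
      have hn := hmul P hP ▸ h P hP hPg
      rcases hzero P hP with h0 | h0 <;> simp_all
    refine ⟨u * v, e + f, y * z, ?_⟩
    simp only [Units.val_mul, Pi.add_apply, pow_add, Finset.prod_mul_distrib, mul_pow]
    ac_rfl

end Multiplicity

theorem dvd_multiplicity_of_mul_eq_pow_mul_pow {R : Type*} [CommRing R] [IsDomain R]
    [UniqueFactorizationMonoid R] {P x y a b : R} {n : ℕ} (hn : Odd n) (hP : Prime P)
    (hxy : x * y = a ^ n * b ^ n) (hadd : b ^ n ∣ x + y) (h0 : x * y ≠ 0)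
    (ha : P ∣ x → P ∣ y → ¬ P ∣ a) : n ∣ multiplicity P x := by
  have hab : a * b ≠ 0 := by
    intro hab
    rw [hxy, ← mul_pow, hab, zero_pow hn.pos.ne'] at h0
    exact h0 rfl
  by_cases hPxy : P ∣ x ∧ P ∣ y
  · have fin {z : R} (hz : z ≠ 0) : FiniteMultiplicity P z := .of_prime_left hP hz
    have hx := left_ne_zero_of_mul h0
    have hy := right_ne_zero_of_mul h0
    have hb := right_ne_zero_of_mul hab
    have hsum : multiplicity P x + multiplicity P y = n * multiplicity P b := by
      rw [← multiplicity_mul hP (fin h0), hxy, multiplicity_mul hP (fin (hxy ▸ h0)),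
        (fin (left_ne_zero_of_mul hab)).multiplicity_pow hP, (fin hb).multiplicity_pow hP,
        multiplicity_eq_zero.2 (ha hPxy.1 hPxy.2), mul_zero, zero_add]
    have hpow : P ^ (n * multiplicity P b) ∣ x + y := by
      rw [mul_comm, pow_mul]
      exact (pow_dvd_pow_of_dvd (pow_multiplicity_dvd P b) n).trans hadd
    -- If the multiplicities differed, that of `x + y` would be the smaller one.
    have hle {z w : R} (hz : z ≠ 0) (h : P ^ (n * multiplicity P b) ∣ z + w)
        (hs : multiplicity P z + multiplicity P w = n * multiplicity P b) :
        multiplicity P w ≤ multiplicity P z := by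
      by_contra! hlt
      have : P ^ (multiplicity P z + 1) ∣ z := (dvd_add_left
        ((pow_dvd_pow P hlt).trans (pow_multiplicity_dvd P w))).1
        ((pow_dvd_pow P (by omega)).trans h)
      exact (fin hz).not_pow_dvd_of_multiplicity_lt (Nat.lt_succ_self _) this
    have heq := le_antisymm (hle hy (add_comm x y ▸ hpow) (by omega)) (hle hx hpow hsum)
    rw [← heq, ← two_mul] at hsum
    exact (Nat.coprime_two_right.2 hn).dvd_of_dvd_mul_left ⟨_, hsum⟩
  · exact dvd_multiplicity_of_mul_eq_mul_pow (c := 1) hP h0 hab (by rw [hxy, one_mul, mul_pow])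
      hP.not_dvd_one fun hx hy ↦ hPxy ⟨hx, hy⟩

section NumberField

variable {F : Type*} [Field F] [NumberField F]

theorem exists_pow_eq_of_mem_torsion {p : ℕ} (hp : p.Prime)
    (hF : ¬ p - 1 ∣ Module.finrank ℚ F) {x : (𝓞 F)ˣ} (hx : x ∈ Units.torsion F) :
    ∃ w : (𝓞 F)ˣ, w ^ p = x := by
  by_cases hpx : p ∣ orderOf x
  · obtain ⟨k, hk⟩ := hpx
    have hpos : 0 < orderOf x := IsOfFinOrder.orderOf_pos hx
    have hk0 : k ≠ 0 := by rintro rfl; omega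
    have hord : orderOf (x ^ k) = p := by
      rw [orderOf_pow_of_dvd hk0 ⟨p, by rw [hk, mul_comm]⟩, hk,
        Nat.mul_div_cancel _ (Nat.pos_of_ne_zero hk0)]
    have hprim : IsPrimitiveRoot (((x ^ k : (𝓞 F)ˣ) : 𝓞 F) : F) p :=
      (IsPrimitiveRoot.coe_units_iff.2 (hord ▸ IsPrimitiveRoot.orderOf _)).map_of_injective
        (f := algebraMap (𝓞 F) F) RingOfIntegers.coe_injective
    refine absurd ?_ hF
    rw [← Nat.totient_prime hp, ← Polynomial.natDegree_cyclotomic p ℚ,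
      Polynomial.cyclotomic_eq_minpoly_rat hprim hp.pos,
      ← IntermediateField.adjoin.finrank (IsIntegral.of_finite ℚ _)]
    exact ⟨_, (Module.finrank_mul_finrank ℚ _ F).symm⟩
  · obtain ⟨m, hm⟩ := exists_pow_eq_self_of_coprime ((hp.coprime_iff_not_dvd).2 hpx)
    exact ⟨x ^ m, by rw [← pow_mul, mul_comm, pow_mul, hm]⟩

theorem exists_units_addMonoidHom {p : ℕ} (hp : p.Prime) (hF : ¬ p - 1 ∣ Module.finrank ℚ F) :
    ∃ L : Additive (𝓞 F)ˣ →+ (Fin (Units.rank F) → ZMod p),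
      ∀ x : (𝓞 F)ˣ, L (.ofMul x) = 0 → ∃ w : (𝓞 F)ˣ, w ^ p = x := by
  let B := Units.basisUnitLattice F
  have hmem (x : Additive (𝓞 F)ˣ) : Units.logEmbedding F x ∈ Units.unitLattice F :=
    Submodule.mem_map_of_mem Submodule.mem_top
  let L : Additive (𝓞 F)ˣ →+ (Fin (Units.rank F) → ZMod p) :=
    ((Int.castAddHom (ZMod p)).compLeft _).comp
      (B.equivFun.toAddMonoidHom.comp ((Units.logEmbedding F).codRestrict _ hmem))
  refine ⟨L, fun x hx ↦ ?_⟩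
  have hdvd (i) : (p : ℤ) ∣ B.repr ⟨Units.logEmbedding F (.ofMul x), hmem _⟩ i :=
    (ZMod.intCast_zmod_eq_zero_iff_dvd _ p).1 (congrFun hx i)
  choose k hk using hdvd
  obtain ⟨y, -, hy⟩ := (∑ i, k i • B i).2
  have hxy : (⟨Units.logEmbedding F (.ofMul x), hmem _⟩ : Units.unitLattice F) =
      p • ∑ i, k i • B i := by
    rw [← B.sum_repr ⟨Units.logEmbedding F (.ofMul x), hmem _⟩, Finset.smul_sum]
    exact Finset.sum_congr rfl fun i _ ↦ by rw [hk, mul_smul, natCast_zsmul]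
  have htors : x / y.toMul ^ p ∈ Units.torsion F := by
    rw [← Units.dirichletUnitTheorem.logEmbedding_eq_zero_iff, ofMul_div, ofMul_pow, map_sub,
      map_nsmul, ofMul_toMul, sub_eq_zero]
    rw [Subtype.ext_iff, Submodule.coe_smul_of_tower, ← hy] at hxy
    exact hxy
  obtain ⟨z, hz⟩ := exists_pow_eq_of_mem_torsion hp hF htors
  exact ⟨y.toMul * z, by rw [mul_pow, hz, mul_div_cancel]⟩

theorem exists_prod_pow_mul_pow_eq {p : ℕ} (hp : p.Prime) (hF : ¬ p - 1 ∣ Module.finrank ℚ F)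
    {ι : Type*} [Fintype ι] (hι : Units.rank F ≤ Fintype.card ι) (v : ι → (𝓞 F)ˣ)
    (hv : ∀ (e : ι → ℕ) (w : (𝓞 F)ˣ), ∏ i, v i ^ e i = w ^ p → ∀ i, p ∣ e i) (u : (𝓞 F)ˣ) :
    ∃ (e : ι → ℕ) (w : (𝓞 F)ˣ), (∀ i, e i < p) ∧ (∏ i, v i ^ e i) * w ^ p = u := by
  have : Fact p.Prime := ⟨hp⟩
  obtain ⟨L, hL⟩ := exists_units_addMonoidHom hp hF
  have hprod (c : ι → ZMod p) :
      ∑ i, c i • L (.ofMul (v i)) = L (.ofMul (∏ i, v i ^ (c i).val)) := by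
    rw [ofMul_prod, map_sum]
    refine Finset.sum_congr rfl fun i _ ↦ ?_
    rw [ofMul_pow, map_nsmul, ← Nat.cast_smul_eq_nsmul (ZMod p), ZMod.natCast_zmod_val]
  have hli : LinearIndependent (ZMod p) fun i ↦ L (.ofMul (v i)) := by
    refine Fintype.linearIndependent_iff.2 fun c hc i ↦ ?_
    obtain ⟨w, hw⟩ := hL _ (hprod c ▸ hc)
    exact (ZMod.val_eq_zero _).1
      (Nat.eq_zero_of_dvd_of_lt (hv _ w hw.symm i) (ZMod.val_lt (c i)))
  have hspan : Submodule.span (ZMod p) (Set.range fun i ↦ L (.ofMul (v i))) = ⊤ := by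
    refine hli.span_eq_top_of_card_eq_finrank' (le_antisymm hli.fintype_card_le_finrank ?_)
    rwa [Module.finrank_fin_fun]
  obtain ⟨c, hc⟩ := (Submodule.mem_span_range_iff_exists_fun (ZMod p)).1
    (hspan ▸ Submodule.mem_top (x := L (.ofMul u)))
  obtain ⟨w, hw⟩ := hL (u / ∏ i, v i ^ (c i).val) (by
    rw [ofMul_div, map_sub, ← hprod, hc, sub_self])
  exact ⟨fun i ↦ (c i).val, w, fun i ↦ ZMod.val_lt _, by rw [hw, mul_div_cancel]⟩

end NumberField

theorem exists_natCast_sub_mem_of_prime_absNorm {R : Type*} [CommRing R] [IsDedekindDomain R]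
    [Module.Free ℤ R] {P : Ideal R} {p : ℕ} (hp : p.Prime) (hP : P.absNorm = p) (x : R) :
    ∃ r < p, x - (r : R) ∈ P := by
  have : Fact p.Prime := ⟨hp⟩
  have hcard : Nat.card (R ⧸ P) = p := by
    rw [← hP, Ideal.absNorm_apply, Submodule.cardQuot_apply]
  have : Finite (R ⧸ P) := Nat.finite_of_card_ne_zero (hcard ▸ hp.ne_zero)
  have : Nontrivial (R ⧸ P) := Finite.one_lt_card_iff_nontrivial.1 (hcard ▸ hp.one_lt)
  have hp0 : (p : R ⧸ P) = 0 := by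
    rw [← map_natCast (Ideal.Quotient.mk P), Ideal.Quotient.eq_zero_iff_mem, ← hP]
    exact Ideal.absNorm_mem P
  have : CharP (R ⧸ P) p := by
    rw [← ((Nat.dvd_prime hp).1 (ringChar.dvd hp0)).resolve_left CharP.ringChar_ne_one]
    infer_instance
  have hsurj : Function.Surjective (ZMod.castHom (dvd_refl p) (R ⧸ P)) :=
    ((Nat.bijective_iff_injective_and_card _).2
      ⟨RingHom.injective _, by rw [hcard, Nat.card_zmod]⟩).2
  obtain ⟨z, hz⟩ := hsurj (Ideal.Quotient.mk P x)
  refine ⟨z.val, ZMod.val_lt z, Ideal.Quotient.eq_zero_iff_mem.1 ?_⟩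
  rw [map_sub, map_natCast, ← hz, ← ZMod.natCast_zmod_val z, map_natCast,
    ZMod.natCast_zmod_val, sub_self]

theorem isPrincipal_of_prime_mem {R : Type*} [CommRing R] [Ring.DimensionLEOne R] [IsDomain R]
    {P : Ideal R} (hP : P.IsPrime) {g : R} (hg : Prime g) (hgP : g ∈ P) : P.IsPrincipal := by
  have hmax : (Ideal.span {g}).IsMaximal :=
    ((Ideal.span_singleton_prime hg.ne_zero).2 hg).isMaximal (by simpa using hg.ne_zero)
  exact ⟨g, (hmax.eq_of_le hP.ne_top ((Ideal.span_singleton_le_iff_mem P).2 hgP)).symm⟩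

theorem dvd_of_intCast_mem {R : Type*} [CommRing R] {P : Ideal R} (hP : P ≠ ⊤) {l n : ℤ}
    (hl : Prime l) (hlP : (l : R) ∈ P) (hnP : (n : R) ∈ P) : l ∣ n := by
  by_contra h
  obtain ⟨a, b, hab⟩ :=
    ((hl.coprime_iff_not_dvd).2 h).map (Int.castRingHom R)
  exact hP ((Ideal.eq_top_iff_one P).2
    (hab ▸ P.add_mem (P.mul_mem_left a hlP) (P.mul_mem_left b hnP)))

theorem pow_absNorm_sub_mem {R : Type*} [CommRing R] [IsDedekindDomain R] [Module.Free ℤ R]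
    [Module.Finite ℤ R] {P : Ideal R} [P.IsMaximal] (h0 : P ≠ ⊥) (x : R) :
    x ^ Ideal.absNorm P - x ∈ P := by
  have : Finite (R ⧸ P) := Ideal.finiteQuotientOfFreeOfNeBot P h0
  have := Fintype.ofFinite (R ⧸ P)
  let _ : Field (R ⧸ P) := Ideal.Quotient.field P
  have h := FiniteField.pow_card (Ideal.Quotient.mk P x)
  rw [← Nat.card_eq_fintype_card, ← Submodule.cardQuot_apply, ← Ideal.absNorm_apply] at h
  rw [← Ideal.Quotient.eq_zero_iff_mem, map_sub, map_pow, h, sub_self]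

/-! ### Quadratic orders -/

section QuadraticOrder

variable {a b : ℤ}

theorem norm_eq_zero_iff_of_not_isSquare (hD : ¬ IsSquare (b ^ 2 + 4 * a))
    {z : QuadraticAlgebra ℤ a b} : z.norm = 0 ↔ z = 0 := by
  refine ⟨fun hz ↦ ?_, fun hz ↦ hz ▸ QuadraticAlgebra.norm_zero⟩
  rw [QuadraticAlgebra.norm_def] at hz
  have hsq : (2 * z.re + b * z.im) ^ 2 = (b ^ 2 + 4 * a) * z.im ^ 2 := by
    linear_combination 4 * hz
  have him : z.im = 0 := by
    by_contra him
    obtain ⟨k, hk⟩ : z.im ∣ 2 * z.re + b * z.im :=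
      (Int.pow_dvd_pow_iff two_ne_zero).1 ⟨_, hsq.trans (mul_comm _ _)⟩
    rw [hk, mul_pow, mul_comm] at hsq
    exact hD ⟨k, by rw [← mul_right_cancel₀ (pow_ne_zero 2 him) hsq, sq]⟩
  refine QuadraticAlgebra.ext ?_ him
  simpa [him] using hsq

theorem isDomain_of_not_isSquare (hD : ¬ IsSquare (b ^ 2 + 4 * a)) :
    IsDomain (QuadraticAlgebra ℤ a b) :=
  @NoZeroDivisors.to_isDomain _ _ _ ⟨fun {z w} h ↦ by
    rw [← norm_eq_zero_iff_of_not_isSquare hD, map_mul, mul_eq_zero] at h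
    simpa only [norm_eq_zero_iff_of_not_isSquare hD] using h⟩

theorem exists_abs_norm_sub_mul_lt (hD : ¬ IsSquare (b ^ 2 + 4 * a))
    (h : ∀ x y : ℚ, ∃ m n : ℤ, |(⟨x - m, y - n⟩ : QuadraticAlgebra ℚ a b).norm| < 1)
    (z : QuadraticAlgebra ℤ a b) {w : QuadraticAlgebra ℤ a b} (hw : w ≠ 0) :
    ∃ q, |(z - w * q).norm| < |w.norm| := by
  have hN : w.norm ≠ 0 := (norm_eq_zero_iff_of_not_isSquare hD).not.2 hw
  obtain ⟨m, n, hmn⟩ := h ((z * star w).re / w.norm) ((z * star w).im / w.norm)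
  refine ⟨⟨m, n⟩, ?_⟩
  have hstar : (z - w * ⟨m, n⟩) * star w = z * star w - w.norm • ⟨m, n⟩ := by
    rw [Algebra.smul_def, QuadraticAlgebra.algebraMap_norm_eq_mul_star]
    ring
  have hmul : (z - w * ⟨m, n⟩).norm * w.norm = (z * star w - w.norm • ⟨m, n⟩).norm := by
    rw [← hstar, map_mul, QuadraticAlgebra.norm_star]
  have hN' : (w.norm : ℚ) ≠ 0 := Int.cast_ne_zero.2 hN
  have hcast : ((z - w * ⟨m, n⟩).norm : ℚ) = w.norm *
      (⟨(z * star w).re / w.norm - m, (z * star w).im / w.norm - n⟩ :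
        QuadraticAlgebra ℚ a b).norm := by
    refine mul_right_cancel₀ hN' ?_
    rw [← Int.cast_mul, hmul]
    generalize w.norm = N at hN' ⊢
    simp only [QuadraticAlgebra.norm_def, re_sub, im_sub, re_smul, im_smul, smul_eq_mul]
    push_cast
    field_simp
  have hlt : |((z - w * ⟨m, n⟩).norm : ℚ)| < |(w.norm : ℚ)| := by
    rw [hcast, abs_mul]
    exact mul_lt_of_lt_one_right (abs_pos.2 hN') hmn
  exact_mod_cast hlt

theorem exists_abs_norm_lt_of_abs_sq_sub_lt
    (h : ∀ u t : ℚ, |u| ≤ 1 / 2 → |t| ≤ 1 / 2 →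
      ∃ k : ℤ, |(u + k) ^ 2 - (b ^ 2 + 4 * a) * t ^ 2 / 4| < 1) (x y : ℚ) :
    ∃ m n : ℤ, |(⟨x - m, y - n⟩ : QuadraticAlgebra ℚ a b).norm| < 1 := by
  obtain ⟨k, hk⟩ := h _ _ (abs_sub_round (x + b * (y - round y) / 2)) (abs_sub_round y)
  refine ⟨round (x + b * (y - round y) / 2) - k, round y, hk.trans_le' (le_of_eq ?_)⟩
  congr 1
  rw [QuadraticAlgebra.norm_def]
  push_cast
  ring

theorem isPrincipalIdealRing_of_abs_norm_lt (hD : ¬ IsSquare (b ^ 2 + 4 * a))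
    (h : ∀ x y : ℚ, ∃ m n : ℤ, |(⟨x - m, y - n⟩ : QuadraticAlgebra ℚ a b).norm| < 1) :
    IsPrincipalIdealRing (QuadraticAlgebra ℤ a b) := by
  refine ⟨fun I ↦ ?_⟩
  rcases eq_or_ne I ⊥ with rfl | hI
  · exact bot_isPrincipal
  have hne : {w | w ∈ I ∧ w ≠ 0}.Nonempty := Submodule.exists_mem_ne_zero_of_ne_bot hI
  obtain ⟨w, ⟨hwI, hw⟩, hmin⟩ :=
    (measure fun w : QuadraticAlgebra ℤ a b ↦ w.norm.natAbs).wf.has_min _ hne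
  refine ⟨w, le_antisymm (fun z hz ↦ ?_) ((Ideal.span_singleton_le_iff_mem I).2 hwI)⟩
  obtain ⟨q, hq⟩ := exists_abs_norm_sub_mul_lt hD h z hw
  by_contra hzw
  refine hmin (z - w * q) ⟨I.sub_mem hz (I.mul_mem_right q hwI), fun h0 ↦ hzw ?_⟩ ?_
  · exact Ideal.mem_span_singleton.2 ⟨q, sub_eq_zero.1 h0⟩
  · exact Int.natAbs_lt_iff_sq_lt.2 (sq_lt_sq.2 hq)

theorem mem_closure_of_re_mul_im_eq_zero {g u : (QuadraticAlgebra ℤ a b)ˣ} (hg : g.val = ω)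
    (hu : u.val.re * u.val.im = 0) : u ∈ Subgroup.closure {-1, g} := by
  have hneg : -1 ∈ Subgroup.closure {-1, g} := Subgroup.subset_closure (by simp)
  have hgmem : g ∈ Subgroup.closure {-1, g} := Subgroup.subset_closure (by simp)
  have hnorm := isUnit_iff_norm_isUnit.1 u.isUnit
  rw [QuadraticAlgebra.norm_def] at hnorm
  rcases mul_eq_zero.1 hu with h | h
  · have him : IsUnit u.val.im := isUnit_of_dvd_unit ⟨-a * u.val.im, by rw [h]; ring⟩ hnorm
    rcases Int.isUnit_iff.1 him with h1 | h1
    · convert hgmem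
      exact Units.ext (hg ▸ QuadraticAlgebra.ext h h1)
    · convert mul_mem hneg hgmem
      refine Units.ext ?_
      rw [Units.val_mul, hg]
      exact QuadraticAlgebra.ext (by simp [h]) (by simp [h1])
  · have hre : IsUnit u.val.re := isUnit_of_dvd_unit ⟨u.val.re, by rw [h]; ring⟩ hnorm
    rcases Int.isUnit_iff.1 hre with h1 | h1
    · convert one_mem (Subgroup.closure {-1, g})
      exact Units.ext (QuadraticAlgebra.ext h1 h)
    · convert hneg
      exact Units.ext (QuadraticAlgebra.ext h1 (by simpa using h))

end QuadraticOrder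

theorem subgroup_eq_top_of_exists_mul_lt {G : Type*} [Group G] {S : Subgroup G} (μ : G → ℕ)
    (h : ∀ g ∉ S, ∃ s ∈ S, μ (s * g) < μ g) : S = ⊤ := by
  refine (Subgroup.eq_top_iff' S).2 fun g ↦ ?_
  induction hn : μ g using Nat.strong_induction_on generalizing g with
  | h n ih =>
    by_contra hg
    obtain ⟨s, hs, hlt⟩ := h g hg
    exact hg ((Subgroup.mul_mem_cancel_left S hs).1 (ih _ (hn ▸ hlt) _ rfl))

theorem exists_zpow_mul_pow_of_closure_eq_top {G : Type*} [CommGroup G] {s g : G} {n : ℕ}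
    (hs : s ^ 2 = 1) (hn : Odd n) (h : Subgroup.closure {s, g} = ⊤) (x : G) :
    ∃ (i : ℤ) (y : G), 2 * |i| < n ∧ x = g ^ i * y ^ n := by
  obtain ⟨l, k, rfl⟩ := Subgroup.mem_closure_pair.1 (h ▸ Subgroup.mem_top x)
  have hsn : s ^ n = s := by
    obtain ⟨m, rfl⟩ := hn
    rw [pow_succ, pow_mul, hs, one_pow, one_mul]
  refine ⟨k.bmod n, s ^ l * g ^ k.bdiv n, ?_, ?_⟩
  · obtain ⟨m, rfl⟩ := hn
    have hle := Int.le_bmod (x := k) (m := 2 * m + 1) (by omega)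
    have hlt := Int.bmod_lt (x := k) (m := 2 * m + 1) (by omega)
    have habs : |k.bmod (2 * m + 1)| ≤ m := abs_le.2 ⟨by omega, by omega⟩
    omega
  · rw [mul_pow, ← zpow_natCast (s ^ l), ← zpow_natCast (g ^ _), ← zpow_mul, ← zpow_mul,
      mul_comm l, zpow_mul, zpow_natCast, hsn, mul_left_comm, ← zpow_add, mul_comm _ (n : ℤ),
      Int.bmod_add_bdiv]

/-- The ring of integers of `ℚ(√21)`, written `ℤ[ε]` with `ε = ω` the fundamental unit
`(5 + √21) / 2`; thus `ε ^ 2 = 5 * ε - 1` and `star ε = ε⁻¹`. -/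
abbrev Order21 : Type := QuadraticAlgebra ℤ (-1) 5

theorem exists_abs_sq_sub_lt {u t : ℚ} (hu : |u| ≤ 1 / 2) (ht : |t| ≤ 1 / 2) :
    ∃ k : ℤ, |(u + k) ^ 2 - 21 * t ^ 2 / 4| < 1 := by
  wlog hu0 : 0 ≤ u generalizing u
  · obtain ⟨k, hk⟩ := this (u := -u) (by rwa [abs_neg]) (by linarith)
    exact ⟨-k, by rwa [Int.cast_neg, ← neg_sq, neg_add, neg_neg]⟩
  have ht' : t ^ 2 ≤ (1 / 2) ^ 2 := sq_le_sq' (abs_le.1 ht).1 (abs_le.1 ht).2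
  have hu' := (abs_le.1 hu).2
  rcases lt_or_ge (21 * t ^ 2 / 4 - u ^ 2) 1 with h | h
  · refine ⟨0, abs_lt.2 ⟨?_, ?_⟩⟩ <;> rw [Int.cast_zero, add_zero] <;> nlinarith
  · refine ⟨1, abs_lt.2 ⟨by rw [Int.cast_one]; nlinarith, ?_⟩⟩
    rcases hu'.lt_or_eq with hlt | rfl
    · rw [Int.cast_one]
      linarith
    · -- Equality would force `(21 * t) ^ 2 = 105`.
      have hne : 21 * t ^ 2 ≠ 5 := fun h ↦
        (by norm_num : ¬ IsSquare (105 : ℚ)) ⟨21 * t, by linear_combination -21 * h⟩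
      have hlt : 5 < 21 * t ^ 2 := lt_of_le_of_ne (by linarith) hne.symm
      rw [Int.cast_one]
      linarith

instance : IsDomain Order21 := isDomain_of_not_isSquare (by norm_num)

instance : IsPrincipalIdealRing Order21 :=
  isPrincipalIdealRing_of_abs_norm_lt (by norm_num)
    (exists_abs_norm_lt_of_abs_sq_sub_lt fun u t hu ht ↦ by
      obtain ⟨k, hk⟩ := exists_abs_sq_sub_lt hu ht
      exact ⟨k, by norm_num; exact hk⟩)

theorem abs_add_lt_of_quadratic_form_eq {x y : ℤ} (hx : x ≠ 0) (hlt : |x| < |y|)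
    (h : |x ^ 2 + 5 * x * y + y ^ 2| = 1) : |5 * x + y| < |y| := by
  have hprod : |y| * |5 * x + y| < |y| * |y| := by
    calc |y| * |5 * x + y| = |x ^ 2 + 5 * x * y + y ^ 2 - x ^ 2| := by rw [← abs_mul]; ring_nf
      _ ≤ 1 + |x| ^ 2 := by rw [← h, ← abs_of_nonneg (sq_nonneg |x|), sq_abs]; exact abs_sub _ _
      _ < |y| * |y| := by nlinarith [abs_pos.2 hx]
  exact lt_of_mul_lt_mul_left hprod (abs_nonneg y)

/-- The fundamental unit `ε = ω` of `ℤ[ε]`. -/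
def epsUnit : Order21ˣ where
  val := ω
  inv := star ω
  val_inv := by decide
  inv_val := by decide

theorem closure_epsUnit : Subgroup.closure {-1, epsUnit} = ⊤ := by
  refine subgroup_eq_top_of_exists_mul_lt (fun u ↦ u.val.re.natAbs + u.val.im.natAbs) ?_
  intro u hu
  have hε : epsUnit ∈ Subgroup.closure {-1, epsUnit} := Subgroup.subset_closure (by simp)
  have hnorm : |u.val.re ^ 2 + 5 * u.val.re * u.val.im + u.val.im ^ 2| = 1 := by
    convert Int.isUnit_iff_abs_eq.1 (isUnit_iff_norm_isUnit.1 u.isUnit) using 2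
    rw [QuadraticAlgebra.norm_def]
    ring
  obtain ⟨hre, him⟩ := mul_ne_zero_iff.1 (hu ∘ mem_closure_of_re_mul_im_eq_zero rfl)
  have hne : |u.val.re| ≠ |u.val.im| := by
    intro h
    rcases abs_eq_abs.1 h with h | h <;> rw [h, abs_eq one_pos.le] at hnorm <;>
      ring_nf at hnorm <;> omega
  rcases hne.lt_or_gt with h | h
  · refine ⟨epsUnit⁻¹, inv_mem hε, ?_⟩
    have hval : (epsUnit⁻¹ * u).val = ⟨5 * u.val.re + u.val.im, -u.val.re⟩ := by
      rw [Units.val_mul, ← Units.inv_eq_val_inv]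
      ext <;> simp [epsUnit]
    have hlt := abs_add_lt_of_quadratic_form_eq hre h hnorm
    simp only [hval]
    zify
    rw [abs_neg]
    linarith
  · refine ⟨epsUnit, hε, ?_⟩
    have hval : (epsUnit * u).val = ⟨-u.val.im, 5 * u.val.im + u.val.re⟩ := by
      rw [Units.val_mul]
      ext <;> simp [epsUnit, add_comm]
    have hlt := abs_add_lt_of_quadratic_form_eq him h (by convert hnorm using 2; ring)
    simp only [hval]
    zify
    rw [abs_neg]
    linarith

theorem exists_int_eq_of_squarefree_mul_sq {d m : ℤ} (hd : Squarefree d) {s : ℚ}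
    (h : d * s ^ 2 = m) : ∃ b : ℤ, s = b := by
  have hden : (s.den : ℤ) ^ 2 ∣ d * s.num ^ 2 := by
    refine ⟨m, ?_⟩
    have := s.den_ne_zero
    rw [← s.num_div_den] at h
    field_simp at h
    exact_mod_cast h
  rcases eq_or_ne s.num 0 with h0 | h0
  · exact ⟨0, by simpa using h0⟩
  · have hu : IsUnit (s.den : ℤ) := (Rat.isCoprime_num_den s).symm.isUnit_of_dvd
      (dvd_of_pow_dvd_mul_pow hd le_rfl hden h0)
    have hone : s.den = 1 := Nat.isUnit_iff.1 (Int.ofNat_isUnit.1 hu)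
    exact ⟨s.num, (Rat.coe_int_num_of_den_eq_one hone).symm⟩

theorem squarefree_twentyOne : Squarefree (21 : ℤ) :=
  Int.squarefree_natAbs.1 (Nat.squarefree_mul_iff.2
    ⟨by norm_num, Nat.prime_three.prime.squarefree, Nat.prime_seven.prime.squarefree⟩ :
      Squarefree (3 * 7))

theorem exists_int_of_rat_point {c : ℤ} {x t : ℚ} (h : 21 * t ^ 2 = 4 * x ^ 5 + c ^ 2) :
    ∃ p q b : ℤ, IsCoprime p q ∧ q ≠ 0 ∧ 21 * b ^ 2 = q ^ 5 * (4 * p ^ 5 + c ^ 2 * q ^ 5) := by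
  have hx : x * x.den = x.num := Rat.mul_den_eq_num x
  have hint : (21 : ℤ) * (t * x.den ^ 5) ^ 2 =
      (x.den ^ 5 * (4 * x.num ^ 5 + c ^ 2 * x.den ^ 5) : ℤ) := by
    push_cast
    rw [← hx]
    linear_combination x.den ^ 10 * h
  obtain ⟨b, hb⟩ := exists_int_eq_of_squarefree_mul_sq squarefree_twentyOne hint
  refine ⟨x.num, x.den, b, Rat.isCoprime_num_den x, mod_cast x.den_ne_zero, ?_⟩
  rw [hb] at hint
  exact_mod_cast hint

theorem isCoprime_of_mul_sq_eq {c p q b : ℤ} (hc : c = 1 ∨ c = 3) (hpq : IsCoprime p q)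
    (h : 21 * b ^ 2 = q ^ 5 * (4 * p ^ 5 + c ^ 2 * q ^ 5)) : IsCoprime p c := by
  rcases hc with rfl | rfl
  · exact isCoprime_one_right
  by_contra hp
  obtain ⟨k, rfl⟩ : (3 : ℤ) ∣ p := by
    simpa using (Int.prime_three.coprime_iff_not_dvd.not.1 (fun h ↦ hp h.symm))
  obtain ⟨m, rfl⟩ : (3 : ℤ) ∣ b := Int.prime_three.dvd_of_dvd_pow
    (n := 2) ⟨108 * q ^ 5 * k ^ 5 + q ^ 10 - 2 * b ^ 2,
      mul_left_cancel₀ three_ne_zero (by linear_combination h)⟩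
  have h3 : (3 : ℤ) ∣ q ^ 10 :=
    ⟨7 * m ^ 2 - 36 * k ^ 5 * q ^ 5, mul_left_cancel₀ (by decide : (9 : ℤ) ≠ 0)
      (by linear_combination -h)⟩
  exact Int.prime_three.not_isUnit
    (hpq.isUnit_of_dvd' ⟨k, rfl⟩ (Int.prime_three.dvd_of_dvd_pow h3))

theorem exists_trace_norm_eq {c p q b : ℤ}
    (h : 21 * b ^ 2 = q ^ 5 * (4 * p ^ 5 + c ^ 2 * q ^ 5)) :
    ∃ z : Order21, z.trace = c * q ^ 5 ∧ z.norm = (-p) ^ 5 * q ^ 5 := by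
  have hpar : Even (c * q ^ 5 - 5 * b) := by
    have h2 : Even (21 * b ^ 2 - c ^ 2 * (q ^ 5) ^ 2) := ⟨2 * p ^ 5 * q ^ 5, by rw [h]; ring⟩
    generalize q ^ 5 = r at h2 ⊢
    have h21 : ¬ Even (21 : ℤ) := by decide
    have h5 : ¬ Even (5 : ℤ) := by decide
    simp only [Int.even_sub, Int.even_mul, Int.even_pow' two_ne_zero] at h2 ⊢
    tauto
  obtain ⟨a, ha⟩ := hpar
  refine ⟨⟨a, b⟩, ?_, ?_⟩
  · rw [QuadraticAlgebra.trace_def]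
    linear_combination -ha
  · rw [QuadraticAlgebra.norm_def]
    refine mul_left_cancel₀ (four_ne_zero (α := ℤ)) ?_
    linear_combination (-2 * a - c * q ^ 5 - 5 * b) * ha - h

theorem exists_unit_mul_pow_eq {c p q : ℤ} {z : Order21} (hcq : c * q ≠ 0)
    (hpq : IsCoprime p (c * q)) (htrace : z.trace = c * q ^ 5) (hnorm : z.norm = p ^ 5 * q ^ 5) :
    ∃ (u : Order21ˣ) (β : Order21), z = u * β ^ 5 := by
  have hmul : z * star z = (p : Order21) ^ 5 * (q : Order21) ^ 5 := by
    rw [← algebraMap_norm_eq_mul_star, hnorm]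
    simp
  have hadd : z + star z = c * (q : Order21) ^ 5 := by
    rw [← algebraMap_trace_eq_add_star, htrace]
    simp
  have hz : z ≠ 0 := by
    rintro rfl
    rw [map_zero, eq_comm, mul_eq_zero, pow_eq_zero_iff (by decide)] at htrace
    exact hcq (mul_eq_zero.2 htrace)
  have hdvd (P : Order21) (hP : Prime P) : 5 ∣ multiplicity P z := by
    refine dvd_multiplicity_of_mul_eq_pow_mul_pow (by decide) hP hmul ⟨c, by rw [hadd, mul_comm]⟩
      (mul_ne_zero hz (star_ne_zero.2 hz)) fun hPz hPz' hPp ↦ hP.not_isUnit ?_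
    have hPcq : P ∣ (c * q : ℤ) := by
      have := hadd ▸ dvd_add hPz hPz'
      push_cast
      rcases hP.dvd_or_dvd this with h | h
      · exact h.mul_right _
      · exact (hP.dvd_of_dvd_pow h).mul_left _
    exact (hpq.map (Int.castRingHom Order21)).isUnit_of_dvd' hPp hPcq
  obtain ⟨u, _, β, hβ⟩ := exists_unit_mul_prod_pow_mul_pow (Empty.elim : Empty → Order21) hz
    fun P hP _ ↦ hdvd P hP
  exact ⟨u, β, by simpa using hβ⟩

theorem exists_trace_star_omega_pow_mul_pow_eq (u : Order21ˣ) (β : Order21) :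
    ∃ (i : ℕ) (γ : Order21), i ≤ 2 ∧ (u * β ^ 5).trace = (star ω ^ i * γ ^ 5).trace := by
  obtain ⟨i, w, hi, rfl⟩ := exists_zpow_mul_pow_of_closure_eq_top (n := 5) neg_one_sq
    (by decide) closure_epsUnit u
  have hinv : (epsUnit⁻¹).val = star ω := rfl
  obtain ⟨n, rfl | rfl⟩ := i.eq_nat_or_neg
  · have hn : n ≤ 2 := by
      rw [Nat.abs_cast] at hi
      omega
    refine ⟨n, star (w * β), hn, ?_⟩
    rw [← QuadraticAlgebra.trace_star]
    simp [epsUnit, mul_pow, mul_assoc]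
  · have hn : n ≤ 2 := by
      rw [abs_neg, Nat.abs_cast] at hi
      omega
    exact ⟨n, w * β, hn, by simp [← hinv, mul_pow, mul_assoc]⟩

theorem exists_trace_eq_of_rat_point {c : ℤ} (hc : c = 1 ∨ c = 3) {x t : ℚ}
    (h : 21 * t ^ 2 = 4 * x ^ 5 + c ^ 2) :
    ∃ (i : ℕ) (p q w : ℤ), i ≤ 2 ∧ IsCoprime p q ∧ w ≠ 0 ∧
      (star ω ^ i * ⟨p, q⟩ ^ 5 : Order21).trace = c * w ^ 5 := by
  have hc0 : c ≠ 0 := by rcases hc with rfl | rfl <;> decide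
  have hcsq : Squarefree c := by
    rcases hc with rfl | rfl
    · exact squarefree_one
    · exact Int.prime_three.squarefree
  obtain ⟨p, q, b, hpq, hq, hb⟩ := exists_int_of_rat_point h
  obtain ⟨z, htrace, hnorm⟩ := exists_trace_norm_eq hb
  obtain ⟨u, β, rfl⟩ := exists_unit_mul_pow_eq (mul_ne_zero hc0 hq)
    ((isCoprime_of_mul_sq_eq hc hpq hb).mul_right hpq).neg_left htrace hnorm
  obtain ⟨i, γ, hi, hγ⟩ := exists_trace_star_omega_pow_mul_pow_eq u β
  rw [hγ] at htrace
  have hg : 0 < Int.gcd γ.re γ.im := by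
    rw [Nat.pos_iff_ne_zero, Ne, Int.gcd_eq_zero_iff]
    rintro ⟨hre, him⟩
    have hγ0 : γ = 0 := QuadraticAlgebra.ext hre him
    rw [hγ0, zero_pow (by decide), mul_zero, map_zero] at htrace
    exact mul_ne_zero hc0 (pow_ne_zero 5 hq) htrace.symm
  obtain ⟨r, s, hrs, hre, him⟩ := Int.exists_gcd_one hg
  generalize (γ.re.gcd γ.im : ℤ) = g at hre him
  have hγg : γ = g • ⟨r, s⟩ := by ext <;> simp [hre, him, mul_comm]
  rw [hγg, smul_pow, mul_smul_comm, map_smul, smul_eq_mul] at htrace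
  obtain ⟨w, rfl⟩ := dvd_of_pow_dvd_mul_pow hcsq (by decide) ⟨_, htrace.symm⟩ hq
  refine ⟨i, r, s, w, hi, Int.isCoprime_iff_gcd_eq_one.2 hrs, right_ne_zero_of_mul hq, ?_⟩
  exact mul_left_cancel₀ (pow_ne_zero 5 (left_ne_zero_of_mul hq)) (by linear_combination htrace)

/-- Coprimality away from `21`: the only common prime divisors of `x` and `y` divide `21`. -/
def IsCoprimeUpTo21 {R : Type*} [CommRing R] (x y : R) : Prop :=
  ∀ P, Prime P → P ∣ x → P ∣ y → P ∣ 21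

theorem IsCoprimeUpTo21.symm {R : Type*} [CommRing R] {x y : R} (h : IsCoprimeUpTo21 x y) :
    IsCoprimeUpTo21 y x :=
  fun P hP hy hx ↦ h P hP hx hy

theorem IsCoprimeUpTo21.intCast {R : Type*} [CommRing R] {a b : ℤ} (hb : b ≠ 0)
    (h : IsCoprimeUpTo21 a b) : IsCoprimeUpTo21 (a : R) (b : R) := by
  intro P hP hPa hPb
  have : (Ideal.span {P}).IsPrime := (Ideal.span_singleton_prime hP.ne_zero).2 hP
  set I := (Ideal.span {P}).comap (Int.castRingHom R)
  have hmem (n : ℤ) : n ∈ I ↔ P ∣ n := by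
    rw [Ideal.mem_comap, Ideal.mem_span_singleton, eq_intCast]
  have hI : I ≠ ⊥ := fun h0 ↦ hb (by rwa [← hmem, h0, Ideal.mem_bot] at hPb)
  have h21 := h _ (Submodule.IsPrincipal.prime_generator_of_isPrime I hI)
    ((Submodule.IsPrincipal.mem_iff_generator_dvd I).1 ((hmem a).2 hPa))
    ((Submodule.IsPrincipal.mem_iff_generator_dvd I).1 ((hmem b).2 hPb))
  exact_mod_cast (hmem 21).1 ((Submodule.IsPrincipal.mem_iff_generator_dvd I).2 h21)

theorem isCoprimeUpTo21_norm_trace {p q : ℤ} (hpq : IsCoprime p q) (i : ℕ) :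
    IsCoprimeUpTo21 (⟨p, q⟩ : Order21).norm (star ω ^ i * ⟨p, q⟩ ^ 5 : Order21).trace := by
  intro l hl hN hT
  have hl' : ¬ IsUnit (l : Order21) := fun h ↦ hl.not_isUnit (by
    simpa [isUnit_iff_norm_isUnit, hl.ne_zero] using h)
  obtain ⟨P, hP, hPl⟩ := exists_max_ideal_of_mem_nonunits hl'
  have hmem {n : ℤ} (h : l ∣ n) : algebraMap ℤ Order21 n ∈ P :=
    P.mem_of_dvd (map_dvd (algebraMap ℤ Order21) h) hPl
  have hβ : (⟨p, q⟩ : Order21) ∈ P ∧ star (⟨p, q⟩ : Order21) ∈ P := by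
    have hprod := hmem hN
    have hsum := hmem hT
    rw [algebraMap_norm_eq_mul_star] at hprod
    rw [algebraMap_trace_eq_add_star, star_mul', star_pow, star_pow, star_star] at hsum
    have hω : (ω : Order21) ^ i ∉ P := fun h ↦
      hP.ne_top (P.eq_top_of_isUnit_mem h (epsUnit.isUnit.pow i))
    have hω' : (star ω : Order21) ^ i ∉ P := fun h ↦
      hP.ne_top (P.eq_top_of_isUnit_mem h (epsUnit⁻¹.isUnit.pow i))
    have hpow (x : Order21) {y : Order21} (hy : y ∈ P) : x * y ^ 5 ∈ P :=
      P.mul_mem_left x (P.pow_mem_of_mem hy 5 (by decide))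
    rcases hP.isPrime.mem_or_mem hprod with h | h
    · have h5 := (P.add_mem_iff_right (hpow _ h)).1 hsum
      exact ⟨h, hP.isPrime.mem_of_pow_mem _ ((hP.isPrime.mem_or_mem h5).resolve_left hω)⟩
    · have h5 := (P.add_mem_iff_left (hpow _ h)).1 hsum
      exact ⟨hP.isPrime.mem_of_pow_mem _ ((hP.isPrime.mem_or_mem h5).resolve_left hω'), h⟩
  have hD : (ω - star ω : Order21) ∈ P := by
    obtain ⟨a, b, hab⟩ := hpq
    have h : (ω - star ω : Order21) = ((a : Order21) * ω - (b : Order21)) * star ⟨p, q⟩ +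
        ((b : Order21) - (a : Order21) * star ω) * ⟨p, q⟩ := by
      ext <;> simp
      · linear_combination 5 * hab
      · linear_combination -2 * hab
    exact h ▸ P.add_mem (P.mul_mem_left _ hβ.2) (P.mul_mem_left _ hβ.1)
  have h21 : ((21 : ℤ) : Order21) = (ω - star ω) * (ω - star ω) := by decide
  exact dvd_of_intCast_mem hP.ne_top hl hPl (h21 ▸ P.mul_mem_left _ hD)

/-! ### The quintic field -/

/-- The Dickson polynomial `D₅(X, 1)` minus `5`: since `ε + ε⁻¹ = 5`, its roots are the
`α + α⁻¹` with `α ^ 5 = ε`. -/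
noncomputable def quinticPoly : Polynomial ℤ := .X ^ 5 - .C 5 * .X ^ 3 + .C 5 * .X - .C 5

theorem monic_quinticPoly : quinticPoly.Monic := by
  rw [quinticPoly]
  monicity!

theorem natDegree_quinticPoly : quinticPoly.natDegree = 5 := by
  rw [quinticPoly]
  compute_degree!

theorem aeval_quinticPoly {A : Type*} [CommRing A] (x : A) :
    Polynomial.aeval x quinticPoly = x ^ 5 - 5 * x ^ 3 + 5 * x - 5 := by
  simp [quinticPoly, -eq_intCast, Polynomial.aeval_C]

theorem irreducible_quinticPoly : Irreducible quinticPoly := by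
  have h5 : (Ideal.span {(5 : ℤ)}).IsPrime :=
    (Ideal.span_singleton_prime (by norm_num)).2 (by norm_num)
  have hcoeff (n : ℕ) : quinticPoly.coeff n = (if n = 5 then 1 else 0) -
      5 * (if n = 3 then 1 else 0) + 5 * (if 1 = n then 1 else 0) - if n = 0 then 5 else 0 := by
    simp [quinticPoly, -eq_intCast, Polynomial.coeff_X, Polynomial.coeff_X_pow,
      Polynomial.coeff_C]
  refine (monic_quinticPoly.isEisensteinAt_of_mem_of_notMem h5.ne_top (fun {n} hn ↦ ?_)
    ?_).irreducible h5 monic_quinticPoly.isPrimitive (by rw [natDegree_quinticPoly]; norm_num)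
  · rw [natDegree_quinticPoly] at hn
    rw [Ideal.mem_span_singleton, hcoeff]
    interval_cases n <;> norm_num
  · rw [Ideal.span_singleton_pow, Ideal.mem_span_singleton, hcoeff]
    norm_num

instance : Fact (Irreducible (quinticPoly.map (algebraMap ℤ ℚ))) :=
  ⟨monic_quinticPoly.irreducible_iff_irreducible_map_fraction_map.1 irreducible_quinticPoly⟩

/-- The quintic field `ℚ(α + α⁻¹)`, where `α` is a fifth root of the unit `ε` of `ℤ[ε]`. -/
abbrev QuinticField : Type := AdjoinRoot (quinticPoly.map (algebraMap ℤ ℚ))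

/-- The power basis `1, τ, …, τ ^ 4` of the quintic field. -/
noncomputable def quinticPowerBasis : PowerBasis ℚ QuinticField :=
  AdjoinRoot.powerBasis (Fact.out : Irreducible (quinticPoly.map (algebraMap ℤ ℚ))).ne_zero

instance : NumberField QuinticField where
  to_charZero := charZero_of_injective_algebraMap (algebraMap ℚ _).injective
  to_finiteDimensional := quinticPowerBasis.finite

theorem quinticPowerBasis_dim : quinticPowerBasis.dim = 5 :=
  (monic_quinticPoly.natDegree_map _).trans natDegree_quinticPoly

theorem finrank_quinticField : Module.finrank ℚ QuinticField = 5 := by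
  rw [quinticPowerBasis.finrank, quinticPowerBasis_dim]

theorem aeval_root_quinticPoly :
    Polynomial.aeval (AdjoinRoot.root (quinticPoly.map (algebraMap ℤ ℚ))) quinticPoly = 0 := by
  rw [← AdjoinRoot.eval₂_root, Polynomial.eval₂_map, Polynomial.aeval_def]
  congr 1

/-- The generator `τ = α + α⁻¹` of the quintic field, as an algebraic integer. -/
noncomputable def τ : 𝓞 QuinticField :=
  ⟨AdjoinRoot.root _, quinticPoly, monic_quinticPoly, aeval_root_quinticPoly⟩

theorem aeval_τ : Polynomial.aeval τ quinticPoly = 0 :=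
  RingOfIntegers.coe_injective (by
    rw [map_zero, ← Polynomial.aeval_algebraMap_apply]
    exact aeval_root_quinticPoly)

theorem τ_pow_five : τ ^ 5 = 5 * τ ^ 3 - 5 * τ + 5 := by
  linear_combination (aeval_quinticPoly τ).symm.trans aeval_τ

theorem minpoly_τ : minpoly ℤ τ = quinticPoly :=
  have hτ := RingOfIntegers.isIntegral τ
  Polynomial.eq_of_monic_of_associated (minpoly.monic hτ) monic_quinticPoly
    ((minpoly.prime_of_isIntegrallyClosed hτ).irreducible.associated_of_dvd
      irreducible_quinticPoly (minpoly.isIntegrallyClosed_dvd hτ aeval_τ))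

theorem eq_of_quintic_eq_zero {x y : ℝ} (hx : Polynomial.aeval x quinticPoly = 0)
    (hy : Polynomial.aeval y quinticPoly = 0) : x = y := by
  have hfactor (x : ℝ) : (x - 2) * (x ^ 2 + x - 1) ^ 2 = Polynomial.aeval x quinticPoly + 3 := by
    rw [aeval_quinticPoly]
    ring
  have hgt {x : ℝ} (hx : Polynomial.aeval x quinticPoly = 0) : x ∈ Set.Ioi 2 := by
    by_contra! h
    have := mul_nonpos_of_nonpos_of_nonneg (sub_nonpos.2 (not_lt.1 h)) (sq_nonneg (x ^ 2 + x - 1))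
    linarith [hfactor x]
  have hmono : StrictMonoOn (fun x : ℝ ↦ (x - 2) * (x ^ 2 + x - 1) ^ 2) (Set.Ioi 2) := by
    intro x hx y _ hxy
    have hx' : 2 < x := hx
    have : 0 < x ^ 2 + x - 1 := by nlinarith
    have : 0 < x - 2 := by linarith
    change (x - 2) * (x ^ 2 + x - 1) ^ 2 < (y - 2) * (y ^ 2 + y - 1) ^ 2
    gcongr
  exact hmono.injOn (hgt hx) (hgt hy) ((hfactor x).trans (by rw [hfactor, hx, hy]))

theorem nrRealPlaces_quinticField_le : InfinitePlace.nrRealPlaces QuinticField ≤ 1 := by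
  classical
  refine Fintype.card_le_one_iff_subsingleton.2 ⟨fun ⟨w, hw⟩ ⟨w', hw'⟩ ↦ Subtype.ext ?_⟩
  let φ := InfinitePlace.embedding_of_isReal hw
  let ψ := InfinitePlace.embedding_of_isReal hw'
  have hroot (φ : QuinticField →+* ℝ) : Polynomial.aeval (φ τ) quinticPoly = 0 := by
    have := congrArg (φ.comp (algebraMap (𝓞 QuinticField) QuinticField)).toIntAlgHom aeval_τ
    rwa [← Polynomial.aeval_algHom_apply, map_zero] at this
  have hφψ : φ = ψ := AdjoinRoot.ringHom_ext (Subsingleton.elim _ _)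
    (eq_of_quintic_eq_zero (hroot φ) (hroot ψ))
  change w = w'
  rw [← InfinitePlace.mk_embedding w, ← InfinitePlace.mk_embedding w']
  congr 1
  refine RingHom.ext fun x ↦ ?_
  rw [← InfinitePlace.embedding_of_isReal_apply hw, ← InfinitePlace.embedding_of_isReal_apply hw']
  exact congrArg (fun φ : QuinticField →+* ℝ ↦ (φ x : ℂ)) hφψ

theorem rank_quinticField_le : Units.rank QuinticField ≤ 2 := by
  have hplaces := InfinitePlace.card_add_two_mul_card_eq_rank QuinticField
  have hcard := InfinitePlace.card_eq_nrRealPlaces_add_nrComplexPlaces QuinticField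
  have hreal := nrRealPlaces_quinticField_le
  rw [finrank_quinticField] at hplaces
  unfold Units.rank
  omega

/-- The matrix, in the basis `1, X, …, X ^ 4` of `A[X] / (quinticPoly)`, of the multiplication by
`∑ i, c i * X ^ i`. -/
def quinticMulMatrix {A : Type*} [CommRing A] (c : Fin 5 → A) : Matrix (Fin 5) (Fin 5) A :=
  let c₀ := c 0
  let c₁ := c 1
  let c₂ := c 2
  let c₃ := c 3
  let c₄ := c 4
  !![c₀, 5 * c₄, 5 * c₃, 5 * c₂ + 25 * c₄, 5 * c₁ + 25 * c₃;
    c₁, c₀ - 5 * c₄, -5 * c₃ + 5 * c₄, -5 * c₂ + 5 * c₃ - 25 * c₄,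
      -5 * c₁ + 5 * c₂ - 25 * c₃ + 25 * c₄;
    c₂, c₁, c₀ - 5 * c₄, -5 * c₃ + 5 * c₄, -5 * c₂ + 5 * c₃ - 25 * c₄;
    c₃, c₂ + 5 * c₄, c₁ + 5 * c₃, c₀ + 5 * c₂ + 20 * c₄, 5 * c₁ + 20 * c₃ + 5 * c₄;
    c₄, c₃, c₂ + 5 * c₄, c₁ + 5 * c₃, c₀ + 5 * c₂ + 20 * c₄]

theorem map_quinticMulMatrix {A B : Type*} [CommRing A] [CommRing B] (f : A →+* B)
    (c : Fin 5 → A) : f.mapMatrix (quinticMulMatrix c) = quinticMulMatrix (f ∘ c) := by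
  ext i j
  fin_cases i <;> fin_cases j <;> simp [quinticMulMatrix, map_ofNat f]

theorem sum_mul_pow_mul_pow_eq_sum_quinticMulMatrix {A : Type*} [CommRing A] {x : A}
    (hx : Polynomial.aeval x quinticPoly = 0) (c : Fin 5 → A) (j : Fin 5) :
    (∑ i, c i * x ^ (i : ℕ)) * x ^ (j : ℕ) = ∑ i, quinticMulMatrix c i j * x ^ (i : ℕ) := by
  rw [aeval_quinticPoly] at hx
  rw [Fin.sum_univ_five, Fin.sum_univ_five]
  fin_cases j <;> simp [quinticMulMatrix]
  · linear_combination c 4 * hx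
  · linear_combination (c 3 + c 4 * x) * hx
  · linear_combination (c 2 + c 3 * x + c 4 * (x ^ 2 + 5)) * hx
  · linear_combination (c 1 + c 2 * x + c 3 * (x ^ 2 + 5) + c 4 * (x ^ 3 + 5 * x)) * hx

theorem norm_sum_mul_τ_pow (c : Fin 5 → ℤ) :
    Algebra.norm ℤ (∑ i, c i * τ ^ (i : ℕ)) = (quinticMulMatrix c).det := by
  let b := quinticPowerBasis.basis.reindex (finCongr quinticPowerBasis_dim)
  have hb (i : Fin 5) : b i = (τ : QuinticField) ^ (i : ℕ) := by
    simp [b, quinticPowerBasis]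
    rfl
  have hmat : Algebra.leftMulMatrix b ((∑ i, c i * τ ^ (i : ℕ) : 𝓞 QuinticField) : QuinticField) =
      (Int.castRingHom ℚ).mapMatrix (quinticMulMatrix c) := by
    ext i j
    have hsum := sum_mul_pow_mul_pow_eq_sum_quinticMulMatrix aeval_τ
      (Int.castRingHom (𝓞 QuinticField) ∘ c) j
    rw [← map_quinticMulMatrix] at hsum
    have hrepr : ((∑ i, c i * τ ^ (i : ℕ) : 𝓞 QuinticField) : QuinticField) * b j =
        ∑ i, ((quinticMulMatrix c i j : ℤ) : ℚ) • b i := by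
      convert congrArg (algebraMap (𝓞 QuinticField) QuinticField) hsum using 1
      · simp [hb]
      · simp [hb, Algebra.smul_def]
    rw [Algebra.leftMulMatrix_eq_repr_mul, hrepr, b.repr_sum_self]
    rfl
  have hnorm := Algebra.coe_norm_int (∑ i, c i * τ ^ (i : ℕ) : 𝓞 QuinticField)
  rw [Algebra.norm_eq_matrix_det b, hmat, ← RingHom.map_det] at hnorm
  exact Int.cast_injective hnorm

theorem natAbs_discr_quinticField_le : (discr QuinticField).natAbs ≤ 1378125 := by
  have hmem := aeval_derivative_mem_differentIdeal ℤ ℚ QuinticField τ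
    AdjoinRoot.adjoinRoot_eq_top
  have hdvd := Ideal.absNorm_dvd_norm_of_mem hmem
  have hder : Polynomial.aeval τ (Polynomial.derivative (minpoly ℤ τ)) =
      ∑ i, (![5, 0, -15, 0, 5] i : ℤ) * τ ^ (i : ℕ) := by
    simp [minpoly_τ, quinticPoly, Fin.sum_univ_five, -eq_intCast, Polynomial.aeval_C]
    ring
  rw [absNorm_differentIdeal QuinticField, hder, norm_sum_mul_τ_pow] at hdvd
  have hdet : (quinticMulMatrix ![(5 : ℤ), 0, -15, 0, 5]).det = 1378125 := by decide +kernel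
  rw [hdet] at hdvd
  exact Nat.le_of_dvd (by norm_num) (Int.natCast_dvd_natCast.1 hdvd)

theorem prime_of_natAbs_norm_eq_pow {F : Type*} [Field F] [NumberField F] {g : 𝓞 F} {p d : ℕ}
    (hp : p.Prime) (hd : 0 < d) (hg : (Algebra.norm ℤ g).natAbs = p ^ d)
    (h : ∀ k, 0 < k → k < d → ∃ x, IsCoprime g (x ^ p ^ k - x)) : Prime g := by
  have hspan : Ideal.absNorm (Ideal.span {g}) = p ^ d := by rw [Ideal.absNorm_span_singleton, hg]
  have hg0 : g ≠ 0 := by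
    rintro rfl
    simp [hp.ne_zero, eq_comm, hd.ne'] at hg
  have hne : Ideal.span {g} ≠ ⊤ := by
    intro htop
    rw [htop, Ideal.absNorm_top, eq_comm, Nat.pow_eq_one] at hspan
    exact hspan.elim hp.ne_one hd.ne'
  obtain ⟨P, hP, hgP⟩ := Ideal.exists_le_maximal _ hne
  have hP0 : P ≠ ⊥ := by
    rintro rfl
    exact hg0 (by simpa using hgP)
  obtain ⟨k, hk, hPk⟩ := (Nat.dvd_prime_pow hp).1 (hspan ▸ Ideal.absNorm_dvd_absNorm_of_le hgP)
  rcases hk.lt_or_eq with hlt | rfl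
  · have hk0 : k ≠ 0 := by
      rintro rfl
      exact hP.ne_top (Ideal.absNorm_eq_one_iff.1 (by simpa using hPk))
    obtain ⟨x, a, b, hab⟩ := h k (Nat.pos_of_ne_zero hk0) hlt
    refine absurd ((Ideal.eq_top_iff_one P).2 ?_) hP.ne_top
    rw [← hab]
    exact P.add_mem (P.mul_mem_left _ ((Ideal.span_singleton_le_iff_mem P).1 hgP))
      (P.mul_mem_left _ (hPk ▸ pow_absNorm_sub_mem hP0 x))
  · obtain ⟨J, hJ⟩ := Ideal.dvd_iff_le.2 hgP
    have hJ1 : Ideal.absNorm J = 1 := by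
      have := congrArg Ideal.absNorm hJ
      rw [map_mul, hspan, hPk] at this
      exact (mul_eq_left₀ (pow_ne_zero k hp.ne_zero)).1 this.symm
    rw [Ideal.absNorm_eq_one_iff.1 hJ1, Ideal.mul_top] at hJ
    exact (Ideal.span_singleton_prime hg0).1 (hJ ▸ hP.isPrime)

theorem sum_mul_pow_sub_sum_mul_pow_mem {R : Type*} [CommRing R] {P : Ideal R} {x y : R}
    (h : x - y ∈ P) {n : ℕ} (c : Fin n → R) :
    ∑ i, c i * x ^ (i : ℕ) - ∑ i, c i * y ^ (i : ℕ) ∈ P := by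
  rw [← Finset.sum_sub_distrib]
  refine P.sum_mem fun i _ ↦ ?_
  rw [← mul_sub]
  exact P.mul_mem_left _ (P.mem_of_dvd (sub_dvd_pow_sub_pow x y i) h)

theorem norm_eq_det_quinticMulMatrix {g : 𝓞 QuinticField} (c : Fin 5 → ℤ)
    (hg : g = c 0 + c 1 * τ + c 2 * τ ^ 2 + c 3 * τ ^ 3 + c 4 * τ ^ 4) :
    Algebra.norm ℤ g = (quinticMulMatrix c).det := by
  rw [hg, ← norm_sum_mul_τ_pow, Fin.sum_univ_five]
  simp

theorem prime_τ : Prime τ :=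
  prime_of_natAbs_norm_eq_pow (p := 5) (d := 1) (by norm_num) one_pos
    (by rw [norm_eq_det_quinticMulMatrix ![0, 1, 0, 0, 0] (by simp)]; decide +kernel)
    (by omega)

theorem prime_τ_sub_two : Prime (τ - 2) :=
  prime_of_natAbs_norm_eq_pow (p := 3) (d := 1) (by norm_num) one_pos
    (by rw [norm_eq_det_quinticMulMatrix ![-2, 1, 0, 0, 0] (by simp; ring)]; decide +kernel)
    (by omega)

theorem prime_τ_add_two : Prime (τ + 2) :=
  prime_of_natAbs_norm_eq_pow (p := 7) (d := 1) (by norm_num) one_pos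
    (by rw [norm_eq_det_quinticMulMatrix ![2, 1, 0, 0, 0] (by simp; ring)]; decide +kernel)
    (by omega)

theorem prime_τ_sq_add_τ_sub_one : Prime (τ ^ 2 + τ - 1) := by
  refine prime_of_natAbs_norm_eq_pow (p := 3) (d := 2) (by norm_num) two_pos
    (by rw [norm_eq_det_quinticMulMatrix ![-1, 1, 1, 0, 0] (by simp; ring)]; decide +kernel)
    fun k hk hk2 ↦ ⟨τ, 1 + (τ + 2) * (τ - 1), -(τ + 2), ?_⟩
  obtain rfl : k = 1 := by omega
  ring

theorem prime_τ_sq_sub_τ_sub_one : Prime (τ ^ 2 - τ - 1) := by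
  refine prime_of_natAbs_norm_eq_pow (p := 7) (d := 2) (by norm_num) two_pos
    (by rw [norm_eq_det_quinticMulMatrix ![-1, -1, 1, 0, 0] (by simp; ring)]; decide +kernel)
    fun k hk hk2 ↦ ⟨τ, -(2 * (5 - 3 * τ) * (τ ^ 5 + τ ^ 4 + 2 * τ ^ 3 + 3 * τ ^ 2 + 5 * τ + 8) +
      (τ + 2) * (τ ^ 2 - τ - 1) - 72), 2 * (5 - 3 * τ), ?_⟩
  obtain rfl : k = 1 := by omega
  linear_combination -τ_pow_five

theorem two_eq_mul :
    (2 : 𝓞 QuinticField) = (2 - 2 * τ - τ ^ 2 + 2 * τ ^ 3 + τ ^ 4) *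
      (1 - 4 * τ + 4 * τ ^ 2 + τ ^ 3 - τ ^ 4) := by
  linear_combination (τ ^ 3 + τ ^ 2 - 2 * τ) * τ_pow_five

theorem three_eq_mul : (3 : 𝓞 QuinticField) = (τ - 2) * (τ ^ 2 + τ - 1) ^ 2 := by
  linear_combination -τ_pow_five

theorem seven_eq_mul : (7 : 𝓞 QuinticField) = (τ + 2) * (τ ^ 2 - τ - 1) ^ 2 := by
  linear_combination -τ_pow_five

theorem prime_two_factor : Prime (2 - 2 * τ - τ ^ 2 + 2 * τ ^ 3 + τ ^ 4) :=
  prime_of_natAbs_norm_eq_pow (p := 2) (d := 1) (by norm_num) one_pos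
    (by rw [norm_eq_det_quinticMulMatrix ![2, -2, -1, 2, 1] (by simp; ring)]; decide +kernel)
    (by omega)

theorem prime_two_cofactor : Prime (1 - 4 * τ + 4 * τ ^ 2 + τ ^ 3 - τ ^ 4) := by
  refine prime_of_natAbs_norm_eq_pow (p := 2) (d := 4) (by norm_num) four_pos
    (by rw [norm_eq_det_quinticMulMatrix ![1, -4, 4, 1, -1] (by simp; ring)]; decide +kernel)
    fun k hk hk4 ↦ ⟨τ, ?_⟩
  have h4 : IsCoprime (1 - 4 * τ + 4 * τ ^ 2 + τ ^ 3 - τ ^ 4) (τ ^ 4 - τ) :=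
    ⟨1 + τ ^ 2 + τ ^ 3 + (2 * τ - 2 * τ ^ 2 + τ ^ 3 + τ ^ 4 - 3 * τ ^ 5) *
      (2 - 2 * τ - τ ^ 2 + 2 * τ ^ 3 + τ ^ 4), τ + τ ^ 3, by
      linear_combination -(2 * τ - 2 * τ ^ 2 + τ ^ 3 + τ ^ 4 - 3 * τ ^ 5) * two_eq_mul⟩
  interval_cases k
  · exact h4.of_isCoprime_of_dvd_right ⟨τ ^ 2 + τ + 1, by ring⟩
  · exact h4
  · exact ⟨1 + τ ^ 2 + τ ^ 3 + τ ^ 4 + τ ^ 5 + (2 * τ - 2 * τ ^ 2 + τ ^ 3 - τ ^ 5 - 2 * τ ^ 7) *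
      (2 - 2 * τ - τ ^ 2 + 2 * τ ^ 3 + τ ^ 4), τ, by
      linear_combination -(2 * τ - 2 * τ ^ 2 + τ ^ 3 - τ ^ 5 - 2 * τ ^ 7) * two_eq_mul⟩

theorem exists_prime_mem_of_natCast_mem {P : Ideal (𝓞 QuinticField)} (hP : P.IsPrime) {p : ℕ}
    (hp : p.Prime) (hp11 : p < 11) (hpP : (p : 𝓞 QuinticField) ∈ P) : ∃ g ∈ P, Prime g := by
  have hp' : p = 2 ∨ p = 3 ∨ p = 5 ∨ p = 7 := by
    interval_cases p <;> revert hp <;> norm_num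
  rcases hp' with rfl | rfl | rfl | rfl
  · rw [Nat.cast_ofNat, two_eq_mul] at hpP
    exact (hP.mem_or_mem hpP).elim (⟨_, ·, prime_two_factor⟩) (⟨_, ·, prime_two_cofactor⟩)
  · rw [Nat.cast_ofNat, three_eq_mul] at hpP
    exact (hP.mem_or_mem hpP).elim (⟨_, ·, prime_τ_sub_two⟩)
      fun h ↦ ⟨_, hP.mem_of_pow_mem _ h, prime_τ_sq_add_τ_sub_one⟩
  · refine ⟨τ, hP.mem_of_pow_mem 5 (P.mem_of_dvd ⟨τ ^ 3 - τ + 1, ?_⟩ hpP), prime_τ⟩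
    linear_combination τ_pow_five
  · rw [Nat.cast_ofNat, seven_eq_mul] at hpP
    exact (hP.mem_or_mem hpP).elim (⟨_, ·, prime_τ_add_two⟩)
      fun h ↦ ⟨_, hP.mem_of_pow_mem _ h, prime_τ_sq_sub_τ_sub_one⟩

/-- For each prime `p < 74` at which `quinticPoly` has a root, the coordinates in the basis
`1, τ, …, τ ^ 4` of a generator of the corresponding prime ideal of norm `p`. -/
def primeGeneratorCoords : ℕ → Fin 5 → ℤ
  | 2 => ![2, -2, -1, 2, 1]
  | 3 => ![-2, 1, 0, 0, 0]
  | 5 => ![0, 1, 0, 0, 0]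
  | 7 => ![2, 1, 0, 0, 0]
  | 11 => ![1, 1, -3, -1, 1]
  | 13 => ![-3, -3, 0, 1, 0]
  | 17 => ![-3, -1, 2, 1, 0]
  | 23 => ![-2, 0, 1, 0, 0]
  | 31 => ![-1, 2, -1, -2, 1]
  | 37 => ![2, 0, 0, 2, 1]
  | 43 => ![-3, -1, 1, 0, 0]
  | 47 => ![-3, 3, -3, -1, 1]
  | 53 => ![2, -2, -4, 0, 1]
  | 59 => ![-1, 2, 3, 1, 0]
  | 61 => ![1, -1, 0, 2, 1]
  | 67 => ![2, -3, 2, 0, 0]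
  | 71 => ![-6, 3, 2, -4, -2]
  | 73 => ![-3, 7, -5, -1, 1]
  | _ => 0

theorem natAbs_det_primeGeneratorCoords_and_dvd_sum : ∀ p : ℕ, p < 74 → p.Prime → ∀ r < p,
    (p : ℤ) ∣ (r : ℤ) ^ 5 - 5 * (r : ℤ) ^ 3 + 5 * r - 5 →
    (quinticMulMatrix (primeGeneratorCoords p)).det.natAbs = p ∧
      (p : ℤ) ∣ ∑ i, primeGeneratorCoords p i * (r : ℤ) ^ (i : ℕ) := by
  decide +kernel

theorem exists_prime_mem_of_prime_absNorm {P : Ideal (𝓞 QuinticField)} (hP : P.IsPrime) {p : ℕ}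
    (hp : p.Prime) (hp74 : p < 74) (hPp : P.absNorm = p) : ∃ g ∈ P, Prime g := by
  obtain ⟨r, hr, hrP⟩ := exists_natCast_sub_mem_of_prime_absNorm hp hPp τ
  have hpP : ((p : ℤ) : 𝓞 QuinticField) ∈ P := by exact_mod_cast hPp ▸ P.absNorm_mem
  have hroot : (((r : ℤ) ^ 5 - 5 * (r : ℤ) ^ 3 + 5 * r - 5 : ℤ) : 𝓞 QuinticField) ∈ P := by
    convert P.neg_mem (sum_mul_pow_sub_sum_mul_pow_mem hrP ![-5, 5, 0, -5, 0, 1]) using 1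
    simp [Fin.sum_univ_six]
    linear_combination τ_pow_five
  obtain ⟨hdet, hdvd⟩ := natAbs_det_primeGeneratorCoords_and_dvd_sum p hp74 hp r hr
    (dvd_of_intCast_mem hP.ne_top (Nat.prime_iff_prime_int.1 hp) hpP hroot)
  refine ⟨∑ i, primeGeneratorCoords p i * τ ^ (i : ℕ), ?_,
    prime_of_natAbs_norm_eq_pow hp one_pos
      (by rw [norm_sum_mul_τ_pow, hdet, pow_one]) (by omega)⟩
  have hsum := sum_mul_pow_sub_sum_mul_pow_mem hrP
    fun i ↦ ((primeGeneratorCoords p i : ℤ) : 𝓞 QuinticField)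
  refine (P.sub_mem_iff_left ?_).1 hsum
  have := P.mem_of_dvd ((Int.castRingHom (𝓞 QuinticField)).map_dvd hdvd) hpP
  simpa using this

open Nat in
theorem minkowski_bound_quinticField_lt :
    (4 / Real.pi) ^ InfinitePlace.nrComplexPlaces QuinticField *
      ((Module.finrank ℚ QuinticField)! /
        Module.finrank ℚ QuinticField ^ Module.finrank ℚ QuinticField *
        √|(discr QuinticField : ℝ)|) < 74 := by
  have hplaces := InfinitePlace.card_add_two_mul_card_eq_rank QuinticField
  rw [finrank_quinticField] at hplaces ⊢
  have hdiscr : √|(discr QuinticField : ℝ)| ≤ 1174 := by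
    rw [← Int.cast_abs, Int.abs_eq_natAbs, Real.sqrt_le_left (by norm_num)]
    exact_mod_cast natAbs_discr_quinticField_le.trans (by norm_num)
  have hpi : (4 / Real.pi) ^ InfinitePlace.nrComplexPlaces QuinticField ≤ (4 / 3.14) ^ 2 := calc
    _ ≤ (4 / Real.pi) ^ 2 := pow_le_pow_right₀
        ((one_le_div Real.pi_pos).2 Real.pi_lt_four.le) (by omega)
    _ ≤ (4 / 3.14) ^ 2 := by gcongr; exact Real.pi_gt_d2.le
  calc
    _ ≤ (4 / 3.14) ^ 2 * ((5 ! : ℝ) / (5 : ℕ) ^ 5 * 1174) := by gcongr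
    _ < 74 := by norm_num [Nat.factorial]

instance : IsPrincipalIdealRing (𝓞 QuinticField) := by
  refine RingOfIntegers.isPrincipalIdealRing_of_isPrincipal_of_norm_le_of_isPrime
    fun ⟨P, hP0⟩ hP hPle ↦ ?_
  have hlt : P.absNorm < 74 := by exact_mod_cast hPle.trans_lt minkowski_bound_quinticField_lt
  have := hP.isMaximal (nonZeroDivisors.ne_zero hP0)
  obtain ⟨p, k, hk, hpP, hp, hPk⟩ := Ideal.exists_prime_and_absNorm_eq_pow P
  suffices ∃ g ∈ P, Prime g by
    obtain ⟨g, hgP, hg⟩ := this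
    exact isPrincipal_of_prime_mem hP hg hgP
  rcases Nat.lt_or_ge p 11 with hp11 | hp11
  · exact exists_prime_mem_of_natCast_mem hP hp hp11 hpP
  · have hk1 : k = 1 := by
      by_contra hk1
      have := (Nat.pow_le_pow_left hp11 2).trans (Nat.pow_le_pow_right hp.pos (show 2 ≤ k by omega))
      omega
    subst hk1
    exact exists_prime_mem_of_prime_absNorm hP hp (by simpa [hPk] using hlt) (by rw [hPk, pow_one])

/-! ### Logarithmic derivatives -/

section LogDeriv

open Polynomial

variable {A : Type*} [CommRing A]

theorem dvd_derivative_mul_sub {d s t P Q : A[X]} (hP : d ∣ derivative P - s * P)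
    (hQ : d ∣ derivative Q - t * Q) : d ∣ derivative (P * Q) - (s + t) * (P * Q) := by
  rw [derivative_mul, show derivative P * Q + P * derivative Q - (s + t) * (P * Q) =
    (derivative P - s * P) * Q + (derivative Q - t * Q) * P by ring]
  exact dvd_add (hP.mul_right Q) (hQ.mul_right P)

theorem dvd_derivative_pow_sub {d s P : A[X]} (hP : d ∣ derivative P - s * P) (n : ℕ) :
    d ∣ derivative (P ^ n) - n * s * P ^ n := by
  induction n with
  | zero => simp
  | succ n ih =>
    rw [pow_succ, Nat.cast_succ, add_mul, one_mul]
    exact dvd_derivative_mul_sub ih hP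

theorem dvd_derivative_prod_pow_sub {ι : Type*} {d : A[X]} {s P : ι → A[X]}
    (h : ∀ i, d ∣ derivative (P i) - s i * P i) (e : ι → ℕ) (t : Finset ι) :
    d ∣ derivative (∏ i ∈ t, P i ^ e i) - (∑ i ∈ t, e i * s i) * ∏ i ∈ t, P i ^ e i := by
  classical
  induction t using Finset.induction_on with
  | empty => simp
  | insert i t hi ih =>
    rw [Finset.prod_insert hi, Finset.sum_insert hi]
    exact dvd_derivative_mul_sub (dvd_derivative_pow_sub (h i) (e i)) ih

theorem coeff_succ_eq_of_X_pow_dvd_derivative_sub {s P : A[X]} {n m : ℕ}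
    (h : X ^ n ∣ derivative P - s * P) (hm : m < n) :
    (m + 1) * P.coeff (m + 1) =
      ∑ k ∈ Finset.range (m + 1), s.coeff k * P.coeff (m - k) := by
  have := X_pow_dvd_iff.1 h m hm
  rw [coeff_sub, coeff_derivative, coeff_mul, sub_eq_zero,
    Finset.Nat.sum_antidiagonal_eq_sum_range_succ fun i j ↦ s.coeff i * P.coeff j] at this
  rw [← this, mul_comm]

end LogDeriv

theorem τ_pow_dvd_five {n : ℕ} (hn : n ≤ 5) : τ ^ n ∣ 5 :=
  (pow_dvd_pow τ hn).trans ⟨-9 + τ + 6 * τ ^ 2 - τ ^ 4, by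
    linear_combination (τ ^ 4 - τ ^ 2 - τ - 1) * τ_pow_five⟩

theorem five_dvd_of_τ_dvd_intCast {n : ℤ} (h : τ ∣ n) : 5 ∣ n :=
  dvd_of_intCast_mem (P := Ideal.span {τ})
    (Ideal.span_singleton_eq_top.not.2 prime_τ.not_isUnit) (by norm_num)
    (Ideal.mem_span_singleton.2 (by simpa using τ_pow_dvd_five (n := 1) (by norm_num)))
    (Ideal.mem_span_singleton.2 h)

theorem X_pow_dvd_map_of_τ_pow_dvd_aeval {n : ℕ} (hn : n ≤ 5) {P : Polynomial ℤ}
    (h : τ ^ n ∣ Polynomial.aeval τ P) :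
    Polynomial.X ^ n ∣ P.map (Int.castRingHom (ZMod 5)) := by
  induction n generalizing P with
  | zero => simp
  | succ n ih =>
    have haeval := congrArg (Polynomial.aeval τ) (Polynomial.divX_mul_X_add P)
    rw [map_add, map_mul, Polynomial.aeval_X, Polynomial.aeval_C, eq_intCast] at haeval
    rw [← haeval] at h
    have h5 : 5 ∣ P.coeff 0 := five_dvd_of_τ_dvd_intCast
      ((dvd_add_right (Dvd.intro_left _ rfl)).1 ((dvd_pow_self τ n.succ_ne_zero).trans h))
    have hcoeff : τ ^ (n + 1) ∣ (P.coeff 0 : 𝓞 QuinticField) :=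
      (τ_pow_dvd_five hn).trans (by simpa using (Int.castRingHom (𝓞 QuinticField)).map_dvd h5)
    have hdivX : τ ^ n ∣ Polynomial.aeval τ P.divX := by
      rw [dvd_add_left hcoeff, pow_succ] at h
      exact (mul_dvd_mul_iff_right prime_τ.ne_zero).1 h
    rw [← Polynomial.divX_mul_X_add P, Polynomial.map_add, Polynomial.map_mul, Polynomial.map_X,
      Polynomial.map_C, eq_intCast, (ZMod.intCast_zmod_eq_zero_iff_dvd _ 5).2 h5, map_zero,
      add_zero, pow_succ]
    exact mul_dvd_mul_right (ih (by omega) hdivX) _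

theorem exists_five_dvd_pow_five_sub_intCast (w : 𝓞 QuinticField) :
    ∃ r : ℤ, 5 ∣ w ^ 5 - (r : 𝓞 QuinticField) := by
  have hτ : Ideal.absNorm (Ideal.span {τ}) = 5 := by
    rw [Ideal.absNorm_span_singleton, norm_eq_det_quinticMulMatrix ![0, 1, 0, 0, 0] (by simp)]
    decide +kernel
  obtain ⟨r, -, hr⟩ := exists_natCast_sub_mem_of_prime_absNorm (by norm_num) hτ w
  obtain ⟨y, hy⟩ := Ideal.mem_span_singleton.1 hr
  obtain rfl : w = r + τ * y := by linear_combination hy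
  refine ⟨r ^ 5, r ^ 4 * (τ * y) + 2 * r ^ 3 * (τ * y) ^ 2 + 2 * r ^ 2 * (τ * y) ^ 3 +
    r * (τ * y) ^ 4 + (τ ^ 3 - τ + 1) * y ^ 5, ?_⟩
  push_cast
  linear_combination y ^ 5 * τ_pow_five

/-- Polynomials whose values at `τ` are two independent units and the prime `τ - 2` above `3`:
modulo fifth powers these generate the part of the `5`-Selmer group of the quintic field that
the descent meets. -/
noncomputable def selmerPoly : Fin 3 → Polynomial ℤ :=
  ![1 - .X + .X ^ 3, -1 + 8 * .X - 4 * .X ^ 2 - 4 * .X ^ 3 + 2 * .X ^ 4, .X - 2]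

/-- The logarithmic derivatives of the `selmerPoly i` modulo `5` and `X ^ 4`. -/
noncomputable def selmerLogDeriv : Fin 3 → Polynomial (ZMod 5) :=
  ![-1 - .X + 2 * .X ^ 2 + 3 * .X ^ 3, 2 + 4 * .X + .X ^ 2 + .X ^ 3,
    2 + .X + 3 * .X ^ 2 + 4 * .X ^ 3]

theorem X_pow_four_dvd_derivative_selmerPoly_sub (i : Fin 3) :
    Polynomial.X ^ 4 ∣ Polynomial.derivative ((selmerPoly i).map (Int.castRingHom (ZMod 5))) -
      selmerLogDeriv i * (selmerPoly i).map (Int.castRingHom (ZMod 5)) := by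
  have h5 : (5 : Polynomial (ZMod 5)) = 0 := CharP.ofNat_eq_zero _ 5
  refine ⟨(![4 - 2 * .X - 3 * .X ^ 2, 8 + 2 * .X ^ 2 - 2 * .X ^ 3, -4] : Fin 3 → _) i, ?_⟩
  fin_cases i <;> simp [selmerPoly, selmerLogDeriv, map_ofNat Polynomial.C]
  · ring
  · linear_combination (2 - 4 * .X - 7 * .X ^ 2 + 5 * .X ^ 3) * h5
  · linear_combination (1 + .X ^ 2 + .X ^ 3) * h5

theorem X_pow_four_dvd_derivative_map_sub {P : Polynomial ℤ} {n : ℤ} (hn : ¬ 5 ∣ n)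
    {e : Fin 3 → ℕ} {w : 𝓞 QuinticField}
    (h : n * Polynomial.aeval τ P = (∏ i, Polynomial.aeval τ (selmerPoly i) ^ e i) * w ^ 5) :
    Polynomial.X ^ 4 ∣ Polynomial.derivative (P.map (Int.castRingHom (ZMod 5))) -
      (∑ i, e i * selmerLogDeriv i) * P.map (Int.castRingHom (ZMod 5)) := by
  obtain ⟨r, hr⟩ := exists_five_dvd_pow_five_sub_intCast w
  have h5 : τ ^ 5 ∣ Polynomial.aeval τ
      ((n : Polynomial ℤ) * P - (r : Polynomial ℤ) * ∏ i, selmerPoly i ^ e i) := by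
    refine ((τ_pow_dvd_five le_rfl).trans hr).trans (Dvd.intro_left
      (∏ i, Polynomial.aeval τ (selmerPoly i) ^ e i) ?_)
    simp only [map_sub, map_mul, map_prod, map_pow, map_intCast, h]
    ring
  have hdvd := X_pow_dvd_map_of_τ_pow_dvd_aeval le_rfl h5
  have hlog := dvd_derivative_prod_pow_sub X_pow_four_dvd_derivative_selmerPoly_sub e Finset.univ
  simp only [Polynomial.map_sub, Polynomial.map_mul, Polynomial.map_prod, Polynomial.map_pow,
    Polynomial.map_intCast] at hdvd
  set s := ∑ i, e i * selmerLogDeriv i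
  set Q := ∏ i, (selmerPoly i).map (Int.castRingHom (ZMod 5)) ^ e i
  have hderiv := Polynomial.pow_sub_one_dvd_derivative_of_pow_dvd hdvd
  have : Fact (Nat.Prime 5) := ⟨by norm_num⟩
  have hn0 : IsUnit (n : Polynomial (ZMod 5)) := by
    have := (isUnit_iff_ne_zero.2 ((ZMod.intCast_zmod_eq_zero_iff_dvd n 5).not.2 hn)).map
      (Polynomial.C (R := ZMod 5))
    simpa using this
  rw [← hn0.dvd_mul_left]
  convert dvd_add
    (dvd_sub hderiv (((pow_dvd_pow Polynomial.X (by norm_num)).trans hdvd).mul_left s))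
    (hlog.mul_left (r : Polynomial (ZMod 5))) using 1
  simp only [Polynomial.derivative_sub, Polynomial.derivative_intCast_mul]
  ring

theorem coeff_sum_selmerLogDeriv (e : Fin 3 → ℕ) :
    (∑ i, e i * selmerLogDeriv i).coeff 0 = -e 0 + 2 * e 1 + 2 * e 2 ∧
    (∑ i, e i * selmerLogDeriv i).coeff 1 = -e 0 + 4 * e 1 + e 2 ∧
    (∑ i, e i * selmerLogDeriv i).coeff 2 = 2 * e 0 + e 1 + 3 * e 2 ∧
    (∑ i, e i * selmerLogDeriv i).coeff 3 = 3 * e 0 + e 1 + 4 * e 2 := by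
  refine ⟨?_, ?_, ?_, ?_⟩ <;>
  · simp [Fin.sum_univ_three, selmerLogDeriv, Polynomial.coeff_natCast_mul, Polynomial.coeff_X,
      Polynomial.coeff_one, Polynomial.coeff_X_pow, Polynomial.coeff_ofNat_mul,
      Polynomial.coeff_ofNat_zero]
    ring

theorem exists_coeff_succ_eq_sum {P : Polynomial ℤ} {n : ℤ} (hn : ¬ 5 ∣ n)
    {e : Fin 3 → ℕ} {w : 𝓞 QuinticField}
    (h : n * Polynomial.aeval τ P = (∏ i, Polynomial.aeval τ (selmerPoly i) ^ e i) * w ^ 5) :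
    ∃ s : ℕ → ZMod 5,
      (s 0 = -e 0 + 2 * e 1 + 2 * e 2 ∧ s 1 = -e 0 + 4 * e 1 + e 2 ∧
        s 2 = 2 * e 0 + e 1 + 3 * e 2 ∧ s 3 = 3 * e 0 + e 1 + 4 * e 2) ∧
      ∀ m < 4, (m + 1) * (P.coeff (m + 1) : ZMod 5) =
        ∑ k ∈ Finset.range (m + 1), s k * P.coeff (m - k) :=
  ⟨_, coeff_sum_selmerLogDeriv e, fun m hm ↦ by
    simpa only [Polynomial.coeff_map, eq_intCast] using
      coeff_succ_eq_of_X_pow_dvd_derivative_sub (X_pow_four_dvd_derivative_map_sub hn h) hm⟩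

theorem aeval_selmerPoly (i : Fin 3) : Polynomial.aeval τ (selmerPoly i) =
    ![1 - τ + τ ^ 3, -1 + 8 * τ - 4 * τ ^ 2 - 4 * τ ^ 3 + 2 * τ ^ 4, τ - 2] i := by
  fin_cases i <;> simp [selmerPoly, map_ofNat (Polynomial.aeval τ)]

theorem isUnit_aeval_selmerPoly_castSucc (i : Fin 2) :
    IsUnit (Polynomial.aeval τ (selmerPoly i.castSucc)) := by
  rw [aeval_selmerPoly]
  refine IsUnit.of_mul_eq_one (![-9 + τ + 6 * τ ^ 2 - τ ^ 4,
    -481 + 252 * τ + 120 * τ ^ 2 - 424 * τ ^ 3 - 202 * τ ^ 4] i) ?_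
  fin_cases i <;> simp
  · linear_combination (2 - τ ^ 2) * τ_pow_five
  · linear_combination (-96 + 724 * τ - 40 * τ ^ 2 - 404 * τ ^ 3) * τ_pow_five

theorem five_dvd_of_prod_aeval_selmerPoly_pow_eq {e : Fin 2 → ℕ} {w : 𝓞 QuinticField}
    (hw : IsUnit w) (h : ∏ i, Polynomial.aeval τ (selmerPoly i.castSucc) ^ e i = w ^ 5)
    (i : Fin 2) : 5 ∣ e i := by
  obtain ⟨v, hv⟩ := hw.exists_right_inv
  have hone : ((1 : ℤ) : 𝓞 QuinticField) * Polynomial.aeval τ (1 : Polynomial ℤ) =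
      (∏ i, Polynomial.aeval τ (selmerPoly i) ^ (![e 0, e 1, 0] : Fin 3 → ℕ) i) * v ^ 5 := calc
    _ = w ^ 5 * v ^ 5 := by rw [← mul_pow, hv, one_pow, map_one, Int.cast_one, one_mul]
    _ = _ := by
      rw [← h, Fin.prod_univ_two, Fin.prod_univ_three]
      simp
  obtain ⟨s, ⟨h0, h1, -, -⟩, hs⟩ := exists_coeff_succ_eq_sum (by norm_num) hone
  have hc0 : 0 = -(e 0 : ZMod 5) + 2 * e 1 := by
    simpa [h0, Polynomial.coeff_one] using hs 0 (by norm_num)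
  have hc1 : 0 = -(e 0 : ZMod 5) + 4 * e 1 := by
    simpa [Finset.sum_range_succ, h1, Polynomial.coeff_one] using hs 1 (by norm_num)
  have hsolve : ∀ a b : ZMod 5, 0 = -a + 2 * b → 0 = -a + 4 * b → a = 0 ∧ b = 0 := by decide
  obtain ⟨ha, hb⟩ := hsolve (e 0) (e 1) hc0 hc1
  rw [← ZMod.natCast_eq_zero_iff]
  fin_cases i
  exacts [ha, hb]

theorem exists_units_eq_prod_mul_pow (u : (𝓞 QuinticField)ˣ) :
    ∃ (e : Fin 2 → ℕ) (w : 𝓞 QuinticField),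
      u = (∏ i, Polynomial.aeval τ (selmerPoly i.castSucc) ^ e i) * w ^ 5 := by
  obtain ⟨e, w, -, h⟩ := exists_prod_pow_mul_pow_eq (F := QuinticField) (p := 5) (by norm_num)
    (by rw [finrank_quinticField]; norm_num) (by simpa using rank_quinticField_le)
    (fun i ↦ (isUnit_aeval_selmerPoly_castSucc i).unit)
    (fun e w h ↦ five_dvd_of_prod_aeval_selmerPoly_pow_eq w.isUnit
      (by simpa using congrArg Units.val h)) u
  exact ⟨e, w, by simpa using (congrArg Units.val h).symm⟩

theorem modEq_padicValNat_of_pow_mul_eq {p a n m c x y : ℕ} (hp : p.Prime) (hm : ¬ p ∣ m)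
    (hc : c ≠ 0) (hx : x ≠ 0) (hy : y ≠ 0) (h : p ^ a * m * x ^ n = c * y ^ n) :
    a ≡ padicValNat p c [MOD n] := by
  have : Fact p.Prime := ⟨hp⟩
  have hm0 : m ≠ 0 := fun h0 ↦ hm (h0 ▸ dvd_zero p)
  have key := congrArg (padicValNat p) h
  rw [padicValNat.mul (mul_ne_zero (pow_ne_zero _ hp.ne_zero) hm0) (pow_ne_zero _ hx),
    padicValNat.mul (pow_ne_zero _ hp.ne_zero) hm0, padicValNat.mul hc (pow_ne_zero _ hy),
    padicValNat.prime_pow, padicValNat.pow, padicValNat.pow, padicValNat.eq_zero_of_not_dvd hm,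
    add_zero] at key
  calc a ≡ a + n * padicValNat p x [MOD n] := by simp [Nat.ModEq]
    _ ≡ padicValNat p c [MOD n] := by simp [Nat.ModEq, key]

/-- Generators of the primes of the quintic field above `3`, `7` and `5`. -/
noncomputable def badPrime : Fin 5 → 𝓞 QuinticField :=
  ![τ - 2, τ ^ 2 + τ - 1, τ + 2, τ ^ 2 - τ - 1, τ]

theorem nine_eq_badPrime_mul : (9 : 𝓞 QuinticField) = badPrime 0 ^ 2 * badPrime 1 ^ 4 := by
  simp only [badPrime, Matrix.cons_val]
  linear_combination (3 + (τ - 2) * (τ ^ 2 + τ - 1) ^ 2) * three_eq_mul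

theorem fortyNine_eq_badPrime_mul : (49 : 𝓞 QuinticField) = badPrime 2 ^ 2 * badPrime 3 ^ 4 := by
  simp only [badPrime, Matrix.cons_val]
  linear_combination (7 + (τ + 2) * (τ ^ 2 - τ - 1) ^ 2) * seven_eq_mul

theorem norm_badPrime (i : Fin 5) :
    Algebra.norm ℤ (badPrime i) = (![3, 9, 7, 49, 5] : Fin 5 → ℤ) i := by
  have hcoord : ∀ i, badPrime i = ∑ j, ((![![-2, 1, 0, 0, 0], ![-1, 1, 1, 0, 0],
      ![2, 1, 0, 0, 0], ![-1, -1, 1, 0, 0], ![0, 1, 0, 0, 0]] : Fin 5 → Fin 5 → ℤ) i j :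
      𝓞 QuinticField) * τ ^ (j : ℕ) := by
    intro i
    fin_cases i <;> simp [badPrime, Fin.sum_univ_five] <;> ring
  rw [hcoord, norm_sum_mul_τ_pow]
  revert i
  decide +kernel

theorem exists_associated_badPrime {Q : 𝓞 QuinticField} (hQ : Prime Q) (h : Q ∣ 105) :
    ∃ i, Associated Q (badPrime i) := by
  have hprod : (105 : 𝓞 QuinticField) = (τ - 2) * (τ ^ 2 + τ - 1) ^ 2 *
      ((τ + 2) * (τ ^ 2 - τ - 1) ^ 2) * (τ ^ 5 * (-9 + τ + 6 * τ ^ 2 - τ ^ 4)) := by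
    rw [← three_eq_mul, ← seven_eq_mul]
    linear_combination 21 * (τ ^ 4 - τ ^ 2 - τ - 1) * τ_pow_five
  rw [hprod] at h
  have hassoc {g : 𝓞 QuinticField} (hg : Prime g) (n : ℕ) (hQg : Q ∣ g ^ n) : Associated Q g :=
    hQ.associated_of_dvd hg (hQ.dvd_of_dvd_pow hQg)
  rcases hQ.dvd_or_dvd h with h | h
  · rcases hQ.dvd_or_dvd h with h | h <;> rcases hQ.dvd_or_dvd h with h | h
    · exact ⟨0, hassoc prime_τ_sub_two 1 (by rwa [pow_one])⟩
    · exact ⟨1, hassoc prime_τ_sq_add_τ_sub_one 2 h⟩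
    · exact ⟨2, hassoc prime_τ_add_two 1 (by rwa [pow_one])⟩
    · exact ⟨3, hassoc prime_τ_sq_sub_τ_sub_one 2 h⟩
  · rcases hQ.dvd_or_dvd h with h | h
    · exact ⟨4, hassoc prime_τ 5 h⟩
    · refine absurd (isUnit_of_dvd_unit h (.of_mul_eq_one (1 - τ + τ ^ 3) ?_)) hQ.not_isUnit
      linear_combination (2 - τ ^ 2) * τ_pow_five

theorem exponents_of_mul_pow_eq_mul_pow {e : Fin 5 → ℕ} {c x w : ℕ} (hc : c = 1 ∨ c = 3)
    (hx : x ≠ 0) (hw : w ≠ 0)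
    (h : 3 ^ e 0 * 9 ^ e 1 * 7 ^ e 2 * 49 ^ e 3 * 5 ^ e 4 * x ^ 5 = c * w ^ 5) :
    (e 0 + 2 * e 1) % 5 < 2 ∧ 5 ∣ e 2 + 2 * e 3 ∧ 5 ∣ e 4 := by
  have hprod : 3 ^ (e 0 + 2 * e 1) * 7 ^ (e 2 + 2 * e 3) * 5 ^ e 4 * x ^ 5 = c * w ^ 5 := by
    rw [← h, pow_add, pow_add, pow_mul, pow_mul]
    ring
  have hc0 : c ≠ 0 := by omega
  have hndvd {p a b : ℕ} (m n : ℕ) (hp : p.Prime) (ha : ¬ p ∣ a) (hb : ¬ p ∣ b) :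
      ¬ p ∣ a ^ m * b ^ n := fun h ↦
    (hp.dvd_mul.1 h).elim (fun h ↦ ha (hp.dvd_of_dvd_pow h)) fun h ↦ hb (hp.dvd_of_dvd_pow h)
  have h3 := modEq_padicValNat_of_pow_mul_eq (p := 3) (a := e 0 + 2 * e 1) (by norm_num)
    (hndvd (a := 7) (b := 5) (e 2 + 2 * e 3) (e 4) (by norm_num) (by norm_num) (by norm_num))
    hc0 hx hw (by rw [← hprod]; ring)
  have h7 := modEq_padicValNat_of_pow_mul_eq (p := 7) (a := e 2 + 2 * e 3) (by norm_num)
    (hndvd (a := 3) (b := 5) (e 0 + 2 * e 1) (e 4) (by norm_num) (by norm_num) (by norm_num))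
    hc0 hx hw (by rw [← hprod]; ring)
  have h5 := modEq_padicValNat_of_pow_mul_eq (p := 5) (a := e 4) (by norm_num)
    (hndvd (a := 3) (b := 7) (e 0 + 2 * e 1) (e 2 + 2 * e 3) (by norm_num) (by norm_num)
    (by norm_num)) hc0 hx hw (by rw [← hprod]; ring)
  have hc3 : c ∣ 3 := by rcases hc with rfl | rfl <;> norm_num
  have hval (p : ℕ) (hp : ¬ p ∣ 3) : padicValNat p c = 0 :=
    padicValNat.eq_zero_of_not_dvd fun h ↦ hp (h.trans hc3)
  rw [hval 7 (by norm_num), Nat.modEq_zero_iff_dvd] at h7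
  rw [hval 5 (by norm_num), Nat.modEq_zero_iff_dvd] at h5
  refine ⟨?_, h7, h5⟩
  rw [h3]
  rcases hc with rfl | rfl <;> simp

theorem exists_mul_prod_badPrime_pow_eq {e : Fin 5 → ℕ} (h7 : 5 ∣ e 2 + 2 * e 3)
    (h5 : 5 ∣ e 4) : ∃ y, 9 ^ e 1 * 49 ^ e 3 * ∏ i, badPrime i ^ e i =
      badPrime 0 ^ ((e 0 + 2 * e 1) % 5) * y ^ 5 := by
  obtain ⟨k7, hk7⟩ := h7
  obtain ⟨k5, hk5⟩ := h5
  set r := (e 0 + 2 * e 1) % 5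
  set k3 := (e 0 + 2 * e 1) / 5
  have h3pow : badPrime 0 ^ e 0 * (badPrime 0 ^ 2) ^ e 1 =
      badPrime 0 ^ r * (badPrime 0 ^ k3) ^ 5 := by
    rw [← pow_mul, ← pow_add, ← pow_mul, ← pow_add, mul_comm k3, Nat.mod_add_div]
  have h7pow : badPrime 2 ^ e 2 * (badPrime 2 ^ 2) ^ e 3 = (badPrime 2 ^ k7) ^ 5 := by
    rw [← pow_mul, ← pow_add, ← pow_mul', hk7]
  refine ⟨badPrime 0 ^ k3 * badPrime 1 ^ e 1 * badPrime 2 ^ k7 * badPrime 3 ^ e 3 *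
    badPrime 4 ^ k5, ?_⟩
  rw [nine_eq_badPrime_mul, fortyNine_eq_badPrime_mul, Fin.prod_univ_five, hk5]
  calc
    _ = (badPrime 0 ^ e 0 * (badPrime 0 ^ 2) ^ e 1) * (badPrime 2 ^ e 2 * (badPrime 2 ^ 2) ^ e 3) *
        (badPrime 1 ^ e 1 * badPrime 3 ^ e 3 * badPrime 4 ^ k5) ^ 5 := by ring
    _ = _ := by
      rw [h3pow, h7pow]
      ring

theorem exists_mul_eq_prod_aeval_selmerPoly_mul_pow {x : 𝓞 QuinticField} (hx : x ≠ 0) {c w : ℤ}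
    (hc : c = 1 ∨ c = 3) (hw : w ≠ 0) (hN : Algebra.norm ℤ x = c * w ^ 5)
    (hQ : ∀ Q, Prime Q → ¬ Q ∣ 105 → 5 ∣ multiplicity Q x) :
    ∃ (n : ℤ) (e : Fin 3 → ℕ) (y : 𝓞 QuinticField), ¬ 5 ∣ n ∧ e 2 < 2 ∧
      n * x = (∏ i, Polynomial.aeval τ (selmerPoly i) ^ e i) * y ^ 5 := by
  obtain ⟨u, e, y, rfl⟩ := exists_unit_mul_prod_pow_mul_pow badPrime hx
    fun Q hQp hna ↦ hQ Q hQp fun h ↦ not_exists.2 hna (exists_associated_badPrime hQp h)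
  have hy : y ≠ 0 := by
    rintro rfl
    simp at hx
  have hnorm : 3 ^ e 0 * 9 ^ e 1 * 7 ^ e 2 * 49 ^ e 3 * 5 ^ e 4 *
      (Algebra.norm ℤ y).natAbs ^ 5 = c.natAbs * w.natAbs ^ 5 := by
    have hu : (Algebra.norm ℤ (u : 𝓞 QuinticField)).natAbs = 1 :=
      Int.isUnit_iff_natAbs_eq.1 (u.isUnit.map (Algebra.norm ℤ))
    simpa [norm_badPrime, Fin.prod_univ_five, Int.natAbs_mul, Int.natAbs_pow, hu] using
      congrArg Int.natAbs hN
  obtain ⟨h3, h7, h5⟩ := exponents_of_mul_pow_eq_mul_pow (by omega) (by simpa using hy)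
    (by simpa using hw) hnorm
  obtain ⟨z, hz⟩ := exists_mul_prod_badPrime_pow_eq h7 h5
  obtain ⟨f, v, hu⟩ := exists_units_eq_prod_mul_pow u
  refine ⟨9 ^ e 1 * 49 ^ e 3, ![f 0, f 1, (e 0 + 2 * e 1) % 5], v * z * y, ?_, h3, ?_⟩
  · have h5 : Prime (5 : ℤ) := by norm_num
    exact fun h ↦ (h5.dvd_or_dvd h).elim (fun h ↦ absurd (h5.dvd_of_dvd_pow h) (by norm_num))
      fun h ↦ absurd (h5.dvd_of_dvd_pow h) (by norm_num)
  · have hbad : Polynomial.aeval τ (selmerPoly 2) = badPrime 0 := by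
      simp [aeval_selmerPoly, badPrime]
    rw [Fin.prod_univ_two, Fin.castSucc_zero, Fin.castSucc_one] at hu
    rw [Fin.prod_univ_three, hbad, hu]
    push_cast
    linear_combination Polynomial.aeval τ (selmerPoly 0) ^ f 0 *
      Polynomial.aeval τ (selmerPoly 1) ^ f 1 * v ^ 5 * y ^ 5 * hz

/-- The polynomial whose value at `τ = θ + θ⁻¹`, where `θ ^ 5 = ε`, is `θ⁻ⁱ * β + θⁱ * star β`
for `β = p + q * ε`: a fifth root of the trace of `ε⁻ⁱ * β ^ 5` in the sense of
`aeval_tracePoly_mul`. -/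
noncomputable def tracePoly (i : ℕ) (p q : ℤ) : Polynomial ℤ :=
  Polynomial.C p * Polynomial.dickson 1 1 i + Polynomial.C q * Polynomial.dickson 1 1 (5 - i)

theorem aeval_tracePoly_add {S : Type*} [CommRing S] {θ η : S} (h : θ * η = 1) {i : ℕ}
    (hi : i ≤ 5) (p q : ℤ) : Polynomial.aeval (θ + η) (tracePoly i p q) =
      η ^ i * (p + q * θ ^ 5) + θ ^ i * (p + q * η ^ 5) := by
  obtain ⟨j, hj⟩ := Nat.exists_eq_add_of_le hi
  have hD (n : ℕ) : Polynomial.aeval (θ + η) (Polynomial.dickson 1 (1 : ℤ) n) = θ ^ n + η ^ n := by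
    rw [Polynomial.aeval_def, ← Polynomial.eval_map, Polynomial.map_dickson, map_one,
      Polynomial.dickson_one_one_eval_add_inv θ η h]
  have hpow : (θ * η) ^ i = 1 := by rw [h, one_pow]
  rw [tracePoly, map_add, map_mul, map_mul, hD, hD, Polynomial.aeval_C, Polynomial.aeval_C, hj,
    Nat.add_sub_cancel_left]
  simp only [algebraMap_int_eq, eq_intCast]
  linear_combination -(q : S) * (θ ^ j + η ^ j) * hpow

theorem intCast_norm_and_trace_eq {S : Type*} [CommRing S] {α α' : S} (hsum : α + α' = 5)
    (hprod : α * α' = 1) (i : ℕ) (p q : ℤ) :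
    ((⟨p, q⟩ : Order21).norm : S) = (p + q * α) * (p + q * α') ∧
      ((star ω ^ i * ⟨p, q⟩ ^ 5 : Order21).trace : S) =
        α' ^ i * (p + q * α) ^ 5 + α ^ i * (p + q * α') ^ 5 := by
  obtain ⟨f, hf⟩ : ∃ f : Order21 →ₐ[ℤ] S, ∀ x y : ℤ, f ⟨x, y⟩ = x + y * α := by
    refine ⟨lift ⟨α, ?_⟩, fun x y ↦ by simp⟩
    rw [neg_smul, one_smul, zsmul_eq_mul]
    push_cast
    linear_combination α * hsum - hprod
  have hβ := hf p q
  have hω : f ω = α := (hf 0 1).trans (by simp)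
  have hω' : f (star ω) = α' := by
    rw [star_eq, map_sub, AlgHom.commutes, trace_omega, hω, eq_sub_of_add_eq' hsum]
    simp
  have hβ' : f (star ⟨p, q⟩) = p + q * α' := by
    rw [star_mk, hf, eq_sub_of_add_eq' hsum]
    push_cast
    ring
  constructor
  · simpa only [map_intCast, map_mul, hβ, hβ', algebraMap_int_eq, eq_intCast] using
      congrArg f (algebraMap_norm_eq_mul_star (⟨p, q⟩ : Order21))
  · have hT := congrArg f (algebraMap_trace_eq_add_star (star ω ^ i * ⟨p, q⟩ ^ 5 : Order21))
    rwa [algebraMap_int_eq, eq_intCast, map_intCast, star_mul', star_pow, star_star, star_pow,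
      map_add, map_mul f, map_pow f, map_pow f, hω', hβ, map_mul f, map_pow f, map_pow f, hω,
      hβ'] at hT

theorem aeval_tracePoly_mul {R : Type*} [CommRing R] {t : R} (ht : t ^ 5 = 5 * t ^ 3 - 5 * t + 5)
    {i : ℕ} (hi : i ≤ 5) (p q : ℤ) :
    Polynomial.aeval t (tracePoly i p q) * (Polynomial.aeval t (tracePoly i p q) ^ 4 -
      5 * ((⟨p, q⟩ : Order21).norm : R) * Polynomial.aeval t (tracePoly i p q) ^ 2 +
      5 * ((⟨p, q⟩ : Order21).norm : R) ^ 2) =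
    ((star ω ^ i * ⟨p, q⟩ ^ 5 : Order21).trace : R) := by
  set θ : QuadraticAlgebra R (-1) t := ω
  have hprod : θ * star θ = 1 := by
    rw [← algebraMap_norm_eq_mul_star, norm_def]
    simp [θ]
  have hsum : θ + star θ = algebraMap R _ t := by
    rw [← algebraMap_trace_eq_add_star, trace_omega]
  have hprod5 : θ ^ 5 * star θ ^ 5 = 1 := by rw [← mul_pow, hprod, one_pow]
  have hsum5 : θ ^ 5 + star θ ^ 5 = 5 := by
    have ht' := congrArg (algebraMap R (QuadraticAlgebra R (-1) t)) ht
    simp only [map_add, map_sub, map_mul, map_pow, map_ofNat, ← hsum] at ht'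
    linear_combination ht' +
      (5 * (θ + star θ) * (θ * star θ + 1) - 5 * (θ + star θ) ^ 3) * hprod
  obtain ⟨hN, hT⟩ := intCast_norm_and_trace_eq hsum5 hprod5 i p q
  have hi' : θ ^ i * star θ ^ i = 1 := by rw [← mul_pow, hprod, one_pow]
  apply algebraMap_injective (a := -1) (b := t)
  simp only [map_mul, map_add, map_sub, map_pow, map_ofNat, map_intCast,
    ← Polynomial.aeval_algebraMap_apply]
  rw [← hsum, aeval_tracePoly_add hprod hi, hN, hT, pow_right_comm _ 5, pow_right_comm θ 5]
  generalize (p + q * θ ^ 5 : QuadraticAlgebra R (-1) t) = β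
  generalize (p + q * star θ ^ 5 : QuadraticAlgebra R (-1) t) = β'
  generalize θ ^ i = x at hi' ⊢
  generalize star θ ^ i = y at hi' ⊢
  linear_combination (5 * β * β' * (y * β + x * β') ^ 3 -
    5 * β ^ 2 * β' ^ 2 * (y * β + x * β') * (x * y + 1)) * hi'

theorem tracePoly_one (p q : ℤ) : tracePoly 1 p q = Polynomial.C (2 * q) +
    Polynomial.C p * Polynomial.X + Polynomial.C (-4 * q) * Polynomial.X ^ 2 +
    Polynomial.C q * Polynomial.X ^ 4 := by
  simp [tracePoly]
  ring

theorem tracePoly_two (p q : ℤ) : tracePoly 2 p q = Polynomial.C (-2 * p) +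
    Polynomial.C (-3 * q) * Polynomial.X + Polynomial.C p * Polynomial.X ^ 2 +
    Polynomial.C q * Polynomial.X ^ 3 := by
  simp [tracePoly]
  ring

theorem coeff_tracePoly_one (p q : ℤ) :
    (tracePoly 1 p q).coeff 0 = 2 * q ∧ (tracePoly 1 p q).coeff 1 = p ∧
      (tracePoly 1 p q).coeff 2 = -4 * q ∧ (tracePoly 1 p q).coeff 3 = 0 ∧
      (tracePoly 1 p q).coeff 4 = q := by
  simp only [tracePoly_one, Polynomial.coeff_add, Polynomial.coeff_C_mul, Polynomial.coeff_X_pow,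
    Polynomial.coeff_X, Polynomial.coeff_C]
  norm_num

theorem coeff_tracePoly_two (p q : ℤ) :
    (tracePoly 2 p q).coeff 0 = -2 * p ∧ (tracePoly 2 p q).coeff 1 = -3 * q ∧
      (tracePoly 2 p q).coeff 2 = p ∧ (tracePoly 2 p q).coeff 3 = q ∧
      (tracePoly 2 p q).coeff 4 = 0 := by
  simp only [tracePoly_two, Polynomial.coeff_add, Polynomial.coeff_C_mul, Polynomial.coeff_X_pow,
    Polynomial.coeff_X, Polynomial.coeff_C]
  norm_num

theorem norm_aeval_tracePoly {i : ℕ} (hi : i = 1 ∨ i = 2) (p q : ℤ) :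
    Algebra.norm ℤ (Polynomial.aeval τ (tracePoly i p q)) =
      (star ω ^ i * ⟨p, q⟩ ^ 5 : Order21).trace := by
  rcases hi with rfl | rfl
  · rw [norm_eq_det_quinticMulMatrix ![2 * q, p, -4 * q, 0, q] (by
      simp [tracePoly_one, map_ofNat (Polynomial.aeval τ)])]
    simp [quinticMulMatrix, Matrix.det_succ_row_zero, Fin.sum_univ_succ, Fin.succAbove,
      trace_def, pow_succ]
    ring
  · rw [norm_eq_det_quinticMulMatrix ![-2 * p, -3 * q, p, q, 0] (by
      simp [tracePoly_two, map_ofNat (Polynomial.aeval τ)])]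
    simp [quinticMulMatrix, Matrix.det_succ_row_zero, Fin.sum_univ_succ, Fin.succAbove,
      trace_def, pow_succ]
    ring

theorem five_dvd_multiplicity_aeval_tracePoly {c p q w : ℤ} {i : ℕ} (hi : i ≤ 5)
    (hc : c = 1 ∨ c = 3) (hpq : IsCoprime p q) (hw : w ≠ 0)
    (h : (star ω ^ i * ⟨p, q⟩ ^ 5 : Order21).trace = c * w ^ 5) {Q : 𝓞 QuinticField}
    (hQ : Prime Q) (hQ105 : ¬ Q ∣ 105) :
    5 ∣ multiplicity Q (Polynomial.aeval τ (tracePoly i p q)) := by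
  have hc0 : c ≠ 0 := by rcases hc with rfl | rfl <;> decide
  have hprod := aeval_tracePoly_mul τ_pow_five hi p q
  have hT0 : (star ω ^ i * ⟨p, q⟩ ^ 5 : Order21).trace ≠ 0 :=
    h ▸ mul_ne_zero hc0 (pow_ne_zero 5 hw)
  have h105 : (105 : 𝓞 QuinticField) = 5 * 21 := by norm_num
  refine dvd_multiplicity_of_mul_eq_mul_pow hQ (c := (c : 𝓞 QuinticField)) (w := w) ?_
    (Int.cast_ne_zero.2 hw) (by rw [hprod, h]; push_cast; rfl) ?_ ?_
  · rw [hprod]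
    exact Int.cast_ne_zero.2 hT0
  · rcases hc with rfl | rfl
    · simpa using hQ.not_isUnit ∘ isUnit_of_dvd_one
    · exact fun h ↦ hQ105 (h.trans ⟨35, by norm_num⟩)
  · intro hx hy
    have hN5 : Q ∣ 5 * ((⟨p, q⟩ : Order21).norm : 𝓞 QuinticField) ^ 2 :=
      (dvd_add_right (dvd_sub (hx.trans (dvd_pow_self _ four_ne_zero))
        ((hx.trans (dvd_pow_self _ two_ne_zero)).mul_left _))).1 hy
    rcases hQ.dvd_or_dvd hN5 with h5 | hN
    · exact hQ105 (h5.trans ⟨21, h105⟩)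
    · exact hQ105 (((isCoprimeUpTo21_norm_trace hpq i).intCast hT0 Q hQ
        (hQ.dvd_of_dvd_pow hN) (hprod ▸ hx.mul_right _)).trans ⟨5, h105.trans (mul_comm _ _)⟩)

theorem eq_zero_of_coeff_tracePoly_one_eq : ∀ e : Fin 2, ∀ a b p q : ZMod 5,
    p = (-a + 2 * b + 2 * e) * (2 * q) →
    2 * (-4 * q) = (-a + 2 * b + 2 * e) * p + (-a + 4 * b + e) * (2 * q) →
    0 = (-a + 2 * b + 2 * e) * (-4 * q) + (-a + 4 * b + e) * p + (2 * a + b + 3 * e) * (2 * q) →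
    4 * q = (-a + 4 * b + e) * (-4 * q) + (2 * a + b + 3 * e) * p +
      (3 * a + b + 4 * e) * (2 * q) →
    p = 0 ∧ q = 0 := by
  decide

theorem eq_zero_of_coeff_tracePoly_two_eq : ∀ e : Fin 2, ∀ a b p q : ZMod 5,
    -3 * q = (-a + 2 * b + 2 * e) * (-2 * p) →
    2 * p = (-a + 2 * b + 2 * e) * (-3 * q) + (-a + 4 * b + e) * (-2 * p) →
    3 * q = (-a + 2 * b + 2 * e) * p + (-a + 4 * b + e) * (-3 * q) +
      (2 * a + b + 3 * e) * (-2 * p) →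
    0 = (-a + 2 * b + 2 * e) * q + (-a + 4 * b + e) * p + (2 * a + b + 3 * e) * (-3 * q) +
      (3 * a + b + 4 * e) * (-2 * p) →
    p = 0 ∧ q = 0 := by
  decide

theorem not_isCoprime_of_coeff_tracePoly_eq {i : ℕ} (hi : i = 1 ∨ i = 2) {p q : ℤ}
    {e : Fin 3 → ℕ} (he : e 2 < 2) {s : ℕ → ZMod 5} (hs : s 0 = -e 0 + 2 * e 1 + 2 * e 2 ∧
      s 1 = -e 0 + 4 * e 1 + e 2 ∧ s 2 = 2 * e 0 + e 1 + 3 * e 2 ∧ s 3 = 3 * e 0 + e 1 + 4 * e 2)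
    (h : ∀ m < 4, (m + 1) * ((tracePoly i p q).coeff (m + 1) : ZMod 5) =
      ∑ k ∈ Finset.range (m + 1), s k * (tracePoly i p q).coeff (m - k)) :
    ¬ IsCoprime p q := by
  suffices hpq : (p : ZMod 5) = 0 ∧ (q : ZMod 5) = 0 by
    rw [ZMod.intCast_zmod_eq_zero_iff_dvd, ZMod.intCast_zmod_eq_zero_iff_dvd] at hpq
    exact fun hcop ↦ absurd (hcop.isUnit_of_dvd' hpq.1 hpq.2) (by decide)
  obtain ⟨hs0, hs1, hs2, hs3⟩ := hs
  have h0 := h 0 (by norm_num)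
  have h1 := h 1 (by norm_num)
  have h2 := h 2 (by norm_num)
  have h3 := h 3 (by norm_num)
  simp only [Finset.sum_range_succ, Finset.sum_range_zero, zero_add, Nat.sub_zero, Nat.sub_self,
    Nat.reduceAdd, Nat.reduceSub, hs0, hs1, hs2, hs3] at h0 h1 h2 h3
  have he' : ((⟨e 2, he⟩ : Fin 2) : ZMod 5) = e 2 := rfl
  rw [← he'] at h0 h1 h2 h3
  rcases hi with rfl | rfl
  · obtain ⟨c0, c1, c2, c3, c4⟩ := coeff_tracePoly_one p q
    simp only [c0, c1, c2, c3, c4] at h0 h1 h2 h3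
    push_cast at h0 h1 h2 h3
    exact eq_zero_of_coeff_tracePoly_one_eq ⟨e 2, he⟩ (e 0) (e 1) p q
      (by linear_combination h0) (by linear_combination h1) (by linear_combination h2)
      (by linear_combination h3)
  · obtain ⟨c0, c1, c2, c3, c4⟩ := coeff_tracePoly_two p q
    simp only [c0, c1, c2, c3, c4] at h0 h1 h2 h3
    push_cast at h0 h1 h2 h3
    exact eq_zero_of_coeff_tracePoly_two_eq ⟨e 2, he⟩ (e 0) (e 1) p q
      (by linear_combination h0) (by linear_combination h1) (by linear_combination h2)
      (by linear_combination h3)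

theorem trace_ne_mul_pow {c p q w : ℤ} {i : ℕ} (hi : i = 1 ∨ i = 2) (hc : c = 1 ∨ c = 3)
    (hpq : IsCoprime p q) (hw : w ≠ 0) :
    (star ω ^ i * ⟨p, q⟩ ^ 5 : Order21).trace ≠ c * w ^ 5 := by
  intro h
  have hc0 : c ≠ 0 := by rcases hc with rfl | rfl <;> decide
  have hN := (norm_aeval_tracePoly hi p q).trans h
  have hx : Polynomial.aeval τ (tracePoly i p q) ≠ 0 := by
    rw [← Algebra.norm_ne_zero_iff (R := ℤ), hN]
    exact mul_ne_zero hc0 (pow_ne_zero 5 hw)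
  obtain ⟨n, e, y, hn, he, hxy⟩ := exists_mul_eq_prod_aeval_selmerPoly_mul_pow hx hc hw hN
    fun Q hQ hQ105 ↦ five_dvd_multiplicity_aeval_tracePoly (by omega) hc hpq hw h hQ hQ105
  obtain ⟨s, hs, hrec⟩ := exists_coeff_succ_eq_sum hn hxy
  exact not_isCoprime_of_coeff_tracePoly_eq hi he hs hrec hpq

/-- Elements which are fifth powers up to units and factors `3` and `7`. Since `3` and `7` remain
prime in `ℤ[φ]`, the notion is used verbatim in both `ℤ` and `ℤ[φ]`. -/
def IsFifthPowerUpTo21 {R : Type*} [CommRing R] (x : R) : Prop :=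
  ∃ (u : Rˣ) (e f : ℕ) (y : R), x = u * (3 ^ e * 7 ^ f) * y ^ 5

section UpTo21

variable {R : Type*} [CommRing R] {x y : R}

theorem isFifthPowerUpTo21_pow (y : R) : IsFifthPowerUpTo21 (y ^ 5) :=
  ⟨1, 0, 0, y, by simp⟩

theorem IsFifthPowerUpTo21.mul (hx : IsFifthPowerUpTo21 x) (hy : IsFifthPowerUpTo21 y) :
    IsFifthPowerUpTo21 (x * y) := by
  obtain ⟨u, e, f, z, rfl⟩ := hx
  obtain ⟨v, i, j, w, rfl⟩ := hy
  refine ⟨u * v, e + i, f + j, z * w, ?_⟩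
  rw [Units.val_mul]
  ring

theorem IsFifthPowerUpTo21.neg (hx : IsFifthPowerUpTo21 x) : IsFifthPowerUpTo21 (-x) := by
  obtain ⟨u, e, f, z, rfl⟩ := hx
  exact ⟨-u, e, f, z, by rw [Units.val_neg]; ring⟩

theorem IsFifthPowerUpTo21.intCast {n : ℤ} (hn : IsFifthPowerUpTo21 n) :
    IsFifthPowerUpTo21 (n : R) := by
  obtain ⟨u, e, f, z, rfl⟩ := hn
  refine ⟨Units.map (Int.castRingHom R) u, e, f, z, ?_⟩
  push_cast
  rfl

theorem IsFifthPowerUpTo21.of_mul [IsDomain R] [UniqueFactorizationMonoid R]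
    (h3 : Prime (3 : R)) (h7 : Prime (7 : R)) (h0 : x * y ≠ 0)
    (hxy : IsFifthPowerUpTo21 (x * y)) (hcop : IsCoprimeUpTo21 x y) : IsFifthPowerUpTo21 x := by
  obtain ⟨u, e, f, w, h⟩ := hxy
  have hw : w ≠ 0 := by
    rintro rfl
    exact h0 (by simp [h])
  obtain ⟨v, i, z, hz⟩ := exists_unit_mul_prod_pow_mul_pow ![(3 : R), 7] (n := 5)
    (left_ne_zero_of_mul h0) fun P hP hPg ↦ by
    have hP3 : ¬ P ∣ 3 := fun h ↦ hPg 0 (hP.associated_of_dvd h3 h)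
    have hP7 : ¬ P ∣ 7 := fun h ↦ hPg 1 (hP.associated_of_dvd h7 h)
    refine dvd_multiplicity_of_mul_eq_mul_pow hP h0 hw h (fun hd ↦ ?_) fun hx hy ↦ ?_
    · rcases hP.dvd_or_dvd (u.isUnit.dvd_mul_left.1 hd) with hd | hd
      · exact hP3 (hP.dvd_of_dvd_pow hd)
      · exact hP7 (hP.dvd_of_dvd_pow hd)
    · have h21 : (21 : R) = 3 * 7 := by norm_num
      exact (hP.dvd_or_dvd (h21 ▸ hcop P hP hx hy)).elim hP3 hP7
  exact ⟨v, i 0, i 1, z, by rwa [Fin.prod_univ_two] at hz⟩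

end UpTo21

/-! ### Descent over the golden ratio -/

/-- The ring of integers of `ℚ(√5)`, written `ℤ[φ]` with `φ = ω` the golden ratio; thus
`φ ^ 2 = φ + 1`. -/
abbrev Order5 : Type := QuadraticAlgebra ℤ 1 1

instance : IsDomain Order5 := isDomain_of_not_isSquare (by norm_num)

instance : IsPrincipalIdealRing Order5 :=
  isPrincipalIdealRing_of_abs_norm_lt (by norm_num)
    (exists_abs_norm_lt_of_abs_sq_sub_lt fun u t hu ht ↦ by
      have hu' : u ^ 2 ≤ (1 / 2) ^ 2 := sq_le_sq' (abs_le.1 hu).1 (abs_le.1 hu).2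
      have ht' : t ^ 2 ≤ (1 / 2) ^ 2 := sq_le_sq' (abs_le.1 ht).1 (abs_le.1 ht).2
      refine ⟨0, abs_lt.2 ⟨?_, ?_⟩⟩ <;> norm_num <;> nlinarith)

/-- The fundamental unit `φ = ω` of `ℤ[φ]`. -/
def goldenUnit : Order5ˣ where
  val := ω
  inv := ω - 1
  val_inv := by decide
  inv_val := by decide

theorem abs_sub_lt_abs_of_mul_pos {x y : ℤ} (hxy : 0 < x * y) (h : |x ^ 2 + x * y - y ^ 2| = 1) :
    |y - x| < |y| := by
  have hy : 0 < y ^ 2 := sq_pos_of_ne_zero (right_ne_zero_of_mul hxy.ne')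
  rw [← sq_lt_sq]
  by_contra! hle
  have hx : 2 * (x * y) ≤ x ^ 2 := by linarith
  have h2y : 2 * y ^ 2 ≤ x * y :=
    le_of_mul_le_mul_left (by linarith [mul_le_mul_of_nonneg_right hx hy.le]) hxy
  linarith [(abs_le.1 h.le).2]

theorem closure_goldenUnit : Subgroup.closure {-1, goldenUnit} = ⊤ := by
  refine subgroup_eq_top_of_exists_mul_lt (fun u ↦ u.val.re.natAbs + u.val.im.natAbs) ?_
  intro u hu
  have hφ : goldenUnit ∈ Subgroup.closure {-1, goldenUnit} := Subgroup.subset_closure (by simp)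
  have hnorm : |u.val.re ^ 2 + u.val.re * u.val.im - u.val.im ^ 2| = 1 := by
    convert Int.isUnit_iff_abs_eq.1 (isUnit_iff_norm_isUnit.1 u.isUnit) using 2
    rw [QuadraticAlgebra.norm_def]
    ring
  have hne : u.val.re * u.val.im ≠ 0 := hu ∘ mem_closure_of_re_mul_im_eq_zero rfl
  rcases hne.lt_or_gt with h | h
  · refine ⟨goldenUnit, hφ, ?_⟩
    have hval : (goldenUnit * u).val = ⟨u.val.im, u.val.re + u.val.im⟩ := by
      rw [Units.val_mul]
      ext <;> simp [goldenUnit]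
    simp only [hval]
    have hlt := abs_sub_lt_abs_of_mul_pos (x := u.val.im) (y := -u.val.re) (by linarith)
      (by rw [← abs_neg]; convert hnorm using 2; ring)
    rw [abs_neg, ← abs_neg, neg_sub, sub_neg_eq_add, add_comm] at hlt
    zify
    linarith
  · refine ⟨goldenUnit⁻¹, inv_mem hφ, ?_⟩
    have hval : (goldenUnit⁻¹ * u).val = ⟨u.val.im - u.val.re, u.val.re⟩ := by
      rw [Units.val_mul, ← Units.inv_eq_val_inv]
      ext <;> simp [goldenUnit, neg_add_eq_sub]
    simp only [hval]
    zify
    linarith [abs_sub_lt_abs_of_mul_pos h hnorm]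

theorem prime_natCast_order5 {l : ℕ} (hl : l.Prime)
    (h : ∀ x y : ZMod l, x ^ 2 + x * y - y ^ 2 = 0 → x = 0 ∧ y = 0) : Prime (l : Order5) := by
  have hdvd (z : Order5) (hz : (l : ℤ) ∣ z.norm) : (l : Order5) ∣ z := by
    rw [QuadraticAlgebra.norm_def, ← ZMod.intCast_zmod_eq_zero_iff_dvd] at hz
    push_cast at hz
    obtain ⟨hre, him⟩ := h z.re z.im (by linear_combination hz)
    rw [ZMod.intCast_zmod_eq_zero_iff_dvd] at hre him
    obtain ⟨x, hx⟩ := hre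
    obtain ⟨y, hy⟩ := him
    exact ⟨⟨x, y⟩, by ext <;> simp [hx, hy]⟩
  have hl' := Nat.prime_iff_prime_int.1 hl
  have hnorm : (l : Order5).norm = (l : ℤ) ^ 2 := by simp [QuadraticAlgebra.norm_def, sq]
  refine ⟨Nat.cast_ne_zero.2 hl.ne_zero, fun hu ↦ ?_, fun z w hzw ↦ ?_⟩
  · rw [isUnit_iff_norm_isUnit, hnorm] at hu
    exact hl'.not_isUnit ((isUnit_pow_iff two_ne_zero).1 hu)
  · obtain ⟨k, hk⟩ := hzw
    have hN : (l : ℤ) ∣ z.norm * w.norm := by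
      rw [← map_mul, hk, map_mul, hnorm, sq, mul_assoc]
      exact dvd_mul_right _ _
    exact (hl'.dvd_or_dvd hN).imp (hdvd z) (hdvd w)

theorem prime_three_order5 : Prime (3 : Order5) :=
  mod_cast prime_natCast_order5 Nat.prime_three (by decide)

theorem prime_seven_order5 : Prime (7 : Order5) :=
  mod_cast prime_natCast_order5 Nat.prime_seven (by decide)

/-- The element of `ℤ[φ]` whose norm is the quartic cofactor in `im (y ^ 5) = 5 * im y * _`. It is
the smaller solution produced by the descent, see `isDescentElement_descend`. -/
def descend (y : Order5) : Order5 := ⟨y.norm + 3 * y.im ^ 2, -y.im ^ 2⟩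

theorem im_pow_five (y : Order5) : (y ^ 5).im = 5 * y.im * (descend y).norm := by
  simp only [descend, QuadraticAlgebra.norm_def, pow_succ, pow_zero, one_mul, im_mul, re_mul]
  ring

theorem prime_five_int : Prime (5 : ℤ) := by norm_num

theorem five_dvd_re_of_five_dvd_im {u : Order5ˣ} {x : Order5} (hu : ¬ 5 ∣ u.val.im)
    (hx : 5 ∣ x.im) (hux : 5 ∣ (u * x).im) : 5 ∣ (u * x).re := by
  have h : 5 ∣ u.val.im * x.re := by
    have heq : u.val.im * x.re = (u * x).im - (u.val.re + u.val.im) * x.im := by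
      rw [im_mul]
      ring
    exact heq ▸ dvd_sub hux (hx.mul_left _)
  have hxre := (prime_five_int.dvd_or_dvd h).resolve_left hu
  rw [re_mul, one_mul]
  exact dvd_add (hxre.mul_left _) (hx.mul_left _)

theorem not_five_dvd_im_goldenUnit_zpow {i : ℤ} (hi : |i| ≤ 2) (h0 : i ≠ 0) :
    ¬ 5 ∣ (goldenUnit ^ i).val.im := by
  obtain ⟨h1, h2⟩ := abs_le.1 hi
  interval_cases i
  · decide
  · decide
  · exact absurd rfl h0
  · decide
  · decide

theorem dvd_re_of_dvd_norm {z : Order5} {l : ℤ} (hl : Prime l) (hN : l ∣ z.norm)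
    (him : l ∣ z.im) : l ∣ z.re := by
  refine hl.dvd_of_dvd_pow (n := 2) ?_
  convert dvd_sub hN (him.mul_right (z.re - z.im)) using 1
  rw [QuadraticAlgebra.norm_def]
  ring

theorem isCoprimeUpTo21_star {z : Order5} (hre : ¬ 5 ∣ z.re) (him : 5 ∣ z.im)
    (h0 : z.im ≠ 0) (hcop : IsCoprimeUpTo21 z.re z.im) : IsCoprimeUpTo21 z (star z) := by
  have hint : IsCoprimeUpTo21 z.norm (5 * z.im) := by
    intro l hl hN hl5
    rcases hl.dvd_or_dvd hl5 with h5 | h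
    · have h5N := ((hl.associated_of_dvd prime_five_int h5).dvd_iff_dvd_left).1 hN
      exact absurd (dvd_re_of_dvd_norm prime_five_int h5N him) hre
    · exact hcop l hl (dvd_re_of_dvd_norm hl hN h) h
  intro P hP hz hz'
  refine hint.intCast (mul_ne_zero (by decide) h0) P hP ?_ ?_
  · have hN : (z.norm : Order5) = z * star z := algebraMap_norm_eq_mul_star z
    exact hN ▸ hz.mul_right _
  · have h5 : ((5 * z.im : ℤ) : Order5) = (z - star z) * (ω - star ω) := by
      ext <;> simp <;> ring
    exact h5 ▸ (dvd_sub hz hz').mul_right _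

theorem exists_eq_smul_pow_five {z : Order5} (hre : ¬ 5 ∣ z.re) (him : 5 ∣ z.im)
    (h0 : z.im ≠ 0) (hcop : IsCoprimeUpTo21 z.re z.im) (hN : IsFifthPowerUpTo21 z.norm) :
    ∃ (d : ℤ) (y : Order5), (∀ l, Prime l → l ∣ d → l ∣ 21) ∧ z = d • y ^ 5 := by
  have hz : z ≠ 0 := by
    rintro rfl
    exact h0 rfl
  have hzN : IsFifthPowerUpTo21 (z * star z) := by
    rw [← algebraMap_norm_eq_mul_star]
    exact hN.intCast
  obtain ⟨u, e, f, y, hy⟩ := hzN.of_mul prime_three_order5 prime_seven_order5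
    (mul_ne_zero hz (star_ne_zero.2 hz)) (isCoprimeUpTo21_star hre him h0 hcop)
  obtain ⟨i, v, hi, rfl⟩ := exists_zpow_mul_pow_of_closure_eq_top (n := 5) neg_one_sq
    (by decide) closure_goldenUnit u
  have hzi : z = (goldenUnit ^ i).val * ((3 ^ e * 7 ^ f : ℤ) • (v * y) ^ 5) := by
    rw [hy, zsmul_eq_mul, Units.val_mul, Units.val_pow_eq_pow_val]
    push_cast
    ring
  rcases eq_or_ne i 0 with rfl | hi0
  · refine ⟨3 ^ e * 7 ^ f, v * y, fun l hl hd ↦ ?_, by simpa using hzi⟩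
    rcases hl.dvd_or_dvd hd with h | h
    · exact (hl.dvd_of_dvd_pow h).trans (by decide)
    · exact (hl.dvd_of_dvd_pow h).trans (by decide)
  · refine absurd ?_ hre
    rw [hzi] at him ⊢
    refine five_dvd_re_of_five_dvd_im (not_five_dvd_im_goldenUnit_zpow (by omega) hi0) ?_ him
    rw [im_smul, im_pow_five, mul_assoc, smul_eq_mul]
    exact (dvd_mul_right _ _).mul_left _

theorem norm_descend (y : Order5) :
    (descend y).norm = y.norm ^ 2 + 5 * y.norm * y.im ^ 2 + 5 * y.im ^ 4 := by
  rw [QuadraticAlgebra.norm_def (descend y), descend]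
  ring

theorem im_pow_four_le_norm_descend (y : Order5) : y.im ^ 4 ≤ 4 * (descend y).norm := by
  rw [norm_descend, QuadraticAlgebra.norm_def]
  nlinarith [sq_nonneg (y.re ^ 2 + y.re * y.im), sq_nonneg (y.im * (2 * y.re + y.im))]

theorem natAbs_im_descend_lt {d : ℤ} {y : Order5} (h : (d • y ^ 5).im ≠ 0) :
    (descend y).im.natAbs < (d • y ^ 5).im.natAbs := by
  rw [im_smul, im_pow_five, smul_eq_mul] at h ⊢
  obtain ⟨hd, hq, -⟩ : d ≠ 0 ∧ y.im ≠ 0 ∧ (descend y).norm ≠ 0 := by simpa using h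
  have hG := im_pow_four_le_norm_descend y
  have hq1 : 1 ≤ |y.im| := Int.one_le_abs hq
  have hG0 : 0 ≤ (descend y).norm := by linarith [Even.pow_nonneg (by decide : Even 4) y.im]
  have hlt : |y.im| ^ 2 < 5 * |y.im| * (descend y).norm := by
    have hpos : 0 < |y.im| ^ 2 := by positivity
    have hpow : |y.im| ^ 2 ≤ |y.im| * y.im ^ 4 := by
      rw [← (by decide : Even 4).pow_abs y.im, ← pow_succ']
      exact pow_le_pow_right₀ hq1 (by decide)
    linarith [mul_le_mul_of_nonneg_left hG (abs_nonneg y.im)]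
  rw [← Int.ofNat_lt, Int.natCast_natAbs, Int.natCast_natAbs]
  calc |(descend y).im| = |y.im| ^ 2 := by
        change |-y.im ^ 2| = _
        rw [abs_neg, abs_pow]
    _ < 5 * |y.im| * (descend y).norm := hlt
    _ ≤ |d| * (5 * |y.im| * (descend y).norm) :=
      le_mul_of_one_le_left (by positivity) (Int.one_le_abs hd)
    _ = |d * (5 * y.im * (descend y).norm)| := by
      rw [abs_mul, abs_mul, abs_mul, abs_of_nonneg hG0, abs_of_pos (by decide : (0 : ℤ) < 5)]

theorem IsCoprimeUpTo21.norm_im {d : ℤ} {y : Order5}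
    (h : IsCoprimeUpTo21 (d • y ^ 5).re (d • y ^ 5).im) : IsCoprimeUpTo21 y.norm y.im := by
  intro l hl hN hq
  have him : l ∣ (d • y ^ 5).im := by
    rw [im_smul, im_pow_five, smul_eq_mul]
    exact ((hq.mul_left 5).mul_right _).mul_left d
  refine h l hl (dvd_re_of_dvd_norm hl ?_ him) him
  rw [zsmul_eq_mul, map_mul, map_pow]
  exact (dvd_pow hN (by decide)).mul_left _

theorem IsCoprimeUpTo21.norm_descend_im {y : Order5} (h : IsCoprimeUpTo21 y.norm y.im) :
    IsCoprimeUpTo21 (descend y).norm y.im := by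
  intro l hl hN hq
  refine h l hl (hl.dvd_of_dvd_pow (n := 2) ?_) hq
  have heq : y.norm ^ 2 = (descend y).norm - y.im * (5 * y.norm * y.im + 5 * y.im ^ 3) := by
    rw [norm_descend]
    ring
  exact heq ▸ dvd_sub hN (hq.mul_right _)

theorem IsCoprimeUpTo21.re_im_descend {y : Order5} (h : IsCoprimeUpTo21 y.norm y.im) :
    IsCoprimeUpTo21 (descend y).re (descend y).im := by
  intro l hl hre him
  have hq : l ∣ y.im := hl.dvd_of_dvd_pow (dvd_neg.1 him)
  exact h l hl ((dvd_add_left ((dvd_pow hq two_ne_zero).mul_left 3)).1 hre) hq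

/-- The elements of `ℤ[φ]` to which the infinite descent applies; the point of the condition on
the norm is that `exists_eq_smul_pow_five` turns them into fifth powers. -/
structure IsDescentElement (z : Order5) : Prop where
  not_five_dvd_re : ¬ 5 ∣ z.re
  im_ne_zero : z.im ≠ 0
  isCoprimeUpTo21 : IsCoprimeUpTo21 z.re z.im
  isFifthPowerUpTo21_norm : IsFifthPowerUpTo21 z.norm
  exists_im_eq : ∃ b, z.im = 25 * b ∧ IsFifthPowerUpTo21 b

theorem IsDescentElement.five_dvd_im {z : Order5} (h : IsDescentElement z) : 5 ∣ z.im := by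
  obtain ⟨b, hb, -⟩ := h.exists_im_eq
  exact hb ▸ ⟨5 * b, by ring⟩

theorem five_dvd_im_of_isDescentElement {d : ℤ} {y : Order5} (h : IsDescentElement (d • y ^ 5)) :
    5 ∣ y.im ∧ ¬ 5 ∣ y.norm := by
  have hd : ¬ 5 ∣ d := fun hd ↦ h.not_five_dvd_re (hd.mul_right _)
  have hN : ¬ 5 ∣ y.norm := by
    refine fun hN ↦ h.not_five_dvd_re (dvd_re_of_dvd_norm prime_five_int ?_ h.five_dvd_im)
    rw [zsmul_eq_mul, map_mul, map_pow]
    exact (dvd_pow hN (by decide)).mul_left _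
  have hG : ¬ 5 ∣ (descend y).norm := by
    refine fun hG ↦ hN (prime_five_int.dvd_of_dvd_pow (n := 2) ?_)
    have heq : y.norm ^ 2 = (descend y).norm - 5 * (y.norm * y.im ^ 2 + y.im ^ 4) := by
      rw [norm_descend]
      ring
    exact heq ▸ dvd_sub hG (dvd_mul_right _ _)
  refine ⟨?_, hN⟩
  obtain ⟨b, hb, -⟩ := h.exists_im_eq
  rw [im_smul, im_pow_five, smul_eq_mul] at hb
  have h5 : 5 ∣ d * (y.im * (descend y).norm) := ⟨b, by linarith⟩
  have h5' := (prime_five_int.dvd_or_dvd h5).resolve_left hd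
  exact (prime_five_int.dvd_or_dvd h5').resolve_right hG

theorem isDescentElement_descend {d : ℤ} {y : Order5} (hd : ∀ l, Prime l → l ∣ d → l ∣ 21)
    (h : IsDescentElement (d • y ^ 5)) : IsDescentElement (descend y) := by
  have hcop := h.isCoprimeUpTo21.norm_im
  obtain ⟨⟨r, hr⟩, h5N⟩ := five_dvd_im_of_isDescentElement h
  obtain ⟨b, hb, hbF⟩ := h.exists_im_eq
  have h0 := h.im_ne_zero
  rw [hb] at h0
  rw [im_smul, im_pow_five, smul_eq_mul, hr] at hb
  have hb' : r * (d * (descend y).norm) = b := by linarith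
  have hb'' : (descend y).norm * (d * r) = b := by linarith
  have h3 : Prime (3 : ℤ) := Int.prime_three
  have h7 : Prime (7 : ℤ) := by norm_num
  have hb0 : b ≠ 0 := right_ne_zero_of_mul h0
  have hrF : IsFifthPowerUpTo21 r := by
    refine .of_mul h3 h7 (hb' ▸ hb0) (hb' ▸ hbF) fun l hl hlr hlG ↦ ?_
    exact (hl.dvd_or_dvd hlG).elim (hd l hl)
      fun h ↦ hcop.norm_descend_im l hl h (hr ▸ hlr.mul_left 5)
  refine ⟨fun h5 ↦ h5N ?_, ?_, hcop.re_im_descend, ?_, -r ^ 2, ?_, ?_⟩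
  · exact (dvd_add_left (hr ▸ ⟨3 * (5 * r ^ 2), by ring⟩)).1 h5
  · have hr0 : r ≠ 0 := by
      rintro rfl
      exact hb0 (by rw [← hb', zero_mul])
    simp [descend, hr, hr0]
  · refine .of_mul h3 h7 (hb'' ▸ hb0) (hb'' ▸ hbF) fun l hl hlG hlr ↦ ?_
    exact (hl.dvd_or_dvd hlr).elim (hd l hl)
      fun h ↦ hcop.norm_descend_im l hl hlG (hr ▸ h.mul_left 5)
  · simp only [descend, hr]
    ring
  · rw [sq]
    exact (hrF.mul hrF).neg

theorem not_isDescentElement (z : Order5) : ¬ IsDescentElement z := by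
  induction hn : z.im.natAbs using Nat.strong_induction_on generalizing z with
  | h n ih =>
    intro h
    obtain ⟨d, y, hd, rfl⟩ := exists_eq_smul_pow_five h.not_five_dvd_re h.five_dvd_im
      h.im_ne_zero h.isCoprimeUpTo21 h.isFifthPowerUpTo21_norm
    exact ih _ (hn ▸ natAbs_im_descend_lt h.im_ne_zero) _ rfl (isDescentElement_descend hd h)

/-! ### The trace of a fifth power -/

/-- The element of `ℤ[φ]` whose norm is `(x ^ 5).trace / x.trace`. -/
def goldenCofactor (x : Order21) : Order5 := ⟨x.trace ^ 2 - 2 * x.norm, -x.norm⟩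

theorem trace_pow_five (x : Order21) : (x ^ 5).trace = x.trace * (goldenCofactor x).norm := by
  simp only [goldenCofactor, QuadraticAlgebra.trace_def, QuadraticAlgebra.norm_def, pow_succ,
    pow_zero, one_mul, im_mul, re_mul]
  ring

theorem norm_goldenCofactor (x : Order21) :
    (goldenCofactor x).norm = x.trace ^ 4 - 5 * x.trace ^ 2 * x.norm + 5 * x.norm ^ 2 := by
  rw [QuadraticAlgebra.norm_def (goldenCofactor x), goldenCofactor]
  ring

theorem trace_sq_sub_four_mul_norm (x : Order21) : x.trace ^ 2 - 4 * x.norm = 21 * x.im ^ 2 := by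
  rw [QuadraticAlgebra.trace_def, QuadraticAlgebra.norm_def]
  ring

theorem isCoprimeUpTo21_trace_norm {p q : ℤ} (hpq : IsCoprime p q) :
    IsCoprimeUpTo21 (⟨p, q⟩ : Order21).trace (⟨p, q⟩ : Order21).norm := by
  intro l hl ha hN
  refine isCoprimeUpTo21_norm_trace hpq 0 l hl hN ?_
  rw [pow_zero, one_mul, trace_pow_five]
  exact ha.mul_right _

theorem isFifthPowerUpTo21_mul_pow {c : ℤ} (hc : c = 1 ∨ c = 3) (w : ℤ) :
    IsFifthPowerUpTo21 (c * w ^ 5) := by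
  rcases hc with rfl | rfl
  · exact ⟨1, 0, 0, w, by simp⟩
  · exact ⟨1, 1, 0, w, by simp⟩

/-- The element of `ℤ[φ]` whose norm is `(x ^ 5).trace / (25 * s)` for `x : ℤ[ε]` of norm `N` and
trace `5 * s`. -/
def ramifiedCofactor (s N : ℤ) : Order5 := ⟨N - 15 * s ^ 2, 5 * s ^ 2⟩

theorem norm_ramifiedCofactor (s N : ℤ) :
    (ramifiedCofactor s N).norm = N ^ 2 - 25 * s ^ 2 * N + 125 * s ^ 4 := by
  rw [QuadraticAlgebra.norm_def, ramifiedCofactor]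
  ring

theorem trace_pow_five_of_trace_eq {x : Order21} {s : ℤ} (h : x.trace = 5 * s) :
    (x ^ 5).trace = 25 * (s * (ramifiedCofactor s x.norm).norm) := by
  rw [trace_pow_five, norm_goldenCofactor, norm_ramifiedCofactor, h]
  ring

theorem isDescentElement_ramifiedCofactor {s N r : ℤ} (hs : s = 125 * r) (hr0 : r ≠ 0)
    (hN : ¬ 5 ∣ N) (hcop : IsCoprimeUpTo21 (5 * s) N) (hr : IsFifthPowerUpTo21 r)
    (hz : IsFifthPowerUpTo21 (ramifiedCofactor s N).norm) :
    IsDescentElement (ramifiedCofactor s N) := by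
  refine ⟨fun h ↦ hN ?_, ?_, fun l hl hre him ↦ ?_, hz, 5 ^ 5 * r ^ 2, ?_, ?_⟩
  · exact (dvd_sub_left ⟨3 * s ^ 2, by ring⟩).1 h
  · simp [ramifiedCofactor, hs, hr0]
  · have hlN : l ∣ N := by
      have heq : N = (ramifiedCofactor s N).re + 3 * (ramifiedCofactor s N).im := by
        rw [ramifiedCofactor]
        ring
      exact heq ▸ dvd_add hre (him.mul_left 3)
    refine hcop l hl ?_ hlN
    exact (hl.dvd_or_dvd him).elim (·.mul_right s) fun h ↦ (hl.dvd_of_dvd_pow h).mul_left 5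
  · rw [ramifiedCofactor, hs]
    ring
  · rw [sq]
    exact (isFifthPowerUpTo21_pow 5).mul (hr.mul hr)

theorem exists_mul_norm_ramifiedCofactor {c s N w : ℤ} (hc : c = 1 ∨ c = 3) (hN : ¬ 5 ∣ N)
    (h : 25 * (s * (ramifiedCofactor s N).norm) = c * w ^ 5) :
    ∃ r v : ℤ, s = 125 * r ∧ r * (ramifiedCofactor s N).norm = c * v ^ 5 := by
  have hc5 : ¬ 5 ∣ c := by rcases hc with rfl | rfl <;> decide
  have hw : 5 ∣ c * w ^ 5 := h ▸ ⟨5 * (s * (ramifiedCofactor s N).norm), by ring⟩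
  obtain ⟨v, rfl⟩ := prime_five_int.dvd_of_dvd_pow ((prime_five_int.dvd_or_dvd hw).resolve_left hc5)
  have hH : ¬ 5 ∣ (ramifiedCofactor s N).norm := by
    refine fun h5 ↦ hN (prime_five_int.dvd_of_dvd_pow (n := 2) ?_)
    have heq : N ^ 2 = (ramifiedCofactor s N).norm - 5 * (25 * s ^ 4 - 5 * s ^ 2 * N) := by
      rw [norm_ramifiedCofactor]
      ring
    exact heq ▸ dvd_sub h5 (dvd_mul_right _ _)
  have hsH : s * (ramifiedCofactor s N).norm = 5 ^ 3 * (c * v ^ 5) := by linarith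
  obtain ⟨r, hr⟩ := prime_five_int.pow_dvd_of_dvd_mul_right 3 hH ⟨_, hsH⟩
  refine ⟨r, v, hr, mul_left_cancel₀ (by decide : (5 ^ 3 : ℤ) ≠ 0) ?_⟩
  rw [← hsH, ← mul_assoc, ← hr]

theorem not_five_dvd_trace {c w : ℤ} {x : Order21} (hc : c = 1 ∨ c = 3) (hw : w ≠ 0)
    (hcop : IsCoprimeUpTo21 x.trace x.norm) (h : (x ^ 5).trace = c * w ^ 5) : ¬ 5 ∣ x.trace := by
  intro h5
  have hN : ¬ 5 ∣ x.norm := fun hN ↦ absurd (hcop 5 prime_five_int h5 hN) (by decide)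
  obtain ⟨s, hs⟩ := h5
  rw [trace_pow_five_of_trace_eq hs] at h
  rw [hs] at hcop
  generalize x.norm = N at hcop hN h
  have hsH : 25 * (s * (ramifiedCofactor s N).norm) ≠ 0 :=
    h ▸ mul_ne_zero (by omega) (pow_ne_zero 5 hw)
  obtain ⟨hs0, hH0⟩ := mul_ne_zero_iff.1 (right_ne_zero_of_mul hsH)
  obtain ⟨r, v, hsr, hv⟩ := exists_mul_norm_ramifiedCofactor hc hN h
  have hr0 : r ≠ 0 := fun hr ↦ hs0 (by rw [hsr, hr, mul_zero])
  have hF : IsFifthPowerUpTo21 (r * (ramifiedCofactor s N).norm) :=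
    hv ▸ isFifthPowerUpTo21_mul_pow hc v
  have hrH : IsCoprimeUpTo21 r (ramifiedCofactor s N).norm := by
    intro l hl hlr hlH
    have hls : l ∣ s := hsr ▸ hlr.mul_left 125
    refine hcop l hl (hls.mul_left 5) (hl.dvd_of_dvd_pow (n := 2) ?_)
    have heq : N ^ 2 = (ramifiedCofactor s N).norm - s * (125 * s ^ 3 - 25 * s * N) := by
      rw [norm_ramifiedCofactor]
      ring
    exact heq ▸ dvd_sub hlH (hls.mul_right _)
  have h7 : Prime (7 : ℤ) := by norm_num
  refine not_isDescentElement _ (isDescentElement_ramifiedCofactor hsr hr0 hN hcop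
    (.of_mul Int.prime_three h7 (mul_ne_zero hr0 hH0) hF hrH) ?_)
  rw [mul_comm] at hF
  exact .of_mul Int.prime_three h7 (mul_ne_zero hH0 hr0) hF hrH.symm

theorem eq_zero_of_zmod_five_of_one : ∀ a N q : ZMod 5, a ≠ 0 → a ^ 2 - 4 * N = 21 * q ^ 2 →
    a ^ 3 * N - a * N ^ 2 = 0 → N = 0 := by
  decide

theorem ne_of_zmod_five_of_three : ∀ w N q : ZMod 5, 3 * w ≠ 0 →
    (3 * w) ^ 2 - 4 * N = 21 * q ^ 2 → (3 * w) ^ 3 * N - 3 * w * N ^ 2 ≠ 48 * w ^ 5 := by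
  decide

theorem five_dvd_norm {c w : ℤ} {x : Order21} (hc : c = 1 ∨ c = 3)
    (h : (x ^ 5).trace = c * w ^ 5) (h5 : ¬ 5 ∣ x.trace) : 5 ∣ x.norm ∧ c = 1 := by
  rw [trace_pow_five, norm_goldenCofactor] at h
  have hsq := congrArg (Int.cast : ℤ → ZMod 5) (trace_sq_sub_four_mul_norm x)
  generalize x.trace = a, x.norm = N at *
  have hmod (n : ℤ) : 5 ∣ n ↔ (n : ZMod 5) = 0 := (ZMod.intCast_zmod_eq_zero_iff_dvd n 5).symm
  have hfermat : (a : ZMod 5) = c * w := by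
    have hpow : ∀ r : ZMod 5, r ^ 5 = r := by decide
    rw [← hpow a, ← hpow w]
    have h' := congrArg (Int.cast : ℤ → ZMod 5) h
    have h0 : (5 : ZMod 5) = 0 := rfl
    push_cast at h'
    linear_combination h' + (a ^ 3 * N - a * N ^ 2 : ZMod 5) * h0
  -- As `a ≡ c * w` modulo `5`, the fifth powers agree modulo `25`.
  obtain ⟨z, hz⟩ : (5 ^ (1 + 1) : ℤ) ∣ a ^ 5 ^ 1 - (c * w) ^ 5 ^ 1 :=
    dvd_sub_pow_of_dvd_sub (p := 5)
      (by exact_mod_cast (hmod _).2 (by push_cast; rw [hfermat, sub_self])) 1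
  rw [hmod] at h5 ⊢
  push_cast at hsq
  rcases hc with rfl | rfl
  · have hN : a ^ 3 * N - a * N ^ 2 = 5 * z :=
      mul_left_cancel₀ prime_five_int.ne_zero (by linear_combination hz - h)
    have hN' : (a : ZMod 5) ^ 3 * N - a * N ^ 2 = 0 := mod_cast (hmod _).1 ⟨z, hN⟩
    exact ⟨eq_zero_of_zmod_five_of_one _ _ _ h5 hsq hN', rfl⟩
  · have hN : a ^ 3 * N - a * N ^ 2 - 48 * w ^ 5 = 5 * z :=
      mul_left_cancel₀ prime_five_int.ne_zero (by linear_combination hz - h)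
    have hN' : (a : ZMod 5) ^ 3 * N - a * N ^ 2 - 48 * w ^ 5 = 0 := mod_cast (hmod _).1 ⟨z, hN⟩
    push_cast at hfermat
    rw [hfermat] at h5 hsq hN'
    exact absurd (sub_eq_zero.1 hN') (ne_of_zmod_five_of_three _ _ _ h5 hsq)

theorem pow_ten_zmod_eleven : ∀ r : ZMod 11, r ^ 10 = 0 ∨ r ^ 10 = 1 := by
  decide

theorem im_pow_five_zmod_eleven_eq_zero : ∀ d p q : ZMod 11, d ≠ 0 →
    let y : QuadraticAlgebra (ZMod 11) 1 1 := ⟨p, q⟩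
    d ^ 5 * ((y ^ 5).re - 2 * (y ^ 5).im) = 0 ∨ d ^ 5 * ((y ^ 5).re - 2 * (y ^ 5).im) = 1 →
      (y ^ 5).im = 0 := by
  decide +kernel

theorem eleven_dvd_im_pow_five {d r : ℤ} {y : Order5} (hd : ¬ 11 ∣ d)
    (h : r ^ 10 = d ^ 5 * ((y ^ 5).re - 2 * (y ^ 5).im)) : 11 ∣ (y ^ 5).im := by
  rw [← Nat.cast_ofNat, ← ZMod.intCast_zmod_eq_zero_iff_dvd] at hd ⊢
  have hz := congrArg (Int.cast : ℤ → ZMod 11) h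
  have hr := pow_ten_zmod_eleven r
  have hy := im_pow_five_zmod_eleven_eq_zero d y.re y.im hd
  simp only [pow_succ, pow_zero, one_mul, im_mul, re_mul] at hz hr hy ⊢
  push_cast at hz hr hy ⊢
  rw [hz] at hr
  exact hy hr

theorem eleven_dvd_trace {x : Order21} (h : 11 ∣ x.norm) : 11 ∣ x.trace := by
  have hres : ∀ a q : ZMod 11, a ^ 2 = 21 * q ^ 2 → a = 0 := by decide
  have hsq := congrArg (Int.cast : ℤ → ZMod 11) (trace_sq_sub_four_mul_norm x)
  rw [← Nat.cast_ofNat, ← ZMod.intCast_zmod_eq_zero_iff_dvd] at h ⊢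
  push_cast at hsq
  exact hres _ x.im (by rw [← hsq, h, mul_zero, sub_zero])

theorem exists_goldenCofactor_eq_smul_pow_five {w : ℤ} {x : Order21} (hw : w ≠ 0)
    (hcop : IsCoprimeUpTo21 x.trace x.norm) (h : (x ^ 5).trace = w ^ 5) (ha : ¬ 5 ∣ x.trace)
    (hN : 5 ∣ x.norm) (hN0 : x.norm ≠ 0) :
    ∃ (d : ℤ) (y : Order5), (∀ l, Prime l → l ∣ d → l ∣ 21) ∧ goldenCofactor x = d • y ^ 5 := by
  rw [trace_pow_five, mul_comm] at h
  have hcop' : IsCoprimeUpTo21 (goldenCofactor x).norm x.trace := by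
    intro l hl hM hla
    have h5 : l ∣ 5 * x.norm ^ 2 := by
      have heq : 5 * x.norm ^ 2 = (goldenCofactor x).norm -
          x.trace * (x.trace ^ 3 - 5 * x.trace * x.norm) := by
        rw [norm_goldenCofactor]
        ring
      exact heq ▸ dvd_sub hM (hla.mul_right _)
    rcases hl.dvd_or_dvd h5 with h5 | hlN
    · exact absurd ((hl.associated_of_dvd prime_five_int h5).dvd_iff_dvd_left.1 hla) ha
    · exact hcop l hl hla (hl.dvd_of_dvd_pow hlN)
  refine exists_eq_smul_pow_five (fun hre ↦ ha ?_) (hN.neg_right) (neg_ne_zero.2 hN0)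
    (fun l hl hre him ↦ ?_) (.of_mul Int.prime_three (by norm_num) (h ▸ pow_ne_zero 5 hw)
      (h ▸ isFifthPowerUpTo21_pow w) hcop')
  · exact prime_five_int.dvd_of_dvd_pow ((dvd_sub_left (hN.mul_left 2)).1 hre)
  · have hlN : l ∣ x.norm := dvd_neg.1 him
    exact hcop l hl (hl.dvd_of_dvd_pow ((dvd_sub_left (hlN.mul_left 2)).1 hre)) hlN

theorem eleven_dvd_norm {w : ℤ} {x : Order21} (hw : w ≠ 0)
    (hcop : IsCoprimeUpTo21 x.trace x.norm) (h : (x ^ 5).trace = w ^ 5) (ha : ¬ 5 ∣ x.trace)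
    (hN : 5 ∣ x.norm) : 11 ∣ x.norm := by
  rcases eq_or_ne x.norm 0 with hN0 | hN0
  · exact hN0 ▸ dvd_zero 11
  obtain ⟨d, y, hd, hy⟩ := exists_goldenCofactor_eq_smul_pow_five hw hcop h ha hN hN0
  have hd11 : ¬ 11 ∣ d := fun h11 ↦ absurd (hd 11 (by norm_num) h11) (by decide)
  have hre : x.trace ^ 2 - 2 * x.norm = d * (y ^ 5).re := congrArg re hy
  have him : -x.norm = d * (y ^ 5).im := congrArg im hy
  have hM : w ^ 5 = x.trace * d ^ 2 * y.norm ^ 5 := by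
    rw [← h, trace_pow_five, hy, zsmul_eq_mul, map_mul, map_pow, QuadraticAlgebra.norm_intCast,
      Int.cast_id]
    ring
  obtain ⟨r, rfl⟩ := (Int.pow_dvd_pow_iff (by decide : 5 ≠ 0)).1 ⟨_, hM.trans (mul_comm _ _)⟩
  have hr : r ^ 5 = x.trace * d ^ 2 :=
    mul_left_cancel₀ (pow_ne_zero 5 (left_ne_zero_of_mul hw)) (by linear_combination hM)
  have h11 : 11 ∣ (y ^ 5).im := by
    refine eleven_dvd_im_pow_five hd11 (r := r) ?_
    calc r ^ 10 = (x.trace * d ^ 2) ^ 2 := by rw [← hr, ← pow_mul]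
      _ = d ^ 5 * ((y ^ 5).re - 2 * (y ^ 5).im) := by linear_combination d ^ 4 * (hre - 2 * him)
  exact (dvd_neg (α := ℤ)).1 (him ▸ h11.mul_left d)

theorem trace_pow_five_ne {c p q w : ℤ} (hc : c = 1 ∨ c = 3) (hpq : IsCoprime p q) (hw : w ≠ 0) :
    (⟨p, q⟩ ^ 5 : Order21).trace ≠ c * w ^ 5 := by
  intro h
  have hcop := isCoprimeUpTo21_trace_norm hpq
  have ha := not_five_dvd_trace hc hw hcop h
  obtain ⟨hN, rfl⟩ := five_dvd_norm hc h ha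
  rw [one_mul] at h
  have h11 := eleven_dvd_norm hw hcop h ha hN
  exact absurd (hcop 11 (by norm_num) (eleven_dvd_trace h11) h11) (by decide)

theorem not_rat_point {c : ℤ} (hc : c = 1 ∨ c = 3) (x t : ℚ) : 21 * t ^ 2 ≠ 4 * x ^ 5 + c ^ 2 := by
  intro h
  obtain ⟨i, p, q, w, hi, hpq, hw, htrace⟩ := exists_trace_eq_of_rat_point hc h
  rcases i.eq_zero_or_pos with rfl | hi0
  · rw [pow_zero, one_mul] at htrace
    exact trace_pow_five_ne hc hpq hw htrace
  · exact trace_ne_mul_pow (by omega) hc hpq hw htrace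

theorem no_rational_points_genus2_curves :
    (¬ ∃ x y : ℚ, y ^ 2 = 84 * x ^ 5 + 21) ∧
    (¬ ∃ x y : ℚ, y ^ 2 = 28 * x ^ 5 + 15309) := by
  constructor
  · rintro ⟨x, y, h⟩
    exact not_rat_point (.inl rfl) x (y / 21) (by push_cast; linear_combination h / 21)
  · rintro ⟨x, y, h⟩
    exact not_rat_point (.inr rfl) (x / 3) (y / 189)
      (by push_cast; linear_combination h * 21 / 189 ^ 2)
end

section
/- Let p be a prime with p ≡ 5 (mod 6). Then there are no odd integers α, β, v with gcd(α, v) = 1 and 3 ∤ α satisfying α^{2p} − 4β^p = 21v^2. -/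
/-!
Put `D = α² - β`, a divisor of `α ^ (2 * p) - β ^ p`. The equation reads
`4 * (α ^ (2 * p) - β ^ p) = 3 * (α ^ (2 * p) + 7 * v ^ 2)`, so `D > 0`, and Fermat's little theorem
modulo `3` and `7` gives `D = 3 * n` with `n ≡ -α² (mod 7)`. As `7 ∤ α`, `n` is a nonresidue modulo
`7`. But `n` divides `(α ^ p) ^ 2 + 7 * v ^ 2`, and by quadratic reciprocity every positive divisor
of a value `x ^ 2 + 7 * y ^ 2` with `x` prime to `7 * y` is a residue modulo `7`.
-/

open scoped NumberTheorySymbols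

theorem jacobiSym_neg_natCast_of_mod_four_eq_three {q m : ℕ} (hq : q % 4 = 3) (hm : Odd m) :
    J(-q | m) = J(m | q) := by
  rw [jacobiSym.neg _ hm]
  rcases Nat.odd_mod_four_iff.mp (Nat.odd_iff.mp hm) with hm4 | hm4
  · rw [ZMod.χ₄_nat_one_mod_four hm4, one_mul, jacobiSym.quadratic_reciprocity_one_mod_four hm4
      (Nat.odd_iff.mpr (Nat.odd_of_mod_four_eq_three hq))]
  · rw [ZMod.χ₄_nat_three_mod_four hm4, neg_one_mul,
      jacobiSym.quadratic_reciprocity_three_mod_four hm4 hq]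

theorem jacobiSym_two_of_mod_eight_eq_seven {q : ℕ} (hq : q % 8 = 7) : J(2 | q) = 1 := by
  rw [jacobiSym.at_two (Nat.odd_iff.mpr (by lia)), ZMod.χ₈_nat_mod_eight, hq]
  rfl

theorem jacobiSym_neg_eq_one_of_dvd_sq_add_mul_sq {m : ℕ} {a x y : ℤ}
    (hxy : IsCoprime x (a * y)) (hdvd : (m : ℤ) ∣ x ^ 2 + a * y ^ 2) : J(-a | m) = 1 := by
  have hx : IsCoprime x m := by
    refine .of_isCoprime_of_dvd_right ?_ hdvd
    rw [show x ^ 2 + a * y ^ 2 = a * y * y + x * x by ring]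
    exact (hxy.mul_right hxy.of_mul_right_right).add_mul_left_right x
  have hy : IsCoprime y m := by
    refine .of_isCoprime_of_dvd_right ?_ hdvd
    rw [show x ^ 2 + a * y ^ 2 = x ^ 2 + y * (a * y) by ring]
    exact hxy.of_mul_right_right.symm.pow_right.add_mul_left_right (a * y)
  calc J(-a | m) = J(-a * y ^ 2 | m) := by
        rw [jacobiSym.mul_left, jacobiSym.sq_one' (Int.isCoprime_iff_gcd_eq_one.mp hy), mul_one]
    _ = J(x ^ 2 | m) := jacobiSym.mod_left' <| Int.modEq_iff_dvd.mpr <| by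
        convert hdvd using 1
        ring
    _ = 1 := jacobiSym.sq_one' (Int.isCoprime_iff_gcd_eq_one.mp hx)

theorem jacobiSym_natCast_eq_one_of_dvd_sq_add_mul_sq {q n : ℕ} (hq : q % 8 = 7) (hn : n ≠ 0)
    {x y : ℤ} (hxy : IsCoprime x (q * y)) (hdvd : (n : ℤ) ∣ x ^ 2 + q * y ^ 2) :
    J(n | q) = 1 := by
  obtain ⟨e, m, hm, rfl⟩ := Nat.exists_eq_two_pow_mul_odd hn
  push_cast at hdvd ⊢
  rw [jacobiSym.mul_left, jacobiSym.pow_left, jacobiSym_two_of_mod_eight_eq_seven hq, one_pow,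
    one_mul, ← jacobiSym_neg_natCast_of_mod_four_eq_three (by lia) hm]
  exact jacobiSym_neg_eq_one_of_dvd_sq_add_mul_sq hxy (dvd_of_mul_left_dvd hdvd)

theorem jacobiSym_eq_neg_one_of_dvd_add_sq {q : ℕ} (hq : q % 4 = 3) {n x : ℤ}
    (hx : IsCoprime x q) (h : (q : ℤ) ∣ n + x ^ 2) : J(n | q) = -1 := by
  calc J(n | q) = J(-x ^ 2 | q) := jacobiSym.mod_left' <| (Int.modEq_iff_dvd.mpr <| by
        simpa [add_comm] using h).symm
    _ = -1 := by
        rw [jacobiSym.neg _ (Nat.odd_iff.mpr (Nat.odd_of_mod_four_eq_three hq)),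
          ZMod.χ₄_nat_three_mod_four hq, jacobiSym.sq_one' (Int.isCoprime_iff_gcd_eq_one.mp hx),
          mul_one]

theorem three_dvd_sub_of_dvd_pow_sub_four_mul_pow {p : ℕ} (hp : Odd p) {a b : ℤ}
    (h : 3 ∣ a ^ p - 4 * b ^ p) : 3 ∣ a - b := by
  have fermat (x : ℤ) : x ^ p ≡ x [ZMOD 3] := by
    simpa using Int.ModEq.pow_eq_pow Nat.prime_three (hp.tsub_odd odd_one).two_dvd hp.pos one_pos x
  have ha := (fermat a).dvd
  have hb := (fermat b).dvd
  lia

theorem seven_dvd_sub_of_dvd_pow_sub_four_mul_pow {p : ℕ} (hp : p % 6 = 5) {a b : ℤ}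
    (h : 7 ∣ a ^ p - 4 * b ^ p) : 7 ∣ b - 4 * a := by
  have fermat (x : ℤ) : (x ^ p) ^ 5 ≡ x [ZMOD 7] := by
    simpa [pow_mul] using
      Int.ModEq.pow_eq_pow (x := p * 5) (y := 1) Nat.prime_seven (by lia) (by lia) one_pos x
  have hab : a ≡ 4 ^ 5 * b [ZMOD 7] := calc
    a ≡ (a ^ p) ^ 5 [ZMOD 7] := (fermat a).symm
    _ ≡ (4 * b ^ p) ^ 5 [ZMOD 7] := (Int.modEq_iff_dvd.mpr h).symm.pow 5
    _ = 4 ^ 5 * (b ^ p) ^ 5 := mul_pow ..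
    _ ≡ 4 ^ 5 * b [ZMOD 7] := (fermat b).mul_left _
  have := hab.dvd
  lia

section

variable {p : ℕ} {α β v : ℤ}

theorem isCoprime_seven_of_pow_sub_four_mul_pow_eq (hp : 2 ≤ p) (hαv : IsCoprime α v)
    (hβ : 7 ∣ β - 4 * α ^ 2) (h : α ^ (2 * p) - 4 * β ^ p = 21 * v ^ 2) : IsCoprime α 7 := by
  have prime_seven : Prime (7 : ℤ) := Nat.prime_iff_prime_int.mp Nat.prime_seven
  refine (prime_seven.coprime_iff_not_dvd.mpr fun hα7 ↦ ?_).symm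
  have hβ7 : 7 ∣ β := (dvd_sub_left (dvd_mul_of_dvd_right (dvd_pow hα7 two_ne_zero) 4)).mp hβ
  have hαp : 7 ^ 2 ∣ α ^ (2 * p) := pow_dvd_pow_of_dvd_of_le hα7 (by lia)
  have hβp : 7 ^ 2 ∣ β ^ p := pow_dvd_pow_of_dvd_of_le hβ7 hp
  have hv7 : 7 ∣ v := prime_seven.dvd_of_dvd_pow (n := 2) (by lia)
  exact prime_seven.not_isUnit (hαv.isUnit_of_dvd' hα7 hv7)

theorem sub_pos_of_pow_sub_four_mul_pow_eq (hp : Odd p) (hαv : IsCoprime α v)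
    (h : α ^ (2 * p) - 4 * β ^ p = 21 * v ^ 2) : 0 < α ^ 2 - β := by
  have hsum : 0 < α ^ (2 * p) + 7 * v ^ 2 := by
    rw [pow_mul']
    rcases hαv.ne_zero_or_ne_zero with hα | hv <;> positivity
  have hpow : β ^ p < (α ^ 2) ^ p := by
    rw [← pow_mul]
    linarith
  exact sub_pos.mpr (hp.pow_lt_pow.mp hpow)

end

theorem no_solutions_BS1_p_5_mod_6_general {p : ℕ} (hp : p % 6 = 5) {α β v : ℤ}
    (hαv : IsCoprime α v) : α ^ (2 * p) - 4 * β ^ p ≠ 21 * v ^ 2 := by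
  intro h
  have hodd : Odd p := Nat.odd_iff.mpr (by lia)
  have h3 : 3 ∣ α ^ 2 - β :=
    three_dvd_sub_of_dvd_pow_sub_four_mul_pow hodd ⟨7 * v ^ 2, by rw [← pow_mul, h]; ring⟩
  have h7 : 7 ∣ β - 4 * α ^ 2 :=
    seven_dvd_sub_of_dvd_pow_sub_four_mul_pow hp ⟨3 * v ^ 2, by rw [← pow_mul, h]; ring⟩
  have hα7 : IsCoprime α 7 := isCoprime_seven_of_pow_sub_four_mul_pow_eq (by lia) hαv h7 h
  have hpos : 0 < α ^ 2 - β := sub_pos_of_pow_sub_four_mul_pow_eq hodd hαv h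
  obtain ⟨n, hn⟩ : ∃ n : ℕ, α ^ 2 - β = 3 * n := ⟨((α ^ 2 - β) / 3).toNat, by lia⟩
  have hndvd : (n : ℤ) ∣ (α ^ p) ^ 2 + (7 : ℕ) * v ^ 2 := by
    obtain ⟨k, hk⟩ := sub_dvd_pow_sub_pow (α ^ 2) β p
    refine ⟨4 * k, ?_⟩
    rw [hn, ← pow_mul] at hk
    push_cast
    linarith [pow_mul' α 2 p]
  have residue : J(n | 7) = 1 :=
    jacobiSym_natCast_eq_one_of_dvd_sq_add_mul_sq rfl (by lia) (hα7.mul_right hαv).pow_left hndvd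
  have nonresidue : J(n | 7) = -1 := jacobiSym_eq_neg_one_of_dvd_add_sq rfl hα7 (by lia)
  lia

theorem no_solutions_BS1_p_5_mod_6
    (p : ℕ) (hp : p.Prime) (hcong : p % 6 = 5) :
    ¬ ∃ α β v : ℤ, Odd α ∧ Odd β ∧ Odd v ∧ Int.gcd α v = 1 ∧ ¬ (3 : ℤ) ∣ α ∧
      α ^ (2 * p) - 4 * β ^ p = 21 * v ^ 2 := by
  rintro ⟨α, β, v, -, -, -, hαv, -, h⟩
  exact no_solutions_BS1_p_5_mod_6_general hcong (Int.isCoprime_iff_gcd_eq_one.mpr hαv) h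
end

section
/- The Diophantine equation α^{38} − 4β^{19} = 21v^2 has no solutions in odd, pairwise coprime integers α, β, v. -/
/-!
Put `a = α²`, so that `a¹⁹ - 4b¹⁹ = 21v²`, and consider the binary forms
`H = (a² - b²)² - ab³`, `G = a¹⁰ + 2a²b⁸ - 2b¹⁰`, `U = a⁹(a² - b²) + 2b¹¹`. The identity
`(a¹⁹ - 4b¹⁹) H = a U² - b³ G²` makes `21 H` a square modulo `G`, up to square factors. On the
other hand Euclid's algorithm on `G`, `H` together with quadratic reciprocity gives
`(H / G) = 1`, while `a ≡ 4b` modulo `21` gives `(21 / G) = (G / 21) = (13 / 21) = -1`.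

The algorithm runs through `P = 4a² + 6ab + 3b²` and `W = 7a + 11b`, and ends in `13² b²`. So `13`
is the only prime at which the symbols could vanish. It divides the forms only if `13 ∣ v`, and
then `13²` divides all of them and can be cancelled.
-/

theorem lt_of_mul_pow_le_pow {R : Type*} [Ring R] [LinearOrder R] [IsStrictOrderedRing R]
    {a b c : R} {k : ℕ} (hc : 1 < c) (ha : 0 < a) (h : c * b ^ k ≤ a ^ k) : b < a := by
  by_contra! hle
  exact (lt_mul_of_one_lt_left (pow_pos (ha.trans_le hle) k) hc).not_ge
    (h.trans (pow_le_pow_left₀ ha.le hle k))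

theorem isCoprime_of_dvd_sub {R : Type*} [CommRing R] {x y n : R} (hx : IsCoprime x n)
    (h : n ∣ y - x) : IsCoprime y n := by
  obtain ⟨k, hk⟩ := h
  rw [eq_add_of_sub_eq' hk]
  exact hx.add_mul_left_left k

theorem isCoprime_of_modEq_mul {a b k n : ℤ} (hab : IsCoprime a b) (h : a ≡ k * b [ZMOD n]) :
    IsCoprime n b := by
  obtain ⟨t, ht⟩ := h.dvd
  have hnt : IsCoprime (n * t) b := isCoprime_of_dvd_sub hab.neg_left ⟨k, by linear_combination -ht⟩
  exact hnt.of_mul_left_left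

theorem sq_modEq_one_of_odd {n : ℤ} (hn : Odd n) : n ^ 2 ≡ 1 [ZMOD 8] :=
  (Int.modEq_iff_dvd.mpr (Int.eight_dvd_sq_sub_one_of_odd hn)).symm

theorem eq_of_pow_eq_pow_of_coprime_totient {n k : ℕ} [NeZero n] (hk : n.totient.Coprime k)
    {x y : ZMod n} (hx : IsUnit x) (hy : IsUnit y) (hxy : x ^ k = y ^ k) : x = y := by
  obtain ⟨x, rfl⟩ := hx
  obtain ⟨y, rfl⟩ := hy
  have hcard : (Nat.card (ZMod n)ˣ).Coprime k := by
    rwa [Nat.card_eq_fintype_card, ZMod.card_units_eq_totient]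
  exact congrArg _ (hcard.pow_left_bijective.injective (Units.ext (by exact_mod_cast hxy)))

section JacobiSymbol

open scoped NumberTheorySymbols

theorem jacobiSym_natAbs_eq_of_dvd_sub {x y n : ℤ} (h : n ∣ x - y) :
    J(x | n.natAbs) = J(y | n.natAbs) :=
  jacobiSym.mod_left' (Int.modEq_iff_dvd.mpr (Int.natAbs_dvd.mpr h)).symm

theorem jacobiSym_sq_mul {r n : ℤ} (hr : IsCoprime r n) (x : ℤ) :
    J(r ^ 2 * x | n.natAbs) = J(x | n.natAbs) := by
  have hgcd : r.gcd n = 1 := Int.isCoprime_iff_gcd_eq_one.mp hr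
  rw [jacobiSym.mul_left, jacobiSym.sq_one' (by exact hgcd), one_mul]

theorem jacobiSym_eq_of_dvd_sq_mul_sub_sq_mul {r s x y n : ℤ} (hr : IsCoprime r n)
    (hs : IsCoprime s n) (h : n ∣ r ^ 2 * x - s ^ 2 * y) :
    J(x | n.natAbs) = J(y | n.natAbs) := by
  rw [← jacobiSym_sq_mul hr, jacobiSym_natAbs_eq_of_dvd_sub h, jacobiSym_sq_mul hs]

theorem jacobiSym_natAbs_quadratic_reciprocity {m n : ℤ} (hm : Odd m) (hn : Odd n)
    (hpos : 0 < m ∨ 0 < n) :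
    J(m | n.natAbs) = if m % 4 = 3 ∧ n % 4 = 3 then -J(n | m.natAbs) else J(n | m.natAbs) := by
  wlog hn0 : 0 < n generalizing m n
  · have hsymm := this hn hm hpos.symm (hpos.resolve_right hn0)
    simp only [and_comm (a := n % 4 = 3)] at hsymm
    split_ifs at hsymm ⊢ <;> rw [hsymm]
    rw [neg_neg]
  lift n to ℕ using hn0.le
  obtain ⟨k, rfl | rfl⟩ := Int.eq_nat_or_neg m
  all_goals
    have hk2 : k % 2 = 1 := by have := Int.odd_iff.mp hm; omega
    have hn2 : n % 2 = 1 := by have := Int.odd_iff.mp hn; omega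
    have hrec := jacobiSym.quadratic_reciprocity_if hk2 hn2
    simp only [Int.natAbs_neg, Int.natAbs_natCast]
  · rw [← hrec]
    exact if_congr (by omega) rfl rfl
  · rw [jacobiSym.neg _ (Nat.odd_iff.mpr hn2), ← hrec]
    rcases Nat.odd_mod_four_iff.mp hn2 with hn4 | hn4
    · rw [ZMod.χ₄_nat_one_mod_four hn4, one_mul, if_neg (by omega), if_neg (by omega)]
    · rw [ZMod.χ₄_nat_three_mod_four hn4, neg_one_mul]
      split_ifs <;> omega

theorem jacobiSym_natAbs_comm_of_mod_four_eq_one {m n : ℤ} (hm : m % 4 = 1) (hn : Odd n)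
    (hpos : 0 < m ∨ 0 < n) : J(m | n.natAbs) = J(n | m.natAbs) := by
  rw [jacobiSym_natAbs_quadratic_reciprocity (Int.odd_iff.mpr (by omega)) hn hpos,
    if_neg (by omega)]

end JacobiSymbol

section QuadraticForm

open scoped NumberTheorySymbols

variable {a b : ℤ}

theorem sq_add_mul_sub_sq_emod_four (ha : a % 4 = 1) (hb : Odd b) :
    (a ^ 2 + a * b - b ^ 2) % 4 = b % 4 := by
  have ha' : a ≡ 1 [ZMOD 4] := ha
  have hb' : b ^ 2 ≡ 1 [ZMOD 4] := Int.sq_mod_four_eq_one_of_odd hb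
  calc a ^ 2 + a * b - b ^ 2 ≡ 1 ^ 2 + 1 * b - 1 [ZMOD 4] := by gcongr
    _ = b := by ring

theorem sq_add_mul_sub_sq_pos (hb : 0 < b) (hba : b < a) : 0 < a ^ 2 + a * b - b ^ 2 := by
  nlinarith

theorem isCoprime_sq_add_mul_sub_sq (hab : IsCoprime a b) :
    IsCoprime (a ^ 2 + a * b - b ^ 2) b :=
  isCoprime_of_dvd_sub (hab.pow_left (m := 2)) ⟨a - b, by ring⟩

theorem isCoprime_sub_two_mul (hb : Odd b) (hab : IsCoprime a b) : IsCoprime (b - 2 * a) b :=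
  isCoprime_of_dvd_sub ((Int.isCoprime_two_left.mpr hb).neg_left.mul_left hab) ⟨1, by ring⟩

theorem isCoprime_sub_two_mul_sq_add_mul_sub_sq (hb : Odd b) (hab : IsCoprime a b) :
    IsCoprime (b - 2 * a) (a ^ 2 + a * b - b ^ 2) := by
  have hV := isCoprime_sub_two_mul hb hab
  have h4 : IsCoprime (4 * (a ^ 2 + a * b - b ^ 2)) (b - 2 * a) :=
    isCoprime_of_dvd_sub (hV.symm.pow_left (m := 2)).neg_left ⟨-2 * a - 3 * b, by ring⟩
  exact h4.of_mul_left_right.symm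

theorem jacobiSym_mul_sub_two_mul (ha : a % 4 = 1) (hb : Odd b) (hab : IsCoprime a b)
    (ha0 : 0 < a) (hba : b < a) :
    J(b * (b - 2 * a) | (a ^ 2 + a * b - b ^ 2).natAbs) = 1 := by
  have hb2 := Int.odd_iff.mp hb
  have hq4 := sq_add_mul_sub_sq_emod_four ha hb
  have hqpos := sq_add_mul_sub_sq_pos (a := a) (b := b)
  have hV := isCoprime_sub_two_mul hb hab
  have hVodd : Odd (b - 2 * a) := by grind
  have hVabs : (b - 2 * a).natAbs % 4 = b % 4 := by omega
  have hbV : b * (b - 2 * a) % 4 = 3 := by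
    have ha' : a ≡ 1 [ZMOD 4] := ha
    have hb' : b ^ 2 ≡ 1 [ZMOD 4] := Int.sq_mod_four_eq_one_of_odd hb
    have hmod : b * (b - 2 * a) ≡ 1 - 2 * (1 * b) [ZMOD 4] :=
      calc b * (b - 2 * a) = b ^ 2 - 2 * (a * b) := by ring
        _ ≡ 1 - 2 * (1 * b) [ZMOD 4] := by gcongr
    rw [hmod.eq]
    omega
  have hpos : 0 < b * (b - 2 * a) ∨ 0 < a ^ 2 + a * b - b ^ 2 := by
    rcases lt_or_ge b 0 with hneg | hnonneg
    · exact .inl (mul_pos_of_neg_of_neg hneg (by omega))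
    · exact .inr (hqpos (by omega) hba)
  have hoverb : J(a ^ 2 + a * b - b ^ 2 | b.natAbs) = 1 := by
    rw [← jacobiSym.one_left b.natAbs]
    exact jacobiSym_eq_of_dvd_sq_mul_sub_sq_mul isCoprime_one_left hab ⟨a - b, by ring⟩
  have hoverV : J(a ^ 2 + a * b - b ^ 2 | (b - 2 * a).natAbs) = J(-1 | (b - 2 * a).natAbs) :=
    jacobiSym_eq_of_dvd_sq_mul_sub_sq_mul (Int.isCoprime_two_left.mpr hVodd) hV.symm
      ⟨-3 * b - 2 * a, by ring⟩
  rw [jacobiSym_natAbs_quadratic_reciprocity (hb.mul hVodd) (Int.odd_iff.mpr (by omega)) hpos,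
    Int.natAbs_mul, jacobiSym.mul_right' _ (by omega) (by omega), hoverb, hoverV, one_mul,
    jacobiSym.at_neg_one (Nat.odd_iff.mpr (by omega))]
  rcases (show b % 4 = 1 ∨ b % 4 = 3 by omega) with hb4 | hb4
  · rw [ZMod.χ₄_nat_one_mod_four (by omega), if_neg (by omega)]
  · rw [ZMod.χ₄_nat_three_mod_four (by omega), if_pos (by omega), neg_neg]

end QuadraticForm

theorem quartic_dvd_decic_sub_mul_quadratic (a b : ℤ) :
    (a ^ 2 - b ^ 2) ^ 2 - a * b ^ 3 ∣ a ^ 10 + 2 * a ^ 2 * b ^ 8 - 2 * b ^ 10 -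
      b ^ 6 * (a ^ 2 + a * b - b ^ 2) * (4 * a ^ 2 + 6 * a * b + 3 * b ^ 2) :=
  ⟨a ^ 6 + 2 * a ^ 4 * b ^ 2 + a ^ 3 * b ^ 3 + 3 * a ^ 2 * b ^ 4 + 4 * a * b ^ 5 + b ^ 6, by ring⟩

/-- A factorisation `13 = m c` such that `m²` divides `7a + 11b` with a quotient `w` prime to `c`.
Then `m²` is the common factor by which the forms `P`, `H`, `G` and `U` have to be divided. -/
structure ThirteenSplitting (a b : ℤ) where
  m : ℤ
  c : ℤ
  w : ℤ
  m_mul_c : m * c = 13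
  sq_mul_w : m ^ 2 * w = 7 * a + 11 * b
  isCoprime_w_c : IsCoprime w c

namespace ThirteenSplitting

open scoped NumberTheorySymbols

variable {a b : ℤ} (S : ThirteenSplitting a b)

/-- The reduced form `P / m²`; the division is exact by `sq_mul_p`. -/
def p : ℤ := (4 * a ^ 2 + 6 * a * b + 3 * b ^ 2) / S.m ^ 2

/-- The reduced form `H / m²`; the division is exact by `sq_mul_h`. -/
def h : ℤ := ((a ^ 2 - b ^ 2) ^ 2 - a * b ^ 3) / S.m ^ 2

/-- The reduced form `G / m²`; the division is exact by `sq_mul_g`. -/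
def g : ℤ := (a ^ 10 + 2 * a ^ 2 * b ^ 8 - 2 * b ^ 10) / S.m ^ 2

/-- The reduced form `U / m²`; the division is exact by `sq_mul_u` when `7`, `a` and `b` are
pairwise coprime. -/
def u : ℤ := (a ^ 9 * (a ^ 2 - b ^ 2) + 2 * b ^ 11) / S.m ^ 2

theorem isCoprime_m {k : ℤ} (hk : IsCoprime 13 k) : IsCoprime S.m k :=
  hk.of_isCoprime_of_dvd_left ⟨S.c, S.m_mul_c.symm⟩

theorem sq_m_ne_zero : S.m ^ 2 ≠ 0 :=
  pow_ne_zero 2 fun hm => by simpa [hm] using S.m_mul_c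

theorem sq_mul_p : S.m ^ 2 * S.p = 4 * a ^ 2 + 6 * a * b + 3 * b ^ 2 := by
  have h49 : IsCoprime (S.m ^ 2) 49 := (S.isCoprime_m (by norm_num)).pow_left
  refine Int.mul_ediv_cancel' (h49.dvd_of_dvd_mul_left
    ⟨S.w * (28 * a - 2 * b) + S.c ^ 2 * b ^ 2, ?_⟩)
  linear_combination (-(28 * a - 2 * b)) * S.sq_mul_w - b ^ 2 * (S.m * S.c + 13) * S.m_mul_c

theorem sq_mul_h : S.m ^ 2 * S.h = (a ^ 2 - b ^ 2) ^ 2 - a * b ^ 3 := by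
  have h8 : IsCoprime (S.m ^ 2) 8 := (S.isCoprime_m (by norm_num)).pow_left
  refine Int.mul_ediv_cancel' (h8.dvd_of_dvd_mul_left
    ⟨S.p * (2 * a ^ 2 - 3 * a * b - b ^ 2) + b ^ 3 * S.w, ?_⟩)
  linear_combination (-(2 * a ^ 2 - 3 * a * b - b ^ 2)) * S.sq_mul_p - b ^ 3 * S.sq_mul_w

theorem sq_mul_g : S.m ^ 2 * S.g = a ^ 10 + 2 * a ^ 2 * b ^ 8 - 2 * b ^ 10 := by
  obtain ⟨k, hk⟩ := quartic_dvd_decic_sub_mul_quadratic a b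
  refine Int.mul_ediv_cancel' ⟨b ^ 6 * (a ^ 2 + a * b - b ^ 2) * S.p + S.h * k, ?_⟩
  linear_combination hk - b ^ 6 * (a ^ 2 + a * b - b ^ 2) * S.sq_mul_p - k * S.sq_mul_h

theorem w_dvd_sq_mul_p_sub : S.w ∣ 7 ^ 2 * S.p - (S.c * b) ^ 2 :=
  ⟨28 * a - 2 * b, mul_left_cancel₀ S.sq_m_ne_zero <| by
    linear_combination 49 * S.sq_mul_p - (28 * a - 2 * b) * S.sq_mul_w
      - b ^ 2 * (S.m * S.c + 13) * S.m_mul_c⟩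

theorem p_dvd_sq_mul_h_sub : S.p ∣ 2 ^ 2 * (2 * S.h) - b ^ 2 * (b * S.w) :=
  ⟨2 * a ^ 2 - 3 * a * b - b ^ 2, mul_left_cancel₀ S.sq_m_ne_zero <| by
    linear_combination 8 * S.sq_mul_h - (2 * a ^ 2 - 3 * a * b - b ^ 2) * S.sq_mul_p
      - b ^ 3 * S.sq_mul_w⟩

theorem h_dvd_g_sub : S.h ∣ S.g - (b ^ 3) ^ 2 * ((a ^ 2 + a * b - b ^ 2) * S.p) := by
  obtain ⟨k, hk⟩ := quartic_dvd_decic_sub_mul_quadratic a b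
  refine ⟨k, mul_left_cancel₀ S.sq_m_ne_zero ?_⟩
  linear_combination S.sq_mul_g + hk - b ^ 6 * (a ^ 2 + a * b - b ^ 2) * S.sq_mul_p
    - k * S.sq_mul_h

theorem isCoprime_sq_mul_w (h7 : IsCoprime 7 b) (hab : IsCoprime a b) :
    IsCoprime (S.m ^ 2 * S.w) b :=
  isCoprime_of_dvd_sub (h7.mul_left hab) ⟨11, by linear_combination S.sq_mul_w⟩

theorem isCoprime_m_right (h7 : IsCoprime 7 b) (hab : IsCoprime a b) : IsCoprime S.m b :=
  (IsCoprime.pow_left_iff two_pos).mp (S.isCoprime_sq_mul_w h7 hab).of_mul_left_left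

theorem isCoprime_m_left (h7 : IsCoprime 7 b) (hab : IsCoprime a b) : IsCoprime S.m a := by
  have h11b : IsCoprime (-11 * b) S.m :=
    ((S.isCoprime_m (by norm_num)).mul_right (S.isCoprime_m_right h7 hab)).symm
  have h7a : IsCoprime (7 * a) S.m :=
    isCoprime_of_dvd_sub h11b ⟨S.m * S.w, by linear_combination -S.sq_mul_w⟩
  exact h7a.of_mul_left_right.symm

theorem mul_sq_mul_u : a * (a ^ 9 * (a ^ 2 - b ^ 2) + 2 * b ^ 11) =
    S.m ^ 2 * ((a ^ 2 - b ^ 2) * S.g - 2 * b ^ 8 * S.h) := by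
  linear_combination (-(a ^ 2 - b ^ 2)) * S.sq_mul_g + 2 * b ^ 8 * S.sq_mul_h

theorem sq_mul_u (h7 : IsCoprime 7 b) (hab : IsCoprime a b) :
    S.m ^ 2 * S.u = a ^ 9 * (a ^ 2 - b ^ 2) + 2 * b ^ 11 :=
  Int.mul_ediv_cancel' ((S.isCoprime_m_left h7 hab).pow_left.dvd_of_dvd_mul_left
    ⟨_, S.mul_sq_mul_u⟩)

theorem mul_u_eq (h7 : IsCoprime 7 b) (hab : IsCoprime a b) :
    a * S.u = (a ^ 2 - b ^ 2) * S.g - 2 * b ^ 8 * S.h :=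
  mul_left_cancel₀ S.sq_m_ne_zero <| by
    linear_combination a * S.sq_mul_u h7 hab + S.mul_sq_mul_u

theorem twenty_one_mul_sq_mul_h (h7 : IsCoprime 7 b) (hab : IsCoprime a b) {v : ℤ}
    (heq : a ^ 19 - 4 * b ^ 19 = 21 * (S.m * v) ^ 2) :
    21 * v ^ 2 * S.h = a * S.u ^ 2 - b ^ 3 * S.g ^ 2 :=
  mul_left_cancel₀ (pow_ne_zero 2 S.sq_m_ne_zero) <| by
    linear_combination (21 * (S.m * v) ^ 2) * S.sq_mul_h
      - ((a ^ 2 - b ^ 2) ^ 2 - a * b ^ 3) * heq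
      - a * (S.m ^ 2 * S.u + a ^ 9 * (a ^ 2 - b ^ 2) + 2 * b ^ 11) * S.sq_mul_u h7 hab
      + b ^ 3 * (S.m ^ 2 * S.g + a ^ 10 + 2 * a ^ 2 * b ^ 8 - 2 * b ^ 10) * S.sq_mul_g

theorem isCoprime_w_b (h7 : IsCoprime 7 b) (hab : IsCoprime a b) : IsCoprime S.w b :=
  (S.isCoprime_sq_mul_w h7 hab).of_mul_left_right

theorem isCoprime_w_seven (h7 : IsCoprime 7 b) : IsCoprime S.w 7 := by
  have h11b : IsCoprime (11 * b) 7 := IsCoprime.mul_left (by norm_num) h7.symm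
  have hmw : IsCoprime (S.m ^ 2 * S.w) 7 :=
    isCoprime_of_dvd_sub h11b ⟨a, by linear_combination S.sq_mul_w⟩
  exact hmw.of_mul_left_right

theorem isCoprime_p_b (hb : Odd b) (hab : IsCoprime a b) : IsCoprime S.p b := by
  have h2a : IsCoprime ((2 * a) ^ 2) b := ((Int.isCoprime_two_left.mpr hb).mul_left hab).pow_left
  have hmp : IsCoprime (S.m ^ 2 * S.p) b :=
    isCoprime_of_dvd_sub h2a ⟨6 * a + 3 * b, by linear_combination S.sq_mul_p⟩
  exact hmp.of_mul_left_right

theorem isCoprime_p_w (h7 : IsCoprime 7 b) (hab : IsCoprime a b) : IsCoprime S.p S.w := by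
  have hcb : IsCoprime ((S.c * b) ^ 2) S.w :=
    (S.isCoprime_w_c.symm.mul_left (S.isCoprime_w_b h7 hab).symm).pow_left
  exact (isCoprime_of_dvd_sub hcb S.w_dvd_sq_mul_p_sub).of_mul_left_right

theorem isCoprime_h_p (hb : Odd b) (h7 : IsCoprime 7 b) (hab : IsCoprime a b) :
    IsCoprime S.h S.p := by
  have hbp := (S.isCoprime_p_b hb hab).symm
  have hbw : IsCoprime (b ^ 2 * (b * S.w)) S.p :=
    hbp.pow_left.mul_left (hbp.mul_left (S.isCoprime_p_w h7 hab).symm)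
  exact (isCoprime_of_dvd_sub hbw S.p_dvd_sq_mul_h_sub).of_mul_left_right.of_mul_left_right

theorem isCoprime_h_b (hab : IsCoprime a b) : IsCoprime S.h b := by
  have hmh : IsCoprime (S.m ^ 2 * S.h) b :=
    isCoprime_of_dvd_sub (hab.pow_left (m := 4)) ⟨b ^ 3 - 2 * a ^ 2 * b - a * b ^ 2, by
      linear_combination S.sq_mul_h⟩
  exact hmh.of_mul_left_right

theorem isCoprime_h_sq_add_mul_sub_sq (hb : Odd b) (hab : IsCoprime a b) :
    IsCoprime S.h (a ^ 2 + a * b - b ^ 2) := by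
  have hbV : IsCoprime (b ^ 2 * (b * (b - 2 * a))) (a ^ 2 + a * b - b ^ 2) :=
    have hbq := (isCoprime_sq_add_mul_sub_sq hab).symm
    hbq.pow_left.mul_left (hbq.mul_left (isCoprime_sub_two_mul_sq_add_mul_sub_sq hb hab))
  have hmh : IsCoprime (S.m ^ 2 * S.h) (a ^ 2 + a * b - b ^ 2) :=
    isCoprime_of_dvd_sub hbV ⟨a ^ 2 - a * b, by linear_combination S.sq_mul_h⟩
  exact hmh.of_mul_left_right

theorem isCoprime_g_b (hab : IsCoprime a b) : IsCoprime S.g b := by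
  have hmg : IsCoprime (S.m ^ 2 * S.g) b :=
    isCoprime_of_dvd_sub (hab.pow_left (m := 10)) ⟨2 * a ^ 2 * b ^ 7 - 2 * b ^ 9, by
      linear_combination S.sq_mul_g⟩
  exact hmg.of_mul_left_right

theorem isCoprime_g_h (hb : Odd b) (h7 : IsCoprime 7 b) (hab : IsCoprime a b) :
    IsCoprime S.g S.h :=
  isCoprime_of_dvd_sub ((S.isCoprime_h_b hab).symm.pow_left.pow_left.mul_left
    ((S.isCoprime_h_sq_add_mul_sub_sq hb hab).symm.mul_left (S.isCoprime_h_p hb h7 hab).symm))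
    S.h_dvd_g_sub

theorem isCoprime_m_sq_add_mul_sub_sq (h7 : IsCoprime 7 b) (hab : IsCoprime a b) :
    IsCoprime S.m (a ^ 2 + a * b - b ^ 2) := by
  have h5b : IsCoprime (-5 * b ^ 2) S.m :=
    ((S.isCoprime_m (by norm_num)).mul_right (S.isCoprime_m_right h7 hab).pow_right).symm
  have h49 : IsCoprime (49 * (a ^ 2 + a * b - b ^ 2)) S.m :=
    isCoprime_of_dvd_sub h5b ⟨S.m * S.w * (7 * a - 4 * b), by
      linear_combination (-(7 * a - 4 * b)) * S.sq_mul_w⟩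
  exact h49.of_mul_left_right.symm

theorem sq_m_modEq_one : S.m ^ 2 ≡ 1 [ZMOD 8] :=
  sq_modEq_one_of_odd (Int.isCoprime_two_right.mp (S.isCoprime_m (by norm_num)))

theorem modEq_sq_mul (x : ℤ) : x ≡ S.m ^ 2 * x [ZMOD 8] := by
  simpa only [one_mul] using (S.sq_m_modEq_one.mul_right x).symm

theorem w_modEq (ha : a ≡ 1 [ZMOD 8]) : S.w ≡ 7 + 3 * b [ZMOD 8] := by
  have hw := S.modEq_sq_mul S.w
  rw [S.sq_mul_w] at hw
  unfold Int.ModEq at *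
  omega

theorem p_modEq (ha : a ≡ 1 [ZMOD 8]) (hb : Odd b) : S.p ≡ 7 + 6 * b [ZMOD 8] := by
  have hb2 : b ^ 2 ≡ 1 [ZMOD 8] := sq_modEq_one_of_odd hb
  calc S.p ≡ S.m ^ 2 * S.p [ZMOD 8] := S.modEq_sq_mul _
    _ = 4 * a ^ 2 + 6 * a * b + 3 * b ^ 2 := S.sq_mul_p
    _ ≡ 4 * 1 ^ 2 + 6 * 1 * b + 3 * 1 [ZMOD 8] := by gcongr
    _ = 7 + 6 * b := by ring

theorem h_modEq (ha : a ≡ 1 [ZMOD 8]) (hb : Odd b) : S.h ≡ -b [ZMOD 8] := by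
  have hb2 : b ^ 2 ≡ 1 [ZMOD 8] := sq_modEq_one_of_odd hb
  calc S.h ≡ S.m ^ 2 * S.h [ZMOD 8] := S.modEq_sq_mul _
    _ = (a ^ 2 - b ^ 2) ^ 2 - a * (b ^ 2 * b) := by rw [S.sq_mul_h]; ring
    _ ≡ (1 ^ 2 - 1) ^ 2 - 1 * (1 * b) [ZMOD 8] := by gcongr
    _ = -b := by ring

theorem g_modEq (ha : a ≡ 1 [ZMOD 8]) (hb : Odd b) : S.g ≡ 1 [ZMOD 8] := by
  have hb2 : b ^ 2 ≡ 1 [ZMOD 8] := sq_modEq_one_of_odd hb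
  calc S.g ≡ S.m ^ 2 * S.g [ZMOD 8] := S.modEq_sq_mul _
    _ = a ^ 10 + 2 * a ^ 2 * (b ^ 2) ^ 4 - 2 * (b ^ 2) ^ 5 := by rw [S.sq_mul_g]; ring
    _ ≡ 1 ^ 10 + 2 * 1 ^ 2 * 1 ^ 4 - 2 * 1 ^ 5 [ZMOD 8] := by gcongr
    _ = 1 := by norm_num

theorem p_pos (hb : b ≠ 0) : 0 < S.p := by
  have hmp : 0 < S.m ^ 2 * S.p := by
    rw [S.sq_mul_p]
    have hb2 : 0 < b ^ 2 := by positivity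
    linarith [sq_nonneg (4 * a + 3 * b)]
  exact pos_of_mul_pos_right hmp (sq_nonneg _)

theorem h_pos_of_neg (ha : 0 < a) (hb : b < 0) : 0 < S.h := by
  have hmh : 0 < S.m ^ 2 * S.h := by
    have hab3 : a * b ^ 3 < 0 := mul_neg_of_pos_of_neg ha (Odd.pow_neg (by decide) hb)
    rw [S.sq_mul_h]
    linarith [sq_nonneg (a ^ 2 - b ^ 2)]
  exact pos_of_mul_pos_right hmh (sq_nonneg _)

theorem g_pos_of_pos (hb : 0 < b) (hba : b < a) : 0 < S.g := by
  have hmg : 0 < S.m ^ 2 * S.g :=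
    calc 0 < a ^ 10 + 2 * b ^ 8 * (a - b) * (a + b) := by
          have ha : 0 < a := hb.trans hba
          exact add_pos (by positivity)
            (mul_pos (mul_pos (by positivity) (sub_pos.mpr hba)) (by positivity))
      _ = S.m ^ 2 * S.g := by rw [S.sq_mul_g]; ring
  exact pos_of_mul_pos_right hmg (sq_nonneg _)

theorem h_pos_or_g_pos (ha : 0 < a) (hb : b ≠ 0) (hba : b < a) : 0 < S.h ∨ 0 < S.g :=
  hb.lt_or_gt.imp (S.h_pos_of_neg ha) (S.g_pos_of_pos · hba)

theorem jacobiSym_sq_add_mul_sub_sq_h (ha : a ≡ 1 [ZMOD 8]) (hb : Odd b) (h7 : IsCoprime 7 b)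
    (hab : IsCoprime a b) (ha0 : 0 < a) (hba : b < a) :
    J(a ^ 2 + a * b - b ^ 2 | S.h.natAbs) = 1 := by
  have ha4 : a % 4 = 1 := by unfold Int.ModEq at ha; omega
  have hb2 := Int.odd_iff.mp hb
  have hq4 := sq_add_mul_sub_sq_emod_four ha4 hb
  have hh8 := (S.h_modEq ha hb).eq
  have hpos : 0 < S.h ∨ 0 < a ^ 2 + a * b - b ^ 2 :=
    (show b ≠ 0 by omega).lt_or_gt.imp (S.h_pos_of_neg ha0) (sq_add_mul_sub_sq_pos · hba)
  have hsymm : J(a ^ 2 + a * b - b ^ 2 | S.h.natAbs) =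
      J(S.h | (a ^ 2 + a * b - b ^ 2).natAbs) := by
    rw [jacobiSym_natAbs_quadratic_reciprocity (Int.odd_iff.mpr (by omega))
      (Int.odd_iff.mpr (by omega)) hpos.symm, if_neg (by omega)]
  rw [hsymm, ← jacobiSym_mul_sub_two_mul ha4 hb hab ha0 hba]
  exact jacobiSym_eq_of_dvd_sq_mul_sub_sq_mul (S.isCoprime_m_sq_add_mul_sub_sq h7 hab)
    (isCoprime_sq_add_mul_sub_sq hab).symm ⟨a ^ 2 - a * b, by linear_combination S.sq_mul_h⟩

theorem jacobiSym_b_p (ha : a ≡ 1 [ZMOD 8]) (hb : Odd b) (h7 : IsCoprime 7 b)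
    (hab : IsCoprime a b) : J(b | S.p.natAbs) = 1 := by
  have hb2 := Int.odd_iff.mp hb
  have hp8 := (S.p_modEq ha hb).eq
  rw [← jacobiSym_natAbs_comm_of_mod_four_eq_one (by omega) hb (.inl (S.p_pos (by omega))),
    ← jacobiSym.one_left b.natAbs]
  exact jacobiSym_eq_of_dvd_sq_mul_sub_sq_mul (S.isCoprime_m_right h7 hab)
    ((Int.isCoprime_two_left.mpr hb).mul_left hab)
    ⟨6 * a + 3 * b, by linear_combination S.sq_mul_p⟩

theorem jacobiSym_p_of_odd_of_dvd_w (ha : a ≡ 1 [ZMOD 8]) (hb : Odd b) (h7 : IsCoprime 7 b)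
    (hab : IsCoprime a b) {d : ℤ} (hd : Odd d) (hdw : d ∣ S.w) : J(d | S.p.natAbs) = 1 := by
  have hb2 := Int.odd_iff.mp hb
  have hp8 := (S.p_modEq ha hb).eq
  have h7d := ((S.isCoprime_w_seven h7).of_isCoprime_of_dvd_left hdw).symm
  have hcbd :=
    ((S.isCoprime_w_c.mul_right (S.isCoprime_w_b h7 hab)).of_isCoprime_of_dvd_left hdw).symm
  rw [← jacobiSym_natAbs_comm_of_mod_four_eq_one (by omega) hd (.inl (S.p_pos (by omega))),
    ← jacobiSym.one_left d.natAbs]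
  exact jacobiSym_eq_of_dvd_sq_mul_sub_sq_mul h7d hcbd
    (by simpa only [mul_one] using hdw.trans S.w_dvd_sq_mul_p_sub)

theorem jacobiSym_w_p (ha : a ≡ 1 [ZMOD 8]) (hb : Odd b) (h7 : IsCoprime 7 b)
    (hab : IsCoprime a b) : J(S.w | S.p.natAbs) = J(2 | S.p.natAbs) := by
  have hb2 := Int.odd_iff.mp hb
  have hp8 := (S.p_modEq ha hb).eq
  have hw8 := (S.w_modEq ha).eq
  have hp0 := S.p_pos (show b ≠ 0 by omega)
  have odd_part {d : ℤ} := S.jacobiSym_p_of_odd_of_dvd_w ha hb h7 hab (d := d)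
  -- If `b ≡ 1` modulo `4`, then `w` is twice an odd number; otherwise `p ≡ 1` modulo `8`.
  rcases (show b % 4 = 1 ∨ b % 4 = 3 by omega) with hb4 | hb4
  · obtain ⟨d, hwd⟩ : (2 : ℤ) ∣ S.w := by omega
    have hd : Odd d := Int.odd_iff.mpr (by omega)
    rw [hwd, jacobiSym.mul_left, odd_part hd ⟨2, by rw [hwd, mul_comm]⟩, mul_one]
  · have h2 : J(2 | S.p.natAbs) = 1 := by
      rw [jacobiSym.at_two (Nat.odd_iff.mpr (by omega)), ZMod.χ₈_nat_eq_if_mod_eight,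
        if_neg (by omega), if_pos (by omega)]
    have hw0 : S.w ≠ 0 := by
      intro hw
      have h07 := S.isCoprime_w_seven h7
      rw [hw] at h07
      exact absurd h07 (by norm_num)
    obtain ⟨d, hwd, hd⟩ := (Int.finiteMultiplicity_iff.mpr
      ⟨by norm_num, hw0⟩ : FiniteMultiplicity 2 S.w).exists_eq_pow_mul_and_not_dvd
    rw [hwd, jacobiSym.mul_left, jacobiSym.pow_left, h2, one_pow, one_mul]
    exact odd_part (Int.not_even_iff_odd.mp (by rwa [even_iff_two_dvd])) ⟨_, by rw [hwd, mul_comm]⟩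

theorem jacobiSym_p_h (ha : a ≡ 1 [ZMOD 8]) (hb : Odd b) (h7 : IsCoprime 7 b)
    (hab : IsCoprime a b) : J(S.p | S.h.natAbs) = 1 := by
  have hb2 := Int.odd_iff.mp hb
  have hp8 := (S.p_modEq ha hb).eq
  have hh8 := (S.h_modEq ha hb).eq
  have h2p : IsCoprime 2 S.p := Int.isCoprime_two_left.mpr (Int.odd_iff.mpr (by omega))
  have hgcd : Int.gcd 2 S.p = 1 := Int.isCoprime_iff_gcd_eq_one.mp h2p
  have h2ne : J(2 | S.p.natAbs) ≠ 0 := jacobiSym.ne_zero (by exact hgcd)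
  rw [jacobiSym_natAbs_comm_of_mod_four_eq_one (by omega) (Int.odd_iff.mpr (by omega))
    (.inl (S.p_pos (by omega)))]
  refine mul_left_cancel₀ h2ne ?_
  calc J(2 | S.p.natAbs) * J(S.h | S.p.natAbs) = J(2 * S.h | S.p.natAbs) :=
        (jacobiSym.mul_left ..).symm
    _ = J(b * S.w | S.p.natAbs) := jacobiSym_eq_of_dvd_sq_mul_sub_sq_mul h2p
        (S.isCoprime_p_b hb hab).symm S.p_dvd_sq_mul_h_sub
    _ = J(2 | S.p.natAbs) * 1 := by
        rw [jacobiSym.mul_left, S.jacobiSym_b_p ha hb h7 hab, S.jacobiSym_w_p ha hb h7 hab,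
          one_mul, mul_one]

theorem jacobiSym_h_g (ha : a ≡ 1 [ZMOD 8]) (hb : Odd b) (h7 : IsCoprime 7 b)
    (hab : IsCoprime a b) (ha0 : 0 < a) (hba : b < a) : J(S.h | S.g.natAbs) = 1 := by
  have hb2 := Int.odd_iff.mp hb
  have hh8 := (S.h_modEq ha hb).eq
  have hg8 := (S.g_modEq ha hb).eq
  have hpos := S.h_pos_or_g_pos ha0 (by omega) hba
  calc J(S.h | S.g.natAbs) = J(S.g | S.h.natAbs) :=
        (jacobiSym_natAbs_comm_of_mod_four_eq_one (by omega) (Int.odd_iff.mpr (by omega))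
          hpos.symm).symm
    _ = J((a ^ 2 + a * b - b ^ 2) * S.p | S.h.natAbs) :=
        jacobiSym_eq_of_dvd_sq_mul_sub_sq_mul isCoprime_one_left
          (S.isCoprime_h_b hab).symm.pow_left (by simpa only [one_pow, one_mul] using S.h_dvd_g_sub)
    _ = 1 := by
        rw [jacobiSym.mul_left, S.jacobiSym_sq_add_mul_sub_sq_h ha hb h7 hab ha0 hba,
          S.jacobiSym_p_h ha hb h7 hab, one_mul]

theorem jacobiSym_g_twenty_one (h21 : IsCoprime 21 b) (hmod : a ≡ 4 * b [ZMOD 21]) :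
    J(S.g | 21) = -1 := by
  have hG : S.m ^ 2 * S.g ≡ (b ^ 5) ^ 2 * 13 [ZMOD 21] :=
    calc S.m ^ 2 * S.g = a ^ 10 + 2 * a ^ 2 * b ^ 8 - 2 * b ^ 10 := S.sq_mul_g
      _ ≡ (4 * b) ^ 10 + 2 * (4 * b) ^ 2 * b ^ 8 - 2 * b ^ 10 [ZMOD 21] := by gcongr
      _ = (b ^ 5) ^ 2 * 13 + 21 * (49933 * b ^ 10) := by ring
      _ ≡ (b ^ 5) ^ 2 * 13 [ZMOD 21] := by simp
  calc J(S.g | 21) = J(13 | 21) :=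
        jacobiSym_eq_of_dvd_sq_mul_sub_sq_mul (n := 21) (S.isCoprime_m (by norm_num))
          h21.symm.pow_left hG.symm.dvd
    _ = -1 := by norm_num

theorem isCoprime_mul_u_g (ha : a ≡ 1 [ZMOD 8]) (hb : Odd b) (h7 : IsCoprime 7 b)
    (hab : IsCoprime a b) : IsCoprime (a * S.u) S.g := by
  have hg8 := (S.g_modEq ha hb).eq
  have h2g : IsCoprime (-2) S.g :=
    (Int.isCoprime_two_left.mpr (Int.odd_iff.mpr (by omega))).neg_left
  have hbh : IsCoprime (-2 * b ^ 8 * S.h) S.g :=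
    (h2g.mul_left (S.isCoprime_g_b hab).symm.pow_left).mul_left (S.isCoprime_g_h hb h7 hab).symm
  exact isCoprime_of_dvd_sub hbh ⟨a ^ 2 - b ^ 2, by linear_combination S.mul_u_eq h7 hab⟩

theorem jacobiSym_twenty_one_g (ha : a ≡ 1 [ZMOD 8]) (hb : Odd b) (h21 : IsCoprime 21 b)
    (hmod : a ≡ 4 * b [ZMOD 21]) : J(21 | S.g.natAbs) = -1 := by
  have hg8 := (S.g_modEq ha hb).eq
  rw [jacobiSym_natAbs_comm_of_mod_four_eq_one (by norm_num) (Int.odd_iff.mpr (by omega))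
    (.inl (by norm_num))]
  exact S.jacobiSym_g_twenty_one h21 hmod

theorem jacobiSym_twenty_one_mul_h (ha : a ≡ 1 [ZMOD 8]) (hb : Odd b) (h7 : IsCoprime 7 b)
    (hab : IsCoprime a b) {v : ℤ} (heq : a ^ 19 - 4 * b ^ 19 = 21 * (S.m * v) ^ 2) :
    J(21 * S.h | S.g.natAbs) = J(a | S.g.natAbs) := by
  have hau := S.isCoprime_mul_u_g ha hb h7 hab
  have hu := hau.of_mul_left_right
  have hdvd : S.g ∣ v ^ 2 * (21 * S.h) - S.u ^ 2 * a :=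
    ⟨-b ^ 3 * S.g, by linear_combination S.twenty_one_mul_sq_mul_h h7 hab heq⟩
  have hv2 : IsCoprime (v ^ 2 * (21 * S.h)) S.g :=
    isCoprime_of_dvd_sub (hu.pow_left.mul_left hau.of_mul_left_left) hdvd
  exact jacobiSym_eq_of_dvd_sq_mul_sub_sq_mul
    ((IsCoprime.pow_left_iff two_pos).mp hv2.of_mul_left_left) hu hdvd

end ThirteenSplitting

section Congruences

variable {a b v : ℤ}

theorem modEq_four_mul_of_twenty_one_dvd_pow_sub (h : 21 ∣ a ^ 19 - 4 * b ^ 19) :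
    a ≡ 4 * b [ZMOD 21] := by
  have hpow : ∀ x : ZMod 21, x ^ 19 = x := by decide
  have hzero : ((a ^ 19 - 4 * b ^ 19 : ℤ) : ZMod 21) = 0 :=
    (ZMod.intCast_zmod_eq_zero_iff_dvd ..).mpr h
  refine (ZMod.intCast_eq_intCast_iff a (4 * b) 21).mp ?_
  push_cast [hpow] at hzero ⊢
  exact sub_eq_zero.mp hzero

theorem thirteen_dvd_of_dvd_seven_mul_add (h : 13 ∣ 7 * a + 11 * b)
    (heq : a ^ 19 - 4 * b ^ 19 = 21 * v ^ 2) : 13 ∣ v := by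
  have ha : a ≡ 4 * b [ZMOD 13] := Int.modEq_iff_dvd.mpr (by omega)
  have hpow : 4 * b ^ 19 ≡ a ^ 19 [ZMOD 13] :=
    calc 4 * b ^ 19 ≡ 4 ^ 19 * b ^ 19 [ZMOD 13] := Int.ModEq.mul_right _ (by decide)
      _ = (4 * b) ^ 19 := by ring
      _ ≡ a ^ 19 [ZMOD 13] := (ha.pow 19).symm
  have hp : Prime (13 : ℤ) := by norm_num
  have h21 : 13 ∣ 21 * v ^ 2 := heq ▸ hpow.dvd
  exact hp.dvd_of_dvd_pow ((hp.dvd_or_dvd h21).resolve_left (by norm_num))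

theorem sq_thirteen_dvd_of_dvd_pow_sub (hab : IsCoprime a b) (h : 13 ^ 2 ∣ a ^ 19 - 4 * b ^ 19) :
    13 ^ 2 ∣ 7 * a + 11 * b := by
  -- The unique root of `x ^ 19 = 4` modulo `169` is `95`, and `7 * 95 + 11 = 4 * 169`.
  have h4 : ((95 : ℤ) : ZMod 169) ^ 19 = 4 := by reduce_mod_char
  have hpow : (a : ZMod 169) ^ 19 = ((95 * b : ℤ) : ZMod 169) ^ 19 := by
    have hzero : ((a ^ 19 - 4 * b ^ 19 : ℤ) : ZMod 169) = 0 :=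
      (ZMod.intCast_zmod_eq_zero_iff_dvd ..).mpr h
    rw [Int.cast_mul, mul_pow, h4]
    exact_mod_cast sub_eq_zero.mp (by exact_mod_cast hzero)
  have hb : IsCoprime 169 b := (IsCoprime.pow_right_iff (m := 19) (by norm_num)).mp
    (isCoprime_of_modEq_mul hab.pow (Int.modEq_iff_dvd.mpr (dvd_sub_comm.mp h)))
  have h4b : IsCoprime (4 * b ^ 19) 169 := .mul_left (by norm_num) hb.symm.pow_left
  have ha : IsCoprime 169 a := (IsCoprime.pow_right_iff (m := 19) (by norm_num)).mp
    (isCoprime_of_dvd_sub h4b h).symm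
  have htotient : Nat.totient 169 = 156 := by
    rw [show 169 = 13 ^ 2 by norm_num, Nat.totient_prime_pow (by norm_num) two_pos]
    norm_num
  have h95 : a ≡ 95 * b [ZMOD 169] := (ZMod.intCast_eq_intCast_iff a (95 * b) 169).mp <|
    eq_of_pow_eq_pow_of_coprime_totient (by rw [htotient]; norm_num)
      ((ZMod.coe_int_isUnit_iff_isCoprime a 169).mpr ha)
      ((ZMod.coe_int_isUnit_iff_isCoprime (95 * b) 169).mpr (.mul_right (by norm_num) hb)) hpow
  have h95_dvd := h95.dvd
  omega

theorem exists_thirteenSplitting_m_dvd (hab : IsCoprime a b)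
    (heq : a ^ 19 - 4 * b ^ 19 = 21 * v ^ 2) : ∃ S : ThirteenSplitting a b, S.m ∣ v := by
  by_cases hv : 13 ∣ v
  · obtain ⟨w, hw⟩ := sq_thirteen_dvd_of_dvd_pow_sub hab
      (heq ▸ (pow_dvd_pow_of_dvd hv 2).mul_left 21)
    exact ⟨⟨13, 1, w, by norm_num, hw.symm, isCoprime_one_right⟩, hv⟩
  · have hcop : IsCoprime (7 * a + 11 * b) 13 :=
      ((Prime.coprime_iff_not_dvd (by norm_num)).mpr fun h =>
        hv (thirteen_dvd_of_dvd_seven_mul_add h heq)).symm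
    exact ⟨⟨1, 13, 7 * a + 11 * b, by norm_num, by ring, hcop⟩, one_dvd v⟩

end Congruences

theorem not_isSquare_of_pow_sub_four_mul_pow_eq {a b v : ℤ} (ha : a ≡ 1 [ZMOD 8]) (ha0 : 0 < a)
    (hb : Odd b) (hab : IsCoprime a b) (heq : a ^ 19 - 4 * b ^ 19 = 21 * v ^ 2) :
    ¬ IsSquare a := by
  have hmod := modEq_four_mul_of_twenty_one_dvd_pow_sub ⟨v ^ 2, heq⟩
  have h21 := isCoprime_of_modEq_mul hab hmod
  have h7 : IsCoprime 7 b := h21.of_isCoprime_of_dvd_left ⟨3, by norm_num⟩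
  have hba : b < a := lt_of_mul_pow_le_pow (c := 4) (k := 19) (by norm_num) ha0
    (by linarith [sq_nonneg v])
  obtain ⟨S, v, rfl⟩ := exists_thirteenSplitting_m_dvd hab heq
  have hsymbol : jacobiSym a S.g.natAbs = -1 := by
    rw [← S.jacobiSym_twenty_one_mul_h ha hb h7 hab heq, jacobiSym.mul_left,
      S.jacobiSym_twenty_one_g ha hb h21 hmod, S.jacobiSym_h_g ha hb h7 hab ha0 hba, mul_one]
  rintro ⟨r, rfl⟩
  rw [jacobiSym.mul_left] at hsymbol
  linarith [mul_self_nonneg (jacobiSym r S.g.natAbs)]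

theorem no_solutions_BS1_p_19 :
    ¬ ∃ α β v : ℤ, Odd α ∧ Odd β ∧ Odd v ∧
      Int.gcd α β = 1 ∧ Int.gcd α v = 1 ∧ Int.gcd β v = 1 ∧
      α ^ 38 - 4 * β ^ 19 = 21 * v ^ 2 := by
  rintro ⟨α, β, v, hα, hβ, _, hαβ, _, _, heq⟩
  have hmod : α ^ 2 ≡ 1 [ZMOD 8] := sq_modEq_one_of_odd hα
  have hpos : 0 < α ^ 2 := by
    have hα0 : α ≠ 0 := by rintro rfl; simp at hα
    positivity
  have hcop : IsCoprime (α ^ 2) β := (Int.isCoprime_iff_gcd_eq_one.mpr hαβ).pow_left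
  exact not_isSquare_of_pow_sub_four_mul_pow_eq hmod hpos hβ hcop (by rw [← heq]; ring)
    (IsSquare.sq α)
end
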